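/- Let (S,𝔪) be an unramified regular local ring of mixed characteristic p ≥ 3. Assume S[ω] and S[μ] are integrally closed (i.e. f,g ∉ S^{p∧p²}), h₁ ≠ 0, h₂ ≠ 0, that fg^i ∈ S^{p∧p²} for some 1 ≤ i ≤ p−1, and that the ideal (p,f,g) of S has grade three. Set P := (p, ω−h₁, μ−h₂)A and I := pA + (ωμ^i − h₁h₂^i)·P^{p−2}. Then M := (A :_K I·P) is an R-module (i.e. R·M ⊆ M) and depth_S(M) = dim S; hence M is a birational maximal Cohen-Macaulay module over R. -/

import Mathlib

set_option synthInstance.maxHeartbeats 1000000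
set_option maxHeartbeats 1600000

/-- A height one prime ideal of a commutative ring. -/
def IsHeightOnePrime {S : Type*} [CommRing S] (P : Ideal S) : Prop :=
  ∃ hP : P.IsPrime, Order.height (⟨P, hP⟩ : PrimeSpectrum S) = 1

/-- `c ∈ S` is square free if `P S_P = c S_P` for every height one prime `P` containing `c`. -/
def PaperSquarefree {S : Type*} [CommRing S] (c : S) : Prop :=
  ∀ (P : Ideal S) (hP : P.IsPrime), Order.height (⟨P, hP⟩ : PrimeSpectrum S) = 1 → c ∈ P →
    haveI := hP
    Ideal.map (algebraMap S (Localization.AtPrime P)) P =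
      Ideal.span {algebraMap S (Localization.AtPrime P) c}

/-- Two elements satisfy `𝒜₁` if no height one prime contains both of them. -/
def SatisfiesA1 {S : Type*} [CommRing S] (f g : S) : Prop :=
  ∀ P : Ideal S, IsHeightOnePrime P → ¬(f ∈ P ∧ g ∈ P)

/-- The depth of a module over a local ring: the supremum of the lengths of
regular sequences on `M` contained in the maximal ideal. -/
noncomputable def modDepth (S : Type*) [CommRing S] [IsLocalRing S]
    (M : Type*) [AddCommGroup M] [Module S M] : ℕ∞ :=
  sSup {n : ℕ∞ | ∃ rs : List S, (rs.length : ℕ∞) = n ∧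
    (∀ r ∈ rs, r ∈ IsLocalRing.maximalIdeal S) ∧ RingTheory.Sequence.IsRegular M rs}

/-- A commutative ring is Cohen-Macaulay if each of its localizations at a prime
has depth equal to its Krull dimension. -/
def IsCMRing (R : Type*) [CommRing R] : Prop :=
  ∀ (Q : Ideal R) (hQ : Q.IsPrime),
    haveI := hQ
    (modDepth (Localization.AtPrime Q) (Localization.AtPrime Q) : WithBot ℕ∞) =
      ringKrullDim (Localization.AtPrime Q)

/-- The `n`-th symbolic power of a prime ideal `P`, i.e. `Pⁿ A_P ∩ A`. -/
noncomputable def symbPow {A : Type*} [CommRing A] (P : Ideal A) (hP : P.IsPrime) (n : ℕ) :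
    Ideal A :=
  haveI := hP
  Ideal.comap (algebraMap A (Localization.AtPrime P))
    (Ideal.map (algebraMap A (Localization.AtPrime P)) (P ^ n))

/-- `ω`, as an element of the subalgebra `A = S[ω,μ]`. -/
noncomputable def omegaA {S : Type*} [CommRing S] {K : Type*} [Field K] [Algebra S K]
    (ω μ : K) : Algebra.adjoin S ({ω, μ} : Set K) :=
  ⟨ω, Algebra.subset_adjoin (Set.mem_insert _ _)⟩

/-- `μ`, as an element of the subalgebra `A = S[ω,μ]`. -/
noncomputable def muA {S : Type*} [CommRing S] {K : Type*} [Field K] [Algebra S K]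
    (ω μ : K) : Algebra.adjoin S ({ω, μ} : Set K) :=
  ⟨μ, Algebra.subset_adjoin (Set.mem_insert_of_mem _ rfl)⟩

/-- The ideal `P = (p, ω−h₁, μ−h₂)` of `A = S[ω,μ]`. -/
noncomputable def Pid {S : Type*} [CommRing S] {K : Type*} [Field K] [Algebra S K]
    (p : ℕ) (ω μ : K) (h₁ h₂ : S) : Ideal (Algebra.adjoin S ({ω, μ} : Set K)) :=
  Ideal.span {(p : Algebra.adjoin S ({ω, μ} : Set K)),
    omegaA ω μ - algebraMap S _ h₁, muA ω μ - algebraMap S _ h₂}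

/-- The colon module `(A :_K N) = {x ∈ K : x·N ⊆ A}`, as an `S`-submodule of `K`. -/
noncomputable def colonSubmodule (S : Type*) [CommRing S] (K : Type*) [Field K] [Algebra S K]
    (A : Subalgebra S K) (N : Set K) : Submodule S K where
  carrier := {x : K | ∀ z ∈ N, x * z ∈ A}
  add_mem' := fun hx hy z hz => by
    simpa [add_mul] using add_mem (hx z hz) (hy z hz)
  zero_mem' := fun z hz => by simpa using A.zero_mem
  smul_mem' := fun c x hx z hz => by
    rw [Algebra.smul_def, mul_assoc]
    exact mul_mem (A.algebraMap_mem c) (hx z hz)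

/-- `M` admits a free resolution `0 → Sⁿ → Sᵐ → M → 0`; for a finitely generated
module over a Noetherian local ring this says exactly `pd_S(M) ≤ 1`. -/
def HasFreeResLengthLE1 (S : Type*) [CommRing S] (M : Type*) [AddCommGroup M] [Module S M] :
    Prop :=
  ∃ (n m : ℕ) (φ : (Fin n → S) →ₗ[S] (Fin m → S)) (ψ : (Fin m → S) →ₗ[S] M),
    Function.Injective φ ∧ Function.Surjective ψ ∧ LinearMap.range φ = LinearMap.ker ψ

/-- The ideal `Q` contains an `S`-regular sequence of length three, i.e. `Q` has grade
(at least) three. -/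
def ContainsRegSeq3 (S : Type*) [CommRing S] (Q : Ideal S) : Prop :=
  ∃ rs : List S, rs.length = 3 ∧ (∀ r ∈ rs, r ∈ Q) ∧ RingTheory.Sequence.IsRegular S rs


open RingTheory.Sequence IsLocalRing
section Dpart
open scoped Pointwise
theorem regloc_aux : ∀ (d : ℕ) (R : Type u) [CommRing R] [IsNoetherianRing R] [IsLocalRing R]
    (g : Fin d → R), Ideal.span (Set.range g) = maximalIdeal R → ringKrullDim R = d →
    IsDomain R ∧ ∃ rs : List R, rs.length = d ∧ (∀ r ∈ rs, r ∈ maximalIdeal R) ∧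
      IsWeaklyRegular R rs := by
  intro d
  induction d with
  | zero =>
    intro R _ _ _ g hg hd
    have : maximalIdeal R = ⊥ := by rw [← hg]; simp
    refine ⟨?_, [], rfl, by simp, IsWeaklyRegular.nil _ _⟩
    exact (isField_iff_maximalIdeal_eq.mpr this).isDomain
  | succ d ih =>
    intro R _ _ _ g hg hd
    -- choose x
    have hfin : (minimalPrimes R).Finite := minimalPrimes.finite_of_isNoetherianRing R
    have hmne : ∀ q ∈ minimalPrimes R, ¬ (maximalIdeal R ≤ q) := by
      intro q hq hle
      have h1 : (maximalIdeal R).height = 0 := by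
        have hqe : q = maximalIdeal R := le_antisymm (le_maximalIdeal hq.1.1.ne_top) hle
        rw [← hqe]; have := hq.1.1; exact Ideal.height_eq_zero_iff.mpr hq
      have := maximalIdeal_height_eq_ringKrullDim (R := R)
      rw [h1, hd] at this
      norm_cast at this
    have hm2 : ¬ (maximalIdeal R ≤ maximalIdeal R ^ 2) := by
      intro hle
      have h0 : maximalIdeal R = ⊥ := by
        apply Submodule.eq_bot_of_le_smul_of_le_jacobson_bot (maximalIdeal R) (maximalIdeal R)
          (IsNoetherian.noetherian _)
        · rw [smul_eq_mul, ← pow_two]; exact hle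
        · rw [jacobson_eq_maximalIdeal _ bot_ne_top]
      have hf := (isField_iff_maximalIdeal_eq.mpr h0)
      have := ringKrullDim_eq_zero_of_isField hf
      rw [hd] at this
      norm_cast at this
    obtain ⟨x, hxm, hx2, hxq⟩ : ∃ x ∈ maximalIdeal R, x ∉ maximalIdeal R ^ 2 ∧
        ∀ q ∈ minimalPrimes R, x ∉ q := by
      by_contra hcon
      push Not at hcon
      have hsub : ((maximalIdeal R : Ideal R) : Set R) ⊆
          ⋃ i ∈ (insert (maximalIdeal R ^ 2) (minimalPrimes R)), ((id i : Ideal R) : Set R) := by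
        intro x hx
        by_cases h2 : x ∈ maximalIdeal R ^ 2
        · exact Set.mem_biUnion (Set.mem_insert _ _) h2
        · obtain ⟨q, hq, hxq⟩ := hcon x hx h2
          exact Set.mem_biUnion (Set.mem_insert_of_mem _ hq) hxq
      rw [Ideal.subset_union_prime_finite (hfin.insert _) (maximalIdeal R ^ 2)
        (maximalIdeal R ^ 2)] at hsub
      · obtain ⟨i, hi, hle⟩ := hsub
        rcases hi with rfl | hi
        · exact hm2 hle
        · exact hmne i hi hle
      · intro i hi h1 _
        rcases hi with h | hi
        · exact absurd h h1
        · exact hi.1.1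
    -- quotient
    obtain ⟨r, hr⟩ : ∃ r : Fin (d+1) → R, ∑ j, r j * g j = x := by
      have : x ∈ Ideal.span (Set.range g) := by rw [hg]; exact hxm
      obtain ⟨r, hr⟩ := (Ideal.mem_span_range_iff_exists_fun).1 this
      exact ⟨r, hr⟩
    have hgm : ∀ j, g j ∈ maximalIdeal R := fun j => hg ▸ Ideal.subset_span ⟨j, rfl⟩
    obtain ⟨j0, hj0⟩ : ∃ j, IsUnit (r j) := by
      by_contra hcon
      push Not at hcon
      apply hx2
      rw [← hr, pow_two]
      exact Ideal.sum_mem _ fun j _ => Ideal.mul_mem_mul ((mem_maximalIdeal _).2 (hcon j)) (hgm j)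
    let Q := R ⧸ Ideal.span {x}
    have hne : Ideal.span {x} ≠ ⊤ := by
      intro h
      have : (1:R) ∈ Ideal.span {x} := h ▸ trivial
      have h2 : Ideal.span {x} ≤ maximalIdeal R := (Ideal.span_singleton_le_iff_mem _).2 hxm
      exact (maximalIdeal.isMaximal R).ne_top (top_le_iff.1 (h ▸ h2))
    have : Nontrivial Q := Ideal.Quotient.nontrivial_iff.mpr hne
    have : IsLocalRing Q := IsLocalRing.of_surjective' (Ideal.Quotient.mk _) Ideal.Quotient.mk_surjective
    let π := Ideal.Quotient.mk (Ideal.span {x})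
    have hmaxQ : maximalIdeal Q = (maximalIdeal R).map π := by
      apply le_antisymm
      · intro y hy
        obtain ⟨y, rfl⟩ := Ideal.Quotient.mk_surjective y
        apply Ideal.mem_map_of_mem
        rw [mem_maximalIdeal] at hy ⊢
        intro hu; exact hy (hu.map π)
      · rw [Ideal.map_le_iff_le_comap]
        apply le_of_eq
        exact (eq_maximalIdeal (Ideal.comap_isMaximal_of_surjective π Ideal.Quotient.mk_surjective)).symm
    let g' : Fin d → Q := fun j => π (g (j0.succAbove j))
    have hg' : Ideal.span (Set.range g') = maximalIdeal Q := by
      apply le_antisymm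
      · rw [Ideal.span_le]
        rintro _ ⟨j, rfl⟩
        rw [hmaxQ]
        exact Ideal.mem_map_of_mem _ (hgm _)
      · rw [hmaxQ, ← hg, Ideal.map_span, Ideal.span_le]
        rintro _ ⟨_, ⟨j, rfl⟩, rfl⟩
        have hmem : ∀ k, π (g (j0.succAbove k)) ∈ Ideal.span (Set.range g') :=
          fun k => Ideal.subset_span ⟨k, rfl⟩
        rcases Fin.eq_self_or_eq_succAbove j0 j with rfl | ⟨k, rfl⟩
        · have h0 : π (∑ j, r j * g j) = 0 := by
            rw [hr]; exact Ideal.Quotient.eq_zero_iff_mem.2 (Ideal.mem_span_singleton_self x)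
          rw [Fin.sum_univ_succAbove _ j, map_add, map_mul, map_sum] at h0
          have h1 : π (r j) * π (g j) ∈ Ideal.span (Set.range g') := by
            rw [eq_neg_of_add_eq_zero_left h0]
            apply Ideal.neg_mem_iff _ |>.2
            refine Ideal.sum_mem _ fun k _ => ?_
            rw [map_mul]
            exact Ideal.mul_mem_left _ _ (hmem k)
          exact (Ideal.unit_mul_mem_iff_mem _ (hj0.map π)).1 h1
        · exact hmem k
    have hdQ : ringKrullDim Q = d := by
      apply le_antisymm
      · refine (ringKrullDim_le_spanFinrank_maximalIdeal Q).trans ?_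
        rw [← hg']
        have := Submodule.spanFinrank_span_le_ncard_of_finite (R := Q) (Set.finite_range g')
        have h2 : (Set.range g').ncard ≤ d := by
          rw [← Set.image_univ]
          refine (Set.ncard_image_le Set.finite_univ).trans ?_
          simp
        exact_mod_cast this.trans h2
      · have h1 := ringKrullDim_le_ringKrullDim_quotSMulTop_succ hxm
        have h : Ideal.span {x} = x • (⊤ : Ideal R) := by simp [← Submodule.ideal_span_singleton_smul]
        rw [← h, hd] at h1
        push_cast at h1
        change (d : WithBot ℕ∞) + 1 ≤ ringKrullDim Q + 1 at h1
        revert h1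
        cases ringKrullDim Q with
        | bot => 
          intro h1
          exact absurd h1 (by rw [WithBot.bot_add, le_bot_iff]; exact fun h => WithBot.coe_ne_bot (a := ((d:ℕ∞)+1)) h)
        | coe x =>
          intro h1
          have h2 : (d:ℕ∞) + 1 ≤ x + 1 := by exact_mod_cast h1
          have h3 : (d:ℕ∞) ≤ x := by
            have := (ENat.add_le_add_iff_right (by simp)).1 h2
            exact this
          exact_mod_cast h3
    obtain ⟨hdom, rs, hlen, hrsm, hreg⟩ := ih Q g' hg' hdQ
    have hxp : (Ideal.span {x}).IsPrime := (Ideal.Quotient.isDomain_iff_prime _).1 hdom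
    obtain ⟨q, hq, hqx⟩ := Ideal.exists_minimalPrimes_le (I := ⊥) (J := Ideal.span {x}) bot_le
    have hqbot : q = ⊥ := by
      apply Submodule.eq_bot_of_le_smul_of_le_jacobson_bot (maximalIdeal R) q
          (IsNoetherian.noetherian _)
      · intro y hy
        obtain ⟨c, rfl⟩ := Ideal.mem_span_singleton'.1 (hqx hy)
        rw [mul_comm]
        have := hq.1.1
        exact Ideal.mul_mem_mul hxm ((hq.1.1.mem_or_mem hy).resolve_right (hxq q hq))
      · rw [jacobson_eq_maximalIdeal _ bot_ne_top]
    have hdomR : IsDomain R := by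
      have := hq.1.1
      rw [hqbot] at this
      exact IsDomain.of_bot_isPrime R
    refine ⟨hdomR, ?_⟩
    obtain ⟨rs', hrs'⟩ : ∃ rs' : List R, rs'.map π = rs :=
      ⟨rs.map (Function.surjInv Ideal.Quotient.mk_surjective), by
        rw [List.map_map]; convert List.map_id _; funext y; exact Function.surjInv_eq _ _⟩
    subst hrs'
    refine ⟨x :: rs', by simpa using hlen, ?_, ?_⟩
    · intro r hr
      rcases List.mem_cons.1 hr with rfl | hr
      · exact hxm
      · have := hrsm (π r) (List.mem_map_of_mem hr)
        rw [mem_maximalIdeal] at this ⊢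
        intro hu; exact this (hu.map π)
    · rw [isWeaklyRegular_cons_iff]
      constructor
      · have hx0 : x ≠ 0 := fun h => hx2 (h ▸ Ideal.zero_mem _)
        intro a b hab
        exact mul_left_cancel₀ hx0 hab
      · have h1 : IsWeaklyRegular Q rs' := (isWeaklyRegular_map_algebraMap_iff (S := Q) Q rs').1 hreg
        have h : Ideal.span {x} = x • (⊤ : Ideal R) := by simp [← Submodule.ideal_span_singleton_smul]
        exact (LinearEquiv.isWeaklyRegular_congr (Submodule.quotEquivOfEq _ _ h) rs').1 h1



theorem depth_free {S : Type*} [CommRing S] [IsNoetherianRing S] [IsLocalRing S]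
    (hreg : ∃ s : Finset S, Ideal.span (s : Set S) = IsLocalRing.maximalIdeal S ∧
      (s.card : WithBot ℕ∞) = ringKrullDim S)
    (M : Type*) [AddCommGroup M] [Module S M] [Module.Free S M] [Module.Finite S M]
    [Nontrivial M] : (modDepth S M : WithBot ℕ∞) = ringKrullDim S := by
  obtain ⟨s, hs, hd⟩ := hreg
  obtain ⟨-, rs, hlen, hm, hr⟩ := regloc_aux s.card S (fun j => (s.equivFin.symm j : S))
    (by rw [← hs]; congr 1; ext y; constructor
        · rintro ⟨j, rfl⟩; exact (s.equivFin.symm j).2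
        · intro hy; exact ⟨s.equivFin ⟨y, hy⟩, by simp⟩) hd.symm
  have hrM : IsRegular M rs := by
    apply IsRegular.of_isWeaklyRegular_of_mem_maximalIdeal _ hm
    have : IsWeaklyRegular (TensorProduct S S M) rs := hr.isWeaklyRegular_rTensor
    exact (LinearEquiv.isWeaklyRegular_congr (TensorProduct.lid S M) rs).1 this
  rw [← hd]
  have : modDepth S M = s.card := by
    apply le_antisymm
    · apply sSup_le
      rintro n ⟨ts, rfl, htm, htr⟩
      have h1 := Module.supportDim_add_length_eq_supportDim_of_isRegular ts htr
      have h2 : Module.supportDim S M ≤ s.card := by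
        rw [hd]; exact Module.supportDim_le_ringKrullDim S M
      have h3 : 0 ≤ Module.supportDim S (M ⧸ Ideal.ofList ts • (⊤ : Submodule S M)) := by
        have := htr.quot_ofList_smul_nontrivial ⊤
        have h5 := Module.supportDim_ne_bot_of_nontrivial S (M ⧸ Ideal.ofList ts • (⊤ : Submodule S M))
        revert h5
        cases Module.supportDim S (M ⧸ Ideal.ofList ts • (⊤ : Submodule S M)) with
        | bot => simp
        | coe x => intro _; exact_mod_cast zero_le
      have h4 : ((ts.length : ℕ) : WithBot ℕ∞) ≤ s.card := by
        refine le_trans ?_ h2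
        rw [← h1]
        exact le_add_of_nonneg_left h3
      exact_mod_cast h4
    · apply le_sSup
      exact ⟨rs, by rw [hlen], hm, hrM⟩
  rw [this]; rfl

end Dpart

def Mem2 {S : Type*} [CommRing S] (s y t : S) : Prop := ∃ u w, t = s * u + y * w
def Tsoc {S : Type*} [CommRing S] (Q : Ideal S) (s y : S) : Prop :=
  ∃ t, ¬ Mem2 s y t ∧ ∀ q ∈ Q, Mem2 s y (t * q)

theorem Mem2.symm {S : Type*} [CommRing S] {s y t : S} (h : Mem2 s y t) : Mem2 y s t := by
  obtain ⟨u, w, rfl⟩ := h; exact ⟨w, u, by ring⟩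
theorem Tsoc.symm {S : Type*} [CommRing S] {Q : Ideal S} {s y : S} (h : Tsoc Q s y) : Tsoc Q y s := by
  obtain ⟨t, h1, h2⟩ := h
  exact ⟨t, fun h => h1 h.symm, fun q hq => (h2 q hq).symm⟩

theorem Tsoc.trans {S : Type*} [CommRing S] {Q : Ideal S} {s y z : S}
    (hz : z ∈ Q) (hy : ∀ t, s ∣ y * t → s ∣ t) (hz' : ∀ t, s ∣ z * t → s ∣ t)
    (h : Tsoc Q s y) : Tsoc Q s z := by
  obtain ⟨t, h1, h2⟩ := h
  obtain ⟨u, t', ht⟩ := h2 z hz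
  refine ⟨t', ?_, ?_⟩
  · rintro ⟨c, d, rfl⟩
    apply h1
    obtain ⟨e, he⟩ := hz' (t - y * d) ⟨u + y * c, by linear_combination ht⟩
    exact ⟨e, d, by linear_combination he⟩
  · intro q hq
    obtain ⟨u', w, hw⟩ := h2 q hq
    obtain ⟨e, he⟩ := hy (t' * q - w * z) ⟨z * u' - u * q, by linear_combination z * hw - q * ht⟩
    exact ⟨e, w, by linear_combination he⟩

theorem regseq3 {S : Type*} [CommRing S] {x1 x2 x3 : S} (h : IsRegular S [x1, x2, x3]) :
    (∀ t, x1 * t = 0 → t = 0) ∧ (∀ t, x1 ∣ x2 * t → x1 ∣ t) ∧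
    (∀ t, Mem2 x1 x2 (t * x3) → Mem2 x1 x2 t) := by
  have hw := h.toIsWeaklyRegular
  rw [isWeaklyRegular_iff_Fin] at hw
  have key : ∀ (I : Ideal S) (x : S), IsSMulRegular (S ⧸ (I • (⊤ : Submodule S S))) x →
      ∀ t, x * t ∈ I → t ∈ I := by
    intro I x hx t ht
    have hI : (I • (⊤ : Submodule S S)) = I := by simp
    rw [hI] at hx
    have := hx (a₁ := Ideal.Quotient.mk I t) (a₂ := 0) (by
      change Ideal.Quotient.mk I (x * t) = x • (0 : S ⧸ I)
      rw [smul_zero]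
      exact Ideal.Quotient.eq_zero_iff_mem.2 ht)
    exact Ideal.Quotient.eq_zero_iff_mem.1 this
  have h0 := key (Ideal.ofList []) x1 (hw ⟨0, by simp⟩)
  have h1 := key (Ideal.ofList [x1]) x2 (hw ⟨1, by simp⟩)
  have h2 := key (Ideal.ofList [x1, x2]) x3 (hw ⟨2, by simp⟩)
  simp only [Ideal.ofList_nil, Ideal.ofList_cons, sup_bot_eq] at h0 h1 h2
  refine ⟨fun t ht => ?_, fun t ht => ?_, fun t ht => ?_⟩
  · exact h0 t ht
  · exact Ideal.mem_span_singleton.1 (h1 t (Ideal.mem_span_singleton.2 ht))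
  · have hm : ∀ s, Mem2 x1 x2 s ↔ s ∈ Ideal.span {x1} ⊔ Ideal.span {x2} := by
      intro s
      rw [← Ideal.span_union, Set.singleton_union, Ideal.mem_span_pair]
      constructor
      · rintro ⟨u, w, rfl⟩; exact ⟨u, w, by ring⟩
      · rintro ⟨u, w, rfl⟩; exact ⟨u, w, by ring⟩
    rw [hm] at ht ⊢
    exact h2 t (by rwa [mul_comm])

theorem regseq_not_le {S : Type*} [CommRing S] [IsDomain S] {Q : Ideal S}
    {p : S} (hp : Prime p) {x1 x2 x3 : S} (h1 : x1 ∈ Q) (h2 : x2 ∈ Q)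
    (hr : IsRegular S [x1, x2, x3]) : ¬ Q ≤ Ideal.span {p} := by
  obtain ⟨r1, r2, r3⟩ := regseq3 hr
  have x10 : x1 ≠ 0 := by
    rintro rfl; exact one_ne_zero (r1 1 (by simp))
  intro hle
  obtain ⟨u1, e1⟩ := Ideal.mem_span_singleton.1 (hle h1)
  obtain ⟨u2, e2⟩ := Ideal.mem_span_singleton.1 (hle h2)
  obtain ⟨c, hc⟩ := r2 u1 ⟨u2, by rw [e1, e2]; ring⟩
  have hu1 : u1 ≠ 0 := by rintro rfl; exact x10 (by rw [e1]; simp)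
  have : u1 * 1 = u1 * (p * c) := by rw [mul_one]; nth_rewrite 1 [hc, e1]; ring
  have := mul_left_cancel₀ hu1 this
  exact hp.not_isUnit (IsUnit.of_mul_eq_one c this.symm)

theorem noTsoc {S : Type*} [CommRing S] [IsDomain S] [IsNoetherianRing S] {Q : Ideal S}
    {p y : S} (hp : Prime p) (hy : ¬ p ∣ y) 
    {x1 x2 x3 : S} (h1 : x1 ∈ Q) (h2 : x2 ∈ Q) (h3 : x3 ∈ Q) 
    (hr : IsRegular S [x1, x2, x3]) : ¬ Tsoc Q p y := by
  intro hT
  obtain ⟨r1, r2, r3⟩ := regseq3 hr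
  have x10 : x1 ≠ 0 := by
    rintro rfl; exact one_ne_zero (r1 1 (by simp))
  have hQp := regseq_not_le hp h1 h2 hr
  obtain ⟨z, hzQ, hzp, hz1⟩ : ∃ z ∈ Q, ¬ p ∣ z ∧ ∀ t, x1 ∣ z * t → x1 ∣ t := by
    by_contra hcon
    push Not at hcon
    let Ass := associatedPrimes S (S ⧸ Ideal.span {x1})
    have hfin : Ass.Finite := associatedPrimes.finite S _
    have hsub : ((Q : Ideal S) : Set S) ⊆
          ⋃ i ∈ (insert (Ideal.span {p}) Ass), ((id i : Ideal S) : Set S) := by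
      intro z hz
      by_cases hzp : p ∣ z
      · exact Set.mem_biUnion (Set.mem_insert _ _) (Ideal.mem_span_singleton.2 hzp)
      · obtain ⟨t, ht, ht'⟩ := hcon z hz hzp
        have : z ∈ ⋃ q ∈ Ass, (q : Set S) := by
          rw [biUnion_associatedPrimes_eq_zero_divisors]
          refine ⟨Ideal.Quotient.mk _ t, ?_, ?_⟩
          · rw [Ne, Ideal.Quotient.eq_zero_iff_mem, Ideal.mem_span_singleton]; exact ht'
          · change Ideal.Quotient.mk _ (z * t) = 0
            rw [Ideal.Quotient.eq_zero_iff_mem, Ideal.mem_span_singleton]; exact ht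
        simp only [Set.mem_iUnion] at this
        obtain ⟨q, hq, hzq⟩ := this
        exact Set.mem_biUnion (Set.mem_insert_of_mem _ hq) hzq
    rw [Ideal.subset_union_prime_finite (hfin.insert _) (Ideal.span {p})
        (Ideal.span {p})] at hsub
    · obtain ⟨q, hq, hle⟩ := hsub
      rcases hq with rfl | hq
      · exact hQp hle
      · have hx2 : x2 ∈ ⋃ q ∈ Ass, (q : Set S) := Set.mem_biUnion hq (hle h2)
        rw [biUnion_associatedPrimes_eq_zero_divisors] at hx2
        obtain ⟨t, ht0, ht⟩ := hx2
        obtain ⟨t, rfl⟩ := Ideal.Quotient.mk_surjective t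
        change Ideal.Quotient.mk _ (x2 * t) = 0 at ht
        rw [Ideal.Quotient.eq_zero_iff_mem, Ideal.mem_span_singleton] at ht
        exact ht0 (Ideal.Quotient.eq_zero_iff_mem.2 (Ideal.mem_span_singleton.2 (r2 t ht)))
    · intro q hq h1 _
      rcases hq with h | hq
      · exact absurd h h1
      · exact hq.1
  have hz0 : z ≠ 0 := by rintro rfl; exact hzp (dvd_zero _)
  have T1 : Tsoc Q p z := hT.trans hzQ (fun t ht => (hp.dvd_or_dvd ht).resolve_left hy)
    (fun t ht => (hp.dvd_or_dvd ht).resolve_left hzp)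
  have T2 : Tsoc Q z x1 := T1.symm.trans h1 
    (by
      rintro t ⟨u, hu⟩
      obtain ⟨u', rfl⟩ := (hp.dvd_or_dvd ⟨t, hu.symm⟩).resolve_left hzp
      exact ⟨u', mul_left_cancel₀ hp.ne_zero (by rw [hu]; ring)⟩)
    (by
      rintro t ⟨u, hu⟩
      obtain ⟨u', rfl⟩ := hz1 u ⟨t, hu.symm⟩
      exact ⟨u', mul_left_cancel₀ x10 (by rw [hu]; ring)⟩)
  obtain ⟨t, ht, ht'⟩ := T2.symm.trans h2 hz1 r2
  exact ht (r3 t (ht' x3 h3))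

theorem arith {S : Type*} [CommRing S] [IsDomain S] [IsNoetherianRing S] [IsLocalRing S]
    {p : ℕ} (hp : p.Prime) (hpS : Prime (p : S)) 
    {f g h₁ h₂ a b : S} (hf : f = h₁ ^ p + a * (p : S)) (hg : g = h₂ ^ p + b * (p : S))
    (hfg : (¬IsUnit f ∧ ¬IsUnit g) ∨ (IsUnit f ∧ IsUnit g))
    (i : ℕ) (hi1 : 1 ≤ i) (hi2 : i ≤ p - 1)
    (hfgi : ∃ x y : S, f * g ^ i = x ^ p + y * (p : S) ^ 2)
    (hgrade : ∃ rs : List S, rs.length = 3 ∧ (∀ r ∈ rs, r ∈ Ideal.span {((p : ℕ) : S), f, g}) ∧ 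
      RingTheory.Sequence.IsRegular S rs) :
    ¬ (p : S) ∣ h₁ ∧ ¬ (p : S) ∣ h₂ ∧ (∃ y, f * g ^ i = (h₁ * h₂ ^ i) ^ p + (p : S) ^ 2 * y) ∧
    (∃ d e1 e2, a = - (i : S) * d * h₁ ^ p + p * e1 ∧ b = d * h₂ ^ p + p * e2) ∧
    (∀ s, g ∣ f * s → g ∣ s) := by
  have hpm : (p : S) ∈ maximalIdeal S := (mem_maximalIdeal _).2 hpS.not_isUnit
  have hp0 : (p : S) ≠ 0 := hpS.ne_zero
  obtain ⟨rs, hlen, hmem, hr⟩ := hgrade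
  match rs, hlen, hmem, hr with
  | [x1, x2, x3], _, hmem, hr =>
  have h1 := hmem x1 (by simp)
  have h2 := hmem x2 (by simp)
  have h3 := hmem x3 (by simp)
  have hspan : ∀ q ∈ Ideal.span {((p : ℕ) : S), f, g}, ∃ u v w, q = p * u + f * v + g * w := by
    intro q hq
    rw [Ideal.mem_span_insert] at hq
    obtain ⟨u, z, hz, rfl⟩ := hq
    obtain ⟨v, w, rfl⟩ := Ideal.mem_span_pair.1 hz
    exact ⟨u, v, w, by ring⟩
  have hle := regseq_not_le hpS h1 h2 hr
  have notone : ∀ y : S, ¬ IsUnit y → ¬ Mem2 (p : S) y 1 := by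
    rintro y hy ⟨u, w, h⟩
    have : (1 : S) ∈ maximalIdeal S := by
      rw [h]; exact Ideal.add_mem _ (Ideal.mul_mem_right _ _ hpm)
        (Ideal.mul_mem_right _ _ ((mem_maximalIdeal _).2 hy))
    exact (mem_maximalIdeal _).1 this isUnit_one
  have hnd : ¬ (p : S) ∣ f ∧ ¬ (p : S) ∣ g := by
    rcases hfg with ⟨uf, ug⟩ | ⟨uf, ug⟩
    · have hnot : ¬ ((p : S) ∣ f ∧ (p : S) ∣ g) := by
        rintro ⟨hf, hg⟩
        apply hle
        intro q hq
        obtain ⟨u, v, w, rfl⟩ := hspan q hq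
        rw [Ideal.mem_span_singleton]
        exact dvd_add (dvd_add ⟨u, rfl⟩ (hf.mul_right _)) (hg.mul_right _)
      constructor
      · intro hpf
        have hpg : ¬ (p : S) ∣ g := fun h => hnot ⟨hpf, h⟩
        refine noTsoc hpS hpg h1 h2 h3 hr ⟨1, notone g ug, ?_⟩
        intro q hq
        obtain ⟨u, v, w, rfl⟩ := hspan q hq
        obtain ⟨c, hc⟩ := hpf
        exact ⟨u + c * v, w, by rw [hc]; ring⟩
      · intro hpg
        have hpf : ¬ (p : S) ∣ f := fun h => hnot ⟨h, hpg⟩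
        refine noTsoc hpS hpf h1 h2 h3 hr ⟨1, notone f uf, ?_⟩
        intro q hq
        obtain ⟨u, v, w, rfl⟩ := hspan q hq
        obtain ⟨c, hc⟩ := hpg
        exact ⟨u + c * w, v, by rw [hc]; ring⟩
    · exact ⟨fun h => hpS.not_isUnit (isUnit_of_dvd_unit h uf), 
        fun h => hpS.not_isUnit (isUnit_of_dvd_unit h ug)⟩
  have cop1 : ∀ t, Mem2 (p : S) f (g * t) → Mem2 (p : S) f t := by
    intro t ht
    by_contra hcon
    refine noTsoc hpS hnd.1 h1 h2 h3 hr ⟨t, hcon, ?_⟩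
    intro q hq
    obtain ⟨u, v, w, rfl⟩ := hspan q hq
    obtain ⟨c, d, hc⟩ := ht
    exact ⟨u * t + c * w, v * t + d * w, by linear_combination w * hc⟩
  have cop2 : ∀ t, Mem2 (p : S) g (f * t) → Mem2 (p : S) g t := by
    intro t ht
    by_contra hcon
    refine noTsoc hpS hnd.2 h1 h2 h3 hr ⟨t, hcon, ?_⟩
    intro q hq
    obtain ⟨u, v, w, rfl⟩ := hspan q hq
    obtain ⟨c, d, hc⟩ := ht
    exact ⟨u * t + c * v, w * t + d * v, by linear_combination v * hc⟩
  have hh1 : ¬ (p : S) ∣ h₁ := by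
    intro h
    apply hnd.1
    rw [hf]
    exact dvd_add (dvd_pow h hp.ne_zero) (Dvd.intro_left _ rfl)
  have hh2 : ¬ (p : S) ∣ h₂ := by
    intro h
    apply hnd.2
    rw [hg]
    exact dvd_add (dvd_pow h hp.ne_zero) (Dvd.intro_left _ rfl)
  -- g^i mod p^2
  obtain ⟨k, rfl⟩ : ∃ k, i = k + 1 := ⟨i - 1, by omega⟩
  obtain ⟨c1, hc1⟩ : ∃ c1, g ^ (k+1) = (h₂ ^ p) ^ (k+1) + (k + 1 : ℕ) * (h₂ ^ p) ^ k * (b * p) + (b * p) ^ 2 * c1 := by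
    obtain ⟨c, hc⟩ := (Polynomial.powAddExpansion (h₂ ^ p) (b * p) (k+1))
    refine ⟨c, ?_⟩
    rw [hg, hc]
    simp; ring
  obtain ⟨x, y, hxy⟩ := hfgi
  set h := h₁ * h₂ ^ (k+1) with hh
  have hhp : h ^ p = h₁ ^ p * (h₂ ^ p) ^ (k+1) := by rw [hh]; ring
  have hexp : f * g ^ (k+1) = h ^ p + p * ((h₂ ^ p) ^ k * (a * h₂ ^ p + (k + 1 : ℕ) * b * h₁ ^ p))
      + p ^ 2 * (a * (k + 1 : ℕ) * (h₂ ^ p) ^ k * b + f * b ^ 2 * c1) := by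
    rw [hc1, hhp]
    linear_combination ((h₂ ^ p) ^ (k+1) + (k + 1 : ℕ) * (h₂ ^ p) ^ k * (b * p)) * hf 
  obtain ⟨r, hr1⟩ := exists_add_pow_prime_eq hp h (x - h)
  rw [add_sub_cancel] at hr1
  have hdv : (p : S) ∣ x - h := by
    apply hpS.dvd_of_dvd_pow (n := p)
    refine ⟨((h₂ ^ p) ^ k * (a * h₂ ^ p + (k + 1 : ℕ) * b * h₁ ^ p))
      + p  * (a * (k + 1 : ℕ) * (h₂ ^ p) ^ k * b + f * b ^ 2 * c1) - y * p - h * (x - h) * r, ?_⟩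
    linear_combination hexp - hxy - hr1
  obtain ⟨c2, hc2⟩ := hdv
  have hx' : ∃ r', x ^ p = h ^ p + p ^ 2 * r' := by
    obtain ⟨q, hq⟩ : ∃ q, p = q + 2 := ⟨p - 2, by have := hp.two_le; omega⟩
    refine ⟨p ^ q * c2 ^ p + h * c2 * r, ?_⟩
    have e : (p : S) ^ p = p ^ 2 * p ^ q := by
      rw [← pow_add]; congr 1; omega
    rw [hr1, hc2, mul_pow (p : S) c2, e]; ring
  obtain ⟨r', hr'⟩ := hx'
  have hdv2 : (p : S) ∣ a * h₂ ^ p + (k + 1 : ℕ) * b * h₁ ^ p := by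
    have : (p : S) ∣ (h₂ ^ p) ^ k * (a * h₂ ^ p + (k + 1 : ℕ) * b * h₁ ^ p) := by
      refine ⟨r' + y - (a * (k + 1 : ℕ) * (h₂ ^ p) ^ k * b + f * b ^ 2 * c1), ?_⟩
      apply mul_left_cancel₀ hp0
      linear_combination hxy - hexp + hr'
    rcases hpS.dvd_or_dvd this with h | h
    · exact absurd (hpS.dvd_of_dvd_pow (hpS.dvd_of_dvd_pow h)) hh2
    · exact h
  refine ⟨hh1, hh2, ⟨r' + y, by rw [hxy, hr']; ring⟩, ?_, ?_⟩
  · obtain ⟨w, hw⟩ := hdv2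
    obtain ⟨u, c, hc⟩ := cop1 a ⟨w + a * b + (k+1:ℕ) * b * a, - (k+1:ℕ) * b, by 
      rw [hg]; linear_combination hw + (k+1:ℕ) * b * hf⟩
    obtain ⟨w2, hw2⟩ : (p : S) ∣ c * h₂ ^ p + (k+1:ℕ) * b := by
      have : (p : S) ∣ h₁ ^ p * (c * h₂ ^ p + (k+1:ℕ) * b) := by
        refine ⟨w - (u + a * c) * h₂ ^ p, ?_⟩
        linear_combination hw - h₂ ^ p * hc - h₂ ^ p * c * hf
      rcases hpS.dvd_or_dvd this with h | h
      · exact absurd (hpS.dvd_of_dvd_pow h) hh1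
      · exact h
    obtain ⟨i', m, him⟩ : ∃ i' m : ℤ, ((k + 1 : ℕ) : ℤ) * i' = 1 + p * m := by
      have hcop : IsCoprime ((k + 1 : ℕ) : ℤ) (p : ℤ) := by
        rw [Nat.isCoprime_iff_coprime]
        exact (Nat.coprime_of_lt_prime (by omega) (by omega) hp).symm
      obtain ⟨u, v, huv⟩ := hcop
      exact ⟨u, -v, by linear_combination huv⟩
    have him' : ((k + 1 : ℕ) : S) * i' = 1 + p * m := by exact_mod_cast congrArg (Int.cast : ℤ → S) him
    refine ⟨- (i' : S) * c, u + a * c - m * c * h₁ ^ p, (i' : S) * w2 - m * b, ?_, ?_⟩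
    · linear_combination hc + c * hf - c * h₁ ^ p * him'
    · linear_combination (i' : S) * hw2 - b * him'
  · rcases hfg with ⟨uf, ug⟩ | ⟨uf, ug⟩
    · let C : Ideal S := 
        { carrier := {s | g ∣ f * s}
          add_mem' := fun {x y} hx hy => by
            change g ∣ f * (x + y); rw [mul_add]; exact dvd_add hx hy
          zero_mem' := by change g ∣ f * 0; simp
          smul_mem' := fun c x hx => by
            change g ∣ f * (c * x); rw [mul_left_comm]; exact Dvd.dvd.mul_left hx c }
      have hC : C ≤ Ideal.span {g} := by
        apply Submodule.le_of_le_smul_of_le_jacobson_bot (I := maximalIdeal S) (IsNoetherian.noetherian C)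
        · rw [jacobson_eq_maximalIdeal _ bot_ne_top]
        · intro s hs
          obtain ⟨t, ht⟩ := (show g ∣ f * s from hs)
          obtain ⟨u, w, rfl⟩ := cop2 s ⟨0, t, by rw [ht]; ring⟩
          rw [add_comm]
          apply Submodule.add_mem_sup
          · exact Ideal.mem_span_singleton.2 ⟨w, rfl⟩
          · apply Ideal.mul_mem_mul hpm
            change g ∣ f * u
            obtain ⟨v', hv'⟩ : (p : S) ∣ t - f * w := by
              refine (hpS.dvd_or_dvd (a := g) (b := t - f * w) ⟨f * u, by linear_combination - ht⟩).resolve_left hnd.2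
            exact ⟨v', mul_left_cancel₀ hp0 (by linear_combination ht + g * hv')⟩
      intro s hs
      exact Ideal.mem_span_singleton.1 (hC hs)
    · intro s _; exact ug.dvd

theorem q_dvd_XY {A : Type*} [CommRing A] {p : ℕ} {q X Y x' y' : A}
    (hX : X ^ p = q * x') (hY : Y ^ p = q * y') {s t : ℕ} (h : 2 * p - 1 ≤ s + t) :
    q ∣ X ^ s * Y ^ t := by
  by_cases hs : p ≤ s
  · obtain ⟨k, rfl⟩ := Nat.exists_eq_add_of_le hs
    exact ⟨x' * X ^ k * Y ^ t, by rw [pow_add, hX]; ring⟩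
  · obtain ⟨k, rfl⟩ := Nat.exists_eq_add_of_le (show p ≤ t by omega)
    exact ⟨y' * Y ^ k * X ^ s, by rw [pow_add, hY]; ring⟩

theorem q2_dvd_XY {A : Type*} [CommRing A] {p : ℕ} {q X Y x' y' : A}
    (hX : X ^ p = q * x') (hY : Y ^ p = q * y') {s t : ℕ} (hs : p ≤ s) (ht : p ≤ t) :
    q ^ 2 ∣ X ^ s * Y ^ t := by
  obtain ⟨k, rfl⟩ := Nat.exists_eq_add_of_le hs
  obtain ⟨l, rfl⟩ := Nat.exists_eq_add_of_le ht
  exact ⟨x' * y' * X ^ k * Y ^ l, by rw [pow_add, hX, pow_add, hY]; ring⟩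

theorem q2_dvd_XX {A : Type*} [CommRing A] {p : ℕ} {q X x' : A}
    (hX : X ^ p = q * x') {s : ℕ} (hs : 2 * p ≤ s) : q ^ 2 ∣ X ^ s := by
  obtain ⟨k, rfl⟩ := Nat.exists_eq_add_of_le hs
  exact ⟨x' ^ 2 * X ^ k, by rw [pow_add, mul_comm 2 p, pow_mul, hX]; ring⟩

theorem q2_dvd_big {A : Type*} [CommRing A] {p : ℕ} {q X Y x' y' : A}
    (hX : X ^ p = q * x') (hY : Y ^ p = q * y') {s t : ℕ} (h : 3 * p - 1 ≤ s + t) :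
    q ^ 2 ∣ X ^ s * Y ^ t := by
  by_cases hs : p ≤ s
  · by_cases ht : p ≤ t
    · exact q2_dvd_XY hX hY hs ht
    · exact (q2_dvd_XX hX (by omega)).mul_right _
  · exact (q2_dvd_XX hY (by omega)).mul_left _

theorem C_E0 {A : Type*} [CommRing A] {p : ℕ} (hp3 : 3 ≤ p) (hodd : Even (p-1))
    {q X Y h1 h2 a b d e1 e2 m α β ii v r1 r2 r3 w0 : A}
    (hX : X ^ p = q * (a + X * α)) (hY : Y ^ p = q * (b + Y * β))
    (ha : a = - ii * d * h1 ^ p + q * e1) (hb : b = d * h2 ^ p + q * e2)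
    (hi : ii ^ (p-1) = 1 + q * m)
    (hv : v = w0 * (h2 * X + ii * h1 * Y) + (X ^ 2 * r1 + X * Y * r2 + Y ^ 2 * r3)) :
    let D := ∑ n ∈ Finset.range (p-1), (ii * d * h1 * h2 * ((-h2) ^ n * (ii * h1) ^ (p - 2 - n))) * 
      (X ^ n * Y ^ (p - 2 - n))
    ∀ s t, s + t = p - 1 → q ^ 2 ∣ (X ^ (p-1) * Y ^ (p-1) + q * D) * v * (X ^ s * Y ^ t) := by
  intro D s t hst
  have hD : D * (h2 * X + ii * h1 * Y) = 
      ii * d * h1 * h2 * ((ii * h1 * Y) ^ (p-1) - (h2 * X) ^ (p-1)) := by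
    have := geom_sum₂_mul (-(h2 * X)) (ii * h1 * Y) (p - 1)
    rw [hodd.neg_pow] at this
    have e : D = ii * d * h1 * h2 * ∑ n ∈ Finset.range (p-1), (-(h2 * X)) ^ n * (ii * h1 * Y) ^ (p - 1 - 1 - n) := by
      rw [Finset.mul_sum]
      refine Finset.sum_congr rfl fun n hn => ?_
      rw [show p - 1 - 1 - n = p - 2 - n by omega, ← neg_mul, mul_pow, mul_pow (ii * h1) Y]; ring
    rw [e]; linear_combination - (ii * d * h1 * h2) * this
  have hD2 : ∀ s t, p + 1 ≤ s + t → q ∣ D * (X ^ s * Y ^ t) := by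
    intro s t hst
    rw [Finset.sum_mul]
    refine Finset.dvd_sum fun n hn => ?_
    have hn' := Finset.mem_range.1 hn
    rw [mul_assoc]
    apply Dvd.dvd.mul_left
    have e : X ^ n * Y ^ (p - 2 - n) * (X ^ s * Y ^ t) = X ^ (n + s) * Y ^ (p - 2 - n + t) := by ring
    rw [e]
    exact q_dvd_XY hX hY (by omega)
  -- quadratic part
  have hquad : q ^ 2 ∣ (X ^ (p-1) * Y ^ (p-1) + q * D) * (X ^ 2 * r1 + X * Y * r2 + Y ^ 2 * r3) * (X ^ s * Y ^ t) := by
    have h1 : ∀ s' t', s' + t' = 2 → q ^ 2 ∣ (X ^ (p-1) * Y ^ (p-1) + q * D) * (X ^ (s'+s) * Y ^ (t'+t)) := by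
      intro s' t' h
      rw [add_mul]
      apply dvd_add
      · have e : X ^ (p-1) * Y ^ (p-1) * (X ^ (s'+s) * Y ^ (t'+t)) = X ^ (p-1+(s'+s)) * Y ^ (p-1+(t'+t)) := by ring
        rw [e]; exact q2_dvd_big hX hY (by omega)
      · rw [mul_assoc, pow_two]; exact mul_dvd_mul_left _ (hD2 _ _ (by omega))
    obtain ⟨k1, hk1⟩ := h1 2 0 rfl
    obtain ⟨k2, hk2⟩ := h1 1 1 rfl
    obtain ⟨k3, hk3⟩ := h1 0 2 rfl
    refine ⟨k1 * r1 + k2 * r2 + k3 * r3, ?_⟩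
    rw [pow_add, pow_add] at hk1 hk2 hk3
    linear_combination r1 * hk1 + r2 * hk2 + r3 * hk3
  have hlin : q ^ 2 ∣ (X ^ (p-1) * Y ^ (p-1) + q * D) * (h2 * X + ii * h1 * Y) * (X ^ s * Y ^ t) := by
    have e : (X ^ (p-1) * Y ^ (p-1) + q * D) * (h2 * X + ii * h1 * Y) * (X ^ s * Y ^ t)
      = h2 * (X ^ (p-1+1+s) * Y ^ (p-1+t)) + ii * h1 * (X ^ (p-1+s) * Y ^ (p-1+1+t))
        + q * (ii * d * h1 * h2 * ((ii * h1) ^ (p-1) * (X ^ s * Y ^ (p-1+t)) - h2 ^ (p-1) * (X ^ (p-1+s) * Y ^ t))) := by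
      calc _ = X ^ (p-1) * Y ^ (p-1) * (h2 * X + ii * h1 * Y) * (X ^ s * Y ^ t) + q * (D * (h2 * X + ii * h1 * Y)) * (X ^ s * Y ^ t) := by ring
        _ = _ := by rw [hD]; ring
    rw [e]
    have hpp : p - 1 + 1 = p := by omega
    by_cases hs0 : s = 0
    · subst hs0
      have ht : t = p - 1 := by omega
      subst ht
      rw [hpp]
      obtain ⟨k1, hk1⟩ : q ^ 2 ∣ X ^ p * Y ^ (p-1+(p-1)) := q2_dvd_XY hX hY (by omega) (by omega)
      obtain ⟨k2, hk2⟩ : q ∣ Y ^ (p-1+(p-1)) := by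
        have := q_dvd_XY (s := 0) (t := p - 1 + (p-1)+1) hX hY (by omega)
        obtain ⟨k, hk⟩ := Nat.exists_eq_add_of_le (show p ≤ p - 1 + (p-1) by omega)
        rw [hk]; exact ⟨(b + Y * β) * Y ^ k, by rw [pow_add, hY]; ring⟩
      have hpow : h2 ^ p = h2 * h2 ^ (p-1) := by rw [← pow_succ', hpp]
      have e3 : Y ^ p * Y ^ (p-1) = q * b * Y ^ (p-1) + q * β * (q * (b + Y * β)) := by
        have : Y * Y ^ (p-1) = Y ^ p := by rw [← pow_succ', hpp]
        rw [← hY, ← this]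
        linear_combination Y ^ (p-1) * (this + hY)
      have e4 : X ^ (p-1+0) * Y ^ (p + (p-1)) = X ^ (p-1) * (Y ^ p * Y ^ (p-1)) := by ring
      rw [e4, e3, hk1, hk2]
      refine ⟨h2 * k1 + ii * h1 * X ^ (p-1) * (β * (b + Y * β) + e2 * Y ^ (p-1)) + ii * d * h1 * h2 * (ii * h1) ^ (p-1) * k2, ?_⟩
      simp only [add_zero, pow_zero, one_mul]
      linear_combination ii * h1 * X ^ (p-1) * Y ^ (p-1) * q * (hb + d * hpow)
    · by_cases ht0 : t = 0
      · subst ht0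
        have ht : s = p - 1 := by omega
        subst ht
        rw [hpp]
        obtain ⟨k1, hk1⟩ : q ^ 2 ∣ X ^ (p-1+(p-1)) * Y ^ p := q2_dvd_XY hX hY (by omega) (by omega)
        obtain ⟨k2, hk2⟩ : q ∣ X ^ (p-1+(p-1)) := by
          obtain ⟨k, hk⟩ := Nat.exists_eq_add_of_le (show p ≤ p - 1 + (p-1) by omega)
          rw [hk]; exact ⟨(a + X * α) * X ^ k, by rw [pow_add, hX]; ring⟩
        have hpow : h1 ^ p = h1 * h1 ^ (p-1) := by rw [← pow_succ', hpp]
        have e3 : X ^ p * X ^ (p-1) = q * a * X ^ (p-1) + q * α * (q * (a + X * α)) := by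
          have : X * X ^ (p-1) = X ^ p := by rw [← pow_succ', hpp]
          rw [← hX, ← this]
          linear_combination X ^ (p-1) * (this + hX)
        have e4 : X ^ (p + (p-1)) * Y ^ (p-1+0) = Y ^ (p-1) * (X ^ p * X ^ (p-1)) := by ring
        rw [e4, e3, hk1, hk2]
        refine ⟨ii * h1 * k1 + h2 * Y ^ (p-1) * (α * (a + X * α) + e1 * X ^ (p-1)) - ii * d * h1 * h2 * h2 ^ (p-1) * k2 + ii * d * h1 * h2 * h1 ^ (p-1) * m * X ^ (p-1) * Y ^ (p-1), ?_⟩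
        simp only [add_zero, pow_zero, mul_one]
        rw [mul_pow ii h1]
        linear_combination h2 * X ^ (p-1) * Y ^ (p-1) * q * (ha - ii * d * hpow) + q * ii * d * h1 * h2 * h1 ^ (p-1) * X ^ (p-1) * Y ^ (p-1) * hi
      · refine dvd_add (dvd_add ?_ ?_) ?_
        · exact (q2_dvd_XY hX hY (by omega) (by omega)).mul_left _
        · exact (q2_dvd_XY hX hY (by omega) (by omega)).mul_left _
        · rw [pow_two]
          apply mul_dvd_mul_left
          apply Dvd.dvd.mul_left
          apply dvd_sub
          · apply Dvd.dvd.mul_left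
            apply Dvd.dvd.mul_left
            obtain ⟨k, hk⟩ := Nat.exists_eq_add_of_le (show p ≤ p - 1 + t by omega)
            rw [hk]; exact ⟨(b + Y * β) * Y ^ k, by rw [pow_add, hY]; ring⟩
          · apply Dvd.dvd.mul_left
            apply Dvd.dvd.mul_right
            obtain ⟨k, hk⟩ := Nat.exists_eq_add_of_le (show p ≤ p - 1 + s by omega)
            rw [hk]; exact ⟨(a + X * α) * X ^ k, by rw [pow_add, hX]; ring⟩
  obtain ⟨k1, hk1⟩ := hquad
  obtain ⟨k2, hk2⟩ := hlin
  exact ⟨k1 + w0 * k2, by rw [hv]; linear_combination hk1 + w0 * hk2⟩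

noncomputable def cc {S A : Type*} [CommRing S] [CommRing A] [Algebra S A] {p : ℕ}
    (bas : Module.Basis (Fin p × Fin p) S A) (j k : ℕ) : A →ₗ[S] S :=
  if h : j < p ∧ k < p then bas.coord (⟨j, h.1⟩, ⟨k, h.2⟩) else 0

section CC
variable {S A : Type*} [CommRing S] [CommRing A] [Algebra S A] {p : ℕ}
    {bas : Module.Basis (Fin p × Fin p) S A} {X Y : A}

theorem cc_mon (hbas : ∀ jk, bas jk = X ^ (jk.1 : ℕ) * Y ^ (jk.2 : ℕ)) {j' k' : ℕ} (hj : j' < p) (hk : k' < p)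
    (j k : ℕ) : cc bas j k (X ^ j' * Y ^ k') = if j = j' ∧ k = k' then 1 else 0 := by
  have e : X ^ j' * Y ^ k' = bas (⟨j', hj⟩, ⟨k', hk⟩) := by rw [hbas]
  rw [e, cc]
  split_ifs with h1 h2 h2
  · obtain ⟨rfl, rfl⟩ := h2; simp
  · rw [Module.Basis.coord_apply, Module.Basis.repr_self, Finsupp.single_apply, if_neg]
    intro h; apply h2; simp only [Prod.mk.injEq, Fin.mk.injEq] at h; exact ⟨h.1.symm, h.2.symm⟩
  · obtain ⟨rfl, rfl⟩ := h2; exact absurd ⟨hj, hk⟩ h1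
  · rfl

theorem cc_p (z : A) (j k : ℕ) : cc bas j k ((p : A) * z) = p * cc bas j k z := by
  have : (p : A) * z = (p : S) • z := by rw [Algebra.smul_def, map_natCast]
  rw [this, map_smul, smul_eq_mul]

theorem cc_dvd {y : A} (h : (p : A) ∣ y) (j k : ℕ) : (p : S) ∣ cc bas j k y := by
  obtain ⟨z, rfl⟩ := h
  exact ⟨_, cc_p z j k⟩

theorem dvd_of_cc {y : A} (h : ∀ j k, j < p → k < p → (p : S) ∣ cc bas j k y) : (p : A) ∣ y := by
  rw [← bas.sum_repr y]
  refine Finset.dvd_sum fun jk _ => ?_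
  obtain ⟨c, hc⟩ := h jk.1 jk.2 jk.1.2 jk.2.2
  have : bas.repr y jk = p * c := by
    rw [← hc, cc, dif_pos ⟨jk.1.2, jk.2.2⟩]; rfl
  rw [this]
  exact ⟨c • bas jk, by rw [mul_smul, Algebra.smul_def (p : S), map_natCast]⟩

theorem bas_ind (hbas : ∀ jk, bas jk = X ^ (jk.1 : ℕ) * Y ^ (jk.2 : ℕ)) (P : A → Prop)
    (h0 : P 0) (hadd : ∀ x y, P x → P y → P (x + y)) (hs : ∀ (c : S) x, P x → P (c • x))
    (hm : ∀ j k, j < p → k < p → P (X ^ j * Y ^ k)) (y : A) : P y := by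
  have hy : y ∈ Submodule.span S (Set.range bas) := by rw [bas.span_eq]; trivial
  induction hy using Submodule.span_induction with
  | mem x hx => obtain ⟨jk, rfl⟩ := hx; rw [hbas]; exact hm _ _ jk.1.2 jk.2.2
  | zero => exact h0
  | add x y _ _ hx hy => exact hadd x y hx hy
  | smul c x _ hx => exact hs c x hx

theorem shiftX (hbas : ∀ jk, bas jk = X ^ (jk.1 : ℕ) * Y ^ (jk.2 : ℕ)) (hXp : (p : A) ∣ X ^ p)
    {j : ℕ} (hj : j + 1 < p) (k : ℕ) (y : A) : (p : S) ∣ cc bas (j+1) k (y * X) - cc bas j k y := by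
  apply bas_ind hbas (fun y => (p : S) ∣ cc bas (j+1) k (y * X) - cc bas j k y)
  · simp
  · intro x y hx hy
    have := dvd_add hx hy
    convert this using 1
    rw [add_mul, map_add, map_add]; ring
  · intro c x hx
    have := Dvd.dvd.mul_left hx c
    convert this using 1
    rw [smul_mul_assoc, map_smul, map_smul, smul_eq_mul, smul_eq_mul]; ring
  · intro j' k' hj' hk'
    have e : X ^ j' * Y ^ k' * X = X ^ (j'+1) * Y ^ k' := by ring
    rw [e]
    by_cases h : j' + 1 < p
    · rw [cc_mon hbas h hk', cc_mon hbas hj' hk']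
      simp
    · have h' : j' + 1 = p := by omega
      rw [cc_mon hbas hj' hk', if_neg (by omega), sub_zero, h']
      exact cc_dvd (hXp.mul_right _) _ _

theorem shiftX0 (hbas : ∀ jk, bas jk = X ^ (jk.1 : ℕ) * Y ^ (jk.2 : ℕ)) (hXp : (p : A) ∣ X ^ p)
    (k : ℕ) (y : A) : (p : S) ∣ cc bas 0 k (y * X) := by
  apply bas_ind hbas (fun y => (p : S) ∣ cc bas 0 k (y * X))
  · simp
  · intro x y hx hy
    rw [add_mul, map_add]; exact dvd_add hx hy
  · intro c x hx
    rw [smul_mul_assoc, map_smul, smul_eq_mul]; exact Dvd.dvd.mul_left hx c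
  · intro j' k' hj' hk'
    have e : X ^ j' * Y ^ k' * X = X ^ (j'+1) * Y ^ k' := by ring
    rw [e]
    by_cases h : j' + 1 < p
    · rw [cc_mon hbas h hk']
      simp
    · have h' : j' + 1 = p := by omega
      rw [h']
      exact cc_dvd (hXp.mul_right _) _ _

theorem shiftY (hbas : ∀ jk, bas jk = X ^ (jk.1 : ℕ) * Y ^ (jk.2 : ℕ)) (hYp : (p : A) ∣ Y ^ p)
    (j : ℕ) {k : ℕ} (hk : k + 1 < p) (y : A) : (p : S) ∣ cc bas j (k+1) (y * Y) - cc bas j k y := by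
  apply bas_ind hbas (fun y => (p : S) ∣ cc bas j (k+1) (y * Y) - cc bas j k y)
  · simp
  · intro x y hx hy
    have := dvd_add hx hy
    convert this using 1
    rw [add_mul, map_add, map_add]; ring
  · intro c x hx
    have := Dvd.dvd.mul_left hx c
    convert this using 1
    rw [smul_mul_assoc, map_smul, map_smul, smul_eq_mul, smul_eq_mul]; ring
  · intro j' k' hj' hk'
    have e : X ^ j' * Y ^ k' * Y = X ^ j' * Y ^ (k'+1) := by ring
    rw [e]
    by_cases h : k' + 1 < p
    · rw [cc_mon hbas hj' h, cc_mon hbas hj' hk']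
      simp
    · have h' : k' + 1 = p := by omega
      rw [cc_mon hbas hj' hk', if_neg (by omega), sub_zero, h']
      exact cc_dvd (hYp.mul_left _) _ _

theorem shiftY0 (hbas : ∀ jk, bas jk = X ^ (jk.1 : ℕ) * Y ^ (jk.2 : ℕ)) (hYp : (p : A) ∣ Y ^ p)
    (j : ℕ) (y : A) : (p : S) ∣ cc bas j 0 (y * Y) := by
  apply bas_ind hbas (fun y => (p : S) ∣ cc bas j 0 (y * Y))
  · simp
  · intro x y hx hy
    rw [add_mul, map_add]; exact dvd_add hx hy
  · intro c x hx
    rw [smul_mul_assoc, map_smul, smul_eq_mul]; exact Dvd.dvd.mul_left hx c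
  · intro j' k' hj' hk'
    have e : X ^ j' * Y ^ k' * Y = X ^ j' * Y ^ (k'+1) := by ring
    rw [e]
    by_cases h : k' + 1 < p
    · rw [cc_mon hbas hj' h]
      simp
    · have h' : k' + 1 = p := by omega
      rw [h']
      exact cc_dvd (hYp.mul_left _) _ _

/-- the graded filtration -/
def GG (bas : Module.Basis (Fin p × Fin p) S A) (n : ℕ) (y : A) : Prop :=
  ∀ j k, j < p → k < p → j + k < n → (p : S) ∣ cc bas j k y

theorem GG_X (hbas : ∀ jk, bas jk = X ^ (jk.1 : ℕ) * Y ^ (jk.2 : ℕ)) (hXp : (p : A) ∣ X ^ p)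
    {n : ℕ} {y : A} (h : GG bas n y) : GG bas (n+1) (y * X) := by
  rintro (_ | j) k hj hk hjk
  · exact shiftX0 hbas hXp k y
  · exact (dvd_iff_dvd_of_dvd_sub (shiftX hbas hXp hj k y)).2 (h j k (by omega) hk (by omega))

theorem GG_Y (hbas : ∀ jk, bas jk = X ^ (jk.1 : ℕ) * Y ^ (jk.2 : ℕ)) (hYp : (p : A) ∣ Y ^ p)
    {n : ℕ} {y : A} (h : GG bas n y) : GG bas (n+1) (y * Y) := by
  rintro j (_ | k) hj hk hjk
  · exact shiftY0 hbas hYp j y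
  · exact (dvd_iff_dvd_of_dvd_sub (shiftY hbas hYp j hk y)).2 (h j k hj (by omega) (by omega))

theorem GG.mono {n m : ℕ} {y : A} (h : GG bas n y) (hnm : m ≤ n) : GG bas m y :=
  fun j k hj hk hjk => h j k hj hk (by omega)

theorem GG_mul (hbas : ∀ jk, bas jk = X ^ (jk.1 : ℕ) * Y ^ (jk.2 : ℕ)) (hXp : (p : A) ∣ X ^ p)
    (hYp : (p : A) ∣ Y ^ p) {n : ℕ} {y : A} (h : GG bas n y) (r : A) : GG bas n (y * r) := by
  apply bas_ind hbas (fun r => GG bas n (y * r))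
  · intro j k _ _ _; simp
  · intro u v hu hv j k hj hk hjk
    rw [mul_add, map_add]; exact dvd_add (hu j k hj hk hjk) (hv j k hj hk hjk)
  · intro c u hu j k hj hk hjk
    rw [mul_smul_comm, map_smul]; exact Dvd.dvd.mul_left (hu j k hj hk hjk) _
  · intro j k _ _
    rw [← mul_assoc]
    have h1 : ∀ j, GG bas n (y * X ^ j) := by
      intro j
      induction j with
      | zero => simpa using h
      | succ j ih => rw [pow_succ, ← mul_assoc]; exact (GG_X hbas hXp ih).mono (by omega)
    induction k with
    | zero => simpa using h1 j
    | succ k ih => rw [pow_succ, ← mul_assoc]; exact (GG_Y hbas hYp (ih (by omega))).mono (by omega)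

theorem shift_many (hbas : ∀ jk, bas jk = X ^ (jk.1 : ℕ) * Y ^ (jk.2 : ℕ)) (hXp : (p : A) ∣ X ^ p)
    (hYp : (p : A) ∣ Y ^ p) (y : A) (j k s t : ℕ) (hj : j + s < p) (hk : k + t < p) : 
    (p : S) ∣ cc bas (j+s) (k+t) (y * (X ^ s * Y ^ t)) - cc bas j k y := by
  have h1 : ∀ s, j + s < p → (p : S) ∣ cc bas (j+s) k (y * X ^ s) - cc bas j k y := by
    intro s
    induction s with
    | zero => simp
    | succ s ih =>
      intro hs
      have h2 := shiftX hbas hXp (j := j + s) hs k (y * X ^ s)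
      have := dvd_add h2 (ih (by omega))
      rw [sub_add_sub_cancel, mul_assoc, ← pow_succ] at this
      exact this
  induction t with
  | zero => simpa using h1 s hj
  | succ t ih =>
    have h2 := shiftY hbas hYp (j+s) (k := k + t) hk (y * (X ^ s * Y ^ t))
    have := dvd_add h2 (ih (by omega))
    rw [sub_add_sub_cancel, mul_assoc, mul_assoc, ← pow_succ] at this
    exact this

theorem GL_aux (hbas : ∀ jk, bas jk = X ^ (jk.1 : ℕ) * Y ^ (jk.2 : ℕ)) (hXp : (p : A) ∣ X ^ p)
    (hYp : (p : A) ∣ Y ^ p) (hpS : Prime (p : S)) {l l' : S} (hl : ¬ (p : S) ∣ l) {v r1 r2 r3 : A}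
    (hv : v = l • X + l' • Y + (r1 * X * X + r2 * X * Y + r3 * Y * Y)) {z : A}
    (hz : ∀ s t, s + t = p - 1 → (p : A) ∣ z * v * (X ^ s * Y ^ t)) : GG bas (p-1) z := by
  have main : ∀ n, n ≤ p - 1 → GG bas n z := by
    intro n
    induction n with
    | zero => intro _ j k _ _ h; omega
    | succ n ih =>
      intro hn
      have ih := ih (by omega)
      -- decreasing induction on j, i.e. induction on k
      have step : ∀ k j, j + k = n → (p : S) ∣ cc bas (j+1) k (z * Y) → (p : S) ∣ cc bas j k z := by
        intro k j hjk hY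
        have h1 := shiftX hbas hXp (j := j) (by omega) k z
        have g1 : GG bas (n+2) (z * r1 * X * X) := GG_X hbas hXp (GG_X hbas hXp (GG_mul hbas hXp hYp ih r1))
        have g2 : GG bas (n+2) (z * r2 * X * Y) := GG_Y hbas hYp (GG_X hbas hXp (GG_mul hbas hXp hYp ih r2))
        have g3 : GG bas (n+2) (z * r3 * Y * Y) := GG_Y hbas hYp (GG_Y hbas hYp (GG_mul hbas hXp hYp ih r3))
        have q1 := g1 (j+1) k (by omega) (by omega) (by omega)
        have q2 := g2 (j+1) k (by omega) (by omega) (by omega)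
        have q3 := g3 (j+1) k (by omega) (by omega) (by omega)
        have e : z * v = l • (z * X) + l' • (z * Y) + (z * r1 * X * X + z * r2 * X * Y + z * r3 * Y * Y) := by
          rw [hv, mul_add, mul_add, mul_smul_comm, mul_smul_comm]; ring
        have h3 := shift_many hbas hXp hYp (z * v) (j+1) k (p-2-j) (p-1-k) (by omega) (by omega)
        have h4 : (p : A) ∣ z * v * (X ^ (p-2-j) * Y ^ (p-1-k)) := by
          have := hz (p-2-j) (j+1) (by omega)
          have e2 : Y ^ (p-1-k) = Y ^ (j+1) * Y ^ (p-1-k-(j+1)) := by rw [← pow_add]; congr 1; omega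
          rw [e2, ← mul_assoc (X ^ _), ← mul_assoc]
          exact this.mul_right _
        have h5 := cc_dvd (bas := bas) h4 (j+1+(p-2-j)) (k+(p-1-k))
        have h6 : (p : S) ∣ cc bas (j+1) k (z * v) := (dvd_iff_dvd_of_dvd_sub h3).1 h5
        rw [e] at h6
        simp only [map_add, map_smul, smul_eq_mul] at h6
        have h7 : (p : S) ∣ l * cc bas (j+1) k (z * X) := by
          have h8 := dvd_sub h6 (dvd_add (hY.mul_left l') (dvd_add (dvd_add q1 q2) q3))
          convert h8 using 1
          ring
        exact (dvd_iff_dvd_of_dvd_sub h1).1 ((hpS.dvd_or_dvd h7).resolve_left hl)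
      have key : ∀ k j, j + k = n → (p : S) ∣ cc bas j k z := by
        intro k
        induction k with
        | zero =>
          intro j hj
          exact step 0 j hj (shiftY0 hbas hYp _ _)
        | succ k ihk => 
          intro j hj
          exact step (k+1) j hj ((dvd_iff_dvd_of_dvd_sub (shiftY hbas hYp (j+1) (k := k) (by omega) z)).2
            (ihk (j+1) (by omega)))
      intro j k hj hk hjk
      by_cases h : j + k < n
      · exact ih j k hj hk h
      · exact key k j (by omega)
  exact main _ le_rfl

theorem GLem [IsDomain S] (hbas : ∀ jk, bas jk = X ^ (jk.1 : ℕ) * Y ^ (jk.2 : ℕ)) (hXp : (p : A) ∣ X ^ p)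
    (hYp : (p : A) ∣ Y ^ p) (hpS : Prime (p : S)) (hpA : ∀ x y : A, (p : A) * x = p * y → x = y)
    {l l' : S} (hl : ¬ (p : S) ∣ l) {v r1 r2 r3 : A}
    (hv : v = l • X + l' • Y + (r1 * X * X + r2 * X * Y + r3 * Y * Y)) {E D : A}
    (hE : E = X ^ (p-1) * Y ^ (p-1) + p * D) (hD : cc bas (p-1) (p-1) D = 0)
    (hCE : ∀ s t, s + t = p - 1 → (p : A) ^ 2 ∣ E * v * (X ^ s * Y ^ t))
    {y : A} (hyX : (p : A) ∣ y * X) (hyY : (p : A) ∣ y * Y)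
    (hy : ∀ s t, s + t = p - 1 → (p : A) ^ 2 ∣ y * v * (X ^ s * Y ^ t)) : 
    ∃ (e : S) (z : A), y = e • E + p * z ∧ GG bas (p-1) z ∧ cc bas (p-1) (p-1) z = 0 := by
  have hp0 : p ≠ 0 := by rintro rfl; exact hpS.ne_zero (by simp)
  have hlast : ∀ j k, cc bas j k (X ^ (p-1) * Y ^ (p-1)) = if j = p-1 ∧ k = p-1 then 1 else 0 :=
    cc_mon hbas (by omega) (by omega)
  obtain ⟨z, hz⟩ : (p : A) ∣ y - cc bas (p-1) (p-1) y • (X ^ (p-1) * Y ^ (p-1)) := by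
    apply dvd_of_cc (bas := bas)
    intro j k hj hk
    rw [map_sub, map_smul, hlast]
    by_cases hj' : j + 1 < p
    · rw [if_neg (by omega), smul_zero, sub_zero]
      exact (dvd_iff_dvd_of_dvd_sub (shiftX hbas hXp hj' k y)).1 (cc_dvd hyX _ _)
    · by_cases hk' : k + 1 < p
      · rw [if_neg (by omega), smul_zero, sub_zero]
        exact (dvd_iff_dvd_of_dvd_sub (shiftY hbas hYp j hk' y)).1 (cc_dvd hyY _ _)
      · obtain rfl : j = p - 1 := by omega
        obtain rfl : k = p - 1 := by omega
        simp
  set e := cc bas (p-1) (p-1) y with he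
  have hyz : y = e • E + p * (z - e • D) := by
    rw [hE, smul_add, mul_sub, mul_smul_comm, ← hz]; abel
  refine ⟨e, z - e • D, hyz, ?_, ?_⟩
  · apply GL_aux hbas hXp hYp hpS hl hv
    intro s t hst
    have h1 := dvd_sub (hy s t hst) ((hCE s t hst).mul_left (algebraMap S A e))
    obtain ⟨w, hw⟩ := h1
    refine ⟨w, hpA _ _ ?_⟩
    have hyz' := hyz
    rw [Algebra.smul_def] at hyz'
    linear_combination hw - v * (X ^ s * Y ^ t) * hyz'
  · have h1 := congrArg (cc bas (p-1) (p-1)) hz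
    rw [map_sub, map_smul, hlast, cc_p] at h1
    simp only [and_self, if_true, smul_eq_mul, mul_one, ← he, sub_self] at h1
    rw [map_sub, map_smul, hD, smul_zero, sub_zero]
    exact (mul_eq_zero.1 h1.symm).resolve_left hpS.ne_zero
end CC

theorem adjoin_le_span {R K : Type*} [CommRing R] [CommRing K] [Algebra R K] {p : ℕ} (hp : 0 < p) {x y : K}
    (hx : ∃ c : ℕ → R, x ^ p = ∑ j ∈ Finset.range p, c j • x ^ j)
    (hy : ∃ c : ℕ → R, y ^ p = ∑ j ∈ Finset.range p, c j • y ^ j) :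
    ∀ z ∈ Algebra.adjoin R ({x, y} : Set K), 
      z ∈ Submodule.span R (Set.range fun jk : Fin p × Fin p => x ^ (jk.1 : ℕ) * y ^ (jk.2 : ℕ)) := by
  set N := Submodule.span R (Set.range fun jk : Fin p × Fin p => x ^ (jk.1 : ℕ) * y ^ (jk.2 : ℕ))
  have hm : ∀ j k, j < p → k < p → x ^ j * y ^ k ∈ N := fun j k hj hk =>
    Submodule.subset_span ⟨(⟨j, hj⟩, ⟨k, hk⟩), rfl⟩
  have hX : ∀ z ∈ N, z * x ∈ N := by
    intro z hz
    induction hz using Submodule.span_induction with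
    | mem z hz =>
      obtain ⟨⟨j, k⟩, rfl⟩ := hz
      have e : x ^ (j : ℕ) * y ^ (k : ℕ) * x = x ^ ((j : ℕ) + 1) * y ^ (k : ℕ) := by ring
      simp only [e]
      by_cases h : (j : ℕ) + 1 < p
      · exact hm _ _ h k.2
      · have h' : (j : ℕ) + 1 = p := by omega
        obtain ⟨c, hc⟩ := hx
        rw [h', hc, Finset.sum_mul]
        refine Submodule.sum_mem _ fun i hi => ?_
        rw [smul_mul_assoc]
        exact Submodule.smul_mem _ _ (hm _ _ (Finset.mem_range.1 hi) k.2)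
    | zero => simp
    | add a b _ _ ha hb => rw [add_mul]; exact add_mem ha hb
    | smul c a _ ha => rw [smul_mul_assoc]; exact Submodule.smul_mem _ _ ha
  have hY : ∀ z ∈ N, z * y ∈ N := by
    intro z hz
    induction hz using Submodule.span_induction with
    | mem z hz =>
      obtain ⟨⟨j, k⟩, rfl⟩ := hz
      have e : x ^ (j : ℕ) * y ^ (k : ℕ) * y = x ^ (j : ℕ) * y ^ ((k : ℕ) + 1) := by ring
      simp only [e]
      by_cases h : (k : ℕ) + 1 < p
      · exact hm _ _ j.2 h
      · have h' : (k : ℕ) + 1 = p := by omega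
        obtain ⟨c, hc⟩ := hy
        rw [h', hc, Finset.mul_sum]
        refine Submodule.sum_mem _ fun i hi => ?_
        rw [mul_smul_comm]
        exact Submodule.smul_mem _ _ (hm _ _ j.2 (Finset.mem_range.1 hi))
    | zero => simp
    | add a b _ _ ha hb => rw [add_mul]; exact add_mem ha hb
    | smul c a _ ha => rw [smul_mul_assoc]; exact Submodule.smul_mem _ _ ha
  have hmul : ∀ z ∈ Algebra.adjoin R ({x, y} : Set K), ∀ w ∈ N, w * z ∈ N := by
    intro z hz
    induction hz using Algebra.adjoin_induction with
    | mem z hz =>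
      rcases hz with rfl | rfl
      · exact hX
      · exact hY
    | algebraMap r => intro w hw; rw [mul_comm, ← Algebra.smul_def]; exact Submodule.smul_mem _ _ hw
    | add a b _ _ ha hb => intro w hw; rw [mul_add]; exact add_mem (ha w hw) (hb w hw)
    | mul a b _ _ ha hb => intro w hw; rw [← mul_assoc]; exact hb _ (ha w hw)
  intro z hz
  have h1 : (1 : K) ∈ N := by simpa using hm 0 0 hp hp
  simpa using hmul z hz 1 h1

theorem shift_pow {R K : Type*} [CommRing R] [CommRing K] [Algebra R K] {p : ℕ} (hp : 0 < p) {f h : R} {w : K}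
    (hw : w ^ p = algebraMap R K f) : 
    ∃ c : ℕ → R, (w - algebraMap R K h) ^ p = ∑ j ∈ Finset.range p, c j • (w - algebraMap R K h) ^ j := by
  have h1 := add_pow (w - algebraMap R K h) (algebraMap R K h) p
  rw [sub_add_cancel, hw, Finset.sum_range_succ] at h1
  refine ⟨fun j => (if j = 0 then f else 0) - h ^ (p - j) * (p.choose j : ℕ), ?_⟩
  simp only [sub_smul, Finset.sum_sub_distrib, ite_smul, zero_smul]
  rw [Finset.sum_ite_eq' (Finset.range p) 0]
  rw [if_pos (Finset.mem_range.2 (by omega))]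
  simp only [Algebra.smul_def, map_mul, map_pow, map_natCast]
  simp only [Nat.sub_self, pow_zero, Nat.choose_self, Nat.cast_one, mul_one] at h1 ⊢
  rw [h1]
  rw [eq_sub_iff_add_eq, add_comm]
  congr 1
  exact Finset.sum_congr rfl fun j _ => by ring

theorem hadj {R K : Type*} [CommRing R] [CommRing K] [Algebra R K] {ω μ X Y : K} (c1 c2 : R)
    (hX : ω - algebraMap R K c1 = X) (hY : μ - algebraMap R K c2 = Y) :
      Algebra.adjoin R ({ω, μ} : Set K) ≤ Algebra.adjoin R ({X, Y} : Set K) := by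
    rw [Algebra.adjoin_le_iff]
    have hXm : X ∈ Algebra.adjoin R ({X, Y} : Set K) := Algebra.subset_adjoin (Set.mem_insert _ _)
    have hYm : Y ∈ Algebra.adjoin R ({X, Y} : Set K) := Algebra.subset_adjoin (Set.mem_insert_of_mem _ rfl)
    rintro z (rfl | rfl)
    · have : z = X + algebraMap R K c1 := by rw [← hX]; ring
      rw [this]; exact add_mem hXm (Subalgebra.algebraMap_mem _ _)
    · have : z = Y + algebraMap R K c2 := by rw [← hY]; ring
      rw [this]; exact add_mem hYm (Subalgebra.algebraMap_mem _ _)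

theorem exists_basis {S L K : Type*} [CommRing S] [IsDomain S] [Field L] [Algebra S L] [IsFractionRing S L]
    [Field K] [Algebra L K] [Algebra S K] [IsScalarTower S L K] {p : ℕ} (hp : 0 < p)
    {f g h₁ h₂ : S} {ω μ : K} (hω : ω ^ p = algebraMap S K f) (hμ : μ ^ p = algebraMap S K g)
    (hKgen : Algebra.adjoin L ({ω, μ} : Set K) = ⊤)
    (hdeg : Module.finrank L K = p ^ 2) :
    (∃ bas : Module.Basis (Fin p × Fin p) S (Algebra.adjoin S ({ω, μ} : Set K)),
      ∀ jk, (bas jk : K) = (ω - algebraMap S K h₁) ^ (jk.1 : ℕ) * (μ - algebraMap S K h₂) ^ (jk.2 : ℕ)) ∧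
    ⊤ ≤ Submodule.span L (Set.range fun jk : Fin p × Fin p => 
      (ω - algebraMap S K h₁) ^ (jk.1 : ℕ) * (μ - algebraMap S K h₂) ^ (jk.2 : ℕ)) := by
  set X := ω - algebraMap S K h₁ with hX
  set Y := μ - algebraMap S K h₂ with hY
  have hspanS : ∀ z ∈ Algebra.adjoin S ({ω, μ} : Set K), 
      z ∈ Submodule.span S (Set.range fun jk : Fin p × Fin p => X ^ (jk.1 : ℕ) * Y ^ (jk.2 : ℕ)) := 
    fun z hz => adjoin_le_span hp (shift_pow hp hω) (shift_pow hp hμ) z (hadj h₁ h₂ rfl rfl hz)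
  have tm : ∀ s : S, algebraMap L K (algebraMap S L s) = algebraMap S K s := fun s => 
    (IsScalarTower.algebraMap_apply S L K s).symm
  have hspanL : ⊤ ≤ Submodule.span L (Set.range fun jk : Fin p × Fin p => X ^ (jk.1 : ℕ) * Y ^ (jk.2 : ℕ)) := by
    intro z _
    refine adjoin_le_span hp ?_ ?_ z (hadj (algebraMap S L h₁) (algebraMap S L h₂) (by rw [tm]) (by rw [tm]) (by rw [hKgen]; trivial))
    · have := shift_pow hp (R := L) (f := algebraMap S L f) (h := algebraMap S L h₁) (w := ω) (by rw [tm, hω])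
      rwa [tm] at this
    · have := shift_pow hp (R := L) (f := algebraMap S L g) (h := algebraMap S L h₂) (w := μ) (by rw [tm, hμ])
      rwa [tm] at this
  refine ⟨?_, hspanL⟩
  have hliL : LinearIndependent L (fun jk : Fin p × Fin p => X ^ (jk.1 : ℕ) * Y ^ (jk.2 : ℕ)) :=
    linearIndependent_of_top_le_span_of_card_eq_finrank hspanL (by rw [hdeg]; simp [pow_two])
  have hliS : LinearIndependent S (fun jk : Fin p × Fin p => X ^ (jk.1 : ℕ) * Y ^ (jk.2 : ℕ)) :=
    hliL.restrict_scalars (by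
      intro a b hab
      simp only [Algebra.smul_def, mul_one] at hab
      exact IsFractionRing.injective S L hab)
  let A := Algebra.adjoin S ({ω, μ} : Set K)
  have hXA : X ∈ A := sub_mem (Algebra.subset_adjoin (Set.mem_insert _ _)) (Subalgebra.algebraMap_mem _ _)
  have hYA : Y ∈ A := sub_mem (Algebra.subset_adjoin (Set.mem_insert_of_mem _ rfl)) (Subalgebra.algebraMap_mem _ _)
  let v : Fin p × Fin p → A := fun jk => ⟨X ^ (jk.1 : ℕ) * Y ^ (jk.2 : ℕ), mul_mem (pow_mem hXA _) (pow_mem hYA _)⟩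
  have hli : LinearIndependent S v := LinearIndependent.of_comp A.val.toLinearMap hliS
  refine ⟨Module.Basis.mk hli ?_, ?_⟩
  · intro z _
    have h1 := hspanS z z.2
    have h2 : (Set.range fun jk : Fin p × Fin p => X ^ (jk.1 : ℕ) * Y ^ (jk.2 : ℕ)) = A.val.toLinearMap '' (Set.range v) := by
      rw [← Set.range_comp]; rfl
    rw [h2, ← Submodule.map_span] at h1
    obtain ⟨w, hw, hwz⟩ := h1
    have : w = z := Subtype.ext hwz
    rwa [← this]
  · intro jk
    rw [Module.Basis.mk_apply]

theorem Mfree {S L K : Type*} [CommRing S] [IsDomain S] [Field L] [Algebra S L] [IsFractionRing S L]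
    [Field K] [Algebra L K] [Algebra S K] [IsScalarTower S L K] {p : ℕ} (hp3 : 3 ≤ p) (hpS : Prime (p : S))
    (hdeg : Module.finrank L K = p ^ 2) (hpK : (p : K) ≠ 0)
    {A : Subalgebra S K} {bas : Module.Basis (Fin p × Fin p) S A} {X Y : A}
    (hbas : ∀ jk, bas jk = X ^ (jk.1 : ℕ) * Y ^ (jk.2 : ℕ)) 
    (hspanL : ⊤ ≤ Submodule.span L (Set.range fun jk : Fin p × Fin p => (X : K) ^ (jk.1 : ℕ) * (Y : K) ^ (jk.2 : ℕ)))
    {x' y' : A} (hXp : X ^ p = p * x') (hYp : Y ^ p = p * y') 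
    {l l' : S} (hl : ¬ (p : S) ∣ l) {v r1 r2 r3 : A}
    (hv : v = l • X + l' • Y + (r1 * X * X + r2 * X * Y + r3 * Y * Y)) {D : A} (dn : ℕ → S)
    (hD : D = ∑ n ∈ Finset.range (p-1), dn n • (X ^ n * Y ^ (p - 2 - n)))
    (hCE : ∀ s t, s + t = p - 1 → (p : A) ^ 2 ∣ (X ^ (p-1) * Y ^ (p-1) + p * D) * v * (X ^ s * Y ^ t))
    (M : Submodule S K) (hM : ∀ x : K, x ∈ M ↔ ∃ y : A, (p : K) ^ 2 * x = y ∧ (p : A) ∣ y * X ∧ (p : A) ∣ y * Y ∧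
      ∀ s t, s + t = p - 1 → (p : A) ^ 2 ∣ y * v * (X ^ s * Y ^ t)) :
    Module.Free S M ∧ Module.Finite S M ∧ Nontrivial M := by
  set E := X ^ (p-1) * Y ^ (p-1) + p * D with hE
  have hpA : ∀ x y : A, (p : A) * x = p * y → x = y := by
    intro x y h
    apply Subtype.ext
    have := congrArg (Subtype.val) h
    push_cast at this
    exact mul_left_cancel₀ hpK this
  have hXd : (p : A) ∣ X ^ p := ⟨_, hXp⟩
  have hYd : (p : A) ∣ Y ^ p := ⟨_, hYp⟩
  have hDl : cc bas (p-1) (p-1) D = 0 := by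
    rw [hD, map_sum]
    refine Finset.sum_eq_zero fun n hn => ?_
    have := Finset.mem_range.1 hn
    rw [map_smul, cc_mon hbas (by omega) (by omega), if_neg (by omega), smul_zero]
  let nn : Fin p × Fin p → K := fun jk =>
    if (jk.1 : ℕ) + jk.2 < p - 1 then (X : K) ^ (jk.1 : ℕ) * (Y : K) ^ (jk.2 : ℕ)
    else if (jk.1 : ℕ) = p - 1 ∧ (jk.2 : ℕ) = p - 1 then (E : K) / p ^ 2
    else (X : K) ^ (jk.1 : ℕ) * (Y : K) ^ (jk.2 : ℕ) / p
  have hn1 : ∀ jk : Fin p × Fin p, (jk.1 : ℕ) + jk.2 < p - 1 → nn jk = (X : K) ^ (jk.1 : ℕ) * (Y : K) ^ (jk.2 : ℕ) := by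
    intro jk h; simp only [nn, if_pos h]
  have hn2 : ∀ jk : Fin p × Fin p, ((jk.1 : ℕ) = p - 1 ∧ (jk.2 : ℕ) = p - 1) → nn jk = (E : K) / p ^ 2 := by
    intro jk h; simp only [nn]; rw [if_neg (by omega), if_pos h]
  have hn3 : ∀ jk : Fin p × Fin p, ¬ ((jk.1 : ℕ) + jk.2 < p - 1) → ¬ ((jk.1 : ℕ) = p - 1 ∧ (jk.2 : ℕ) = p - 1) → 
      nn jk = (X : K) ^ (jk.1 : ℕ) * (Y : K) ^ (jk.2 : ℕ) / p := by
    intro jk h h'; simp only [nn]; rw [if_neg h, if_neg h']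
  have lastm : (E : K) / p ^ 2 ∈ Set.range nn := 
    ⟨(⟨p-1, by omega⟩, ⟨p-1, by omega⟩), hn2 _ ⟨rfl, rfl⟩⟩
  -- span over L
  have hLtop : ⊤ ≤ Submodule.span L (Set.range nn) := by
    refine hspanL.trans (Submodule.span_le.2 ?_)
    rintro _ ⟨jk, rfl⟩
    rw [SetLike.mem_coe]
    have hmem : ∀ jk, nn jk ∈ Submodule.span L (Set.range nn) := fun jk => Submodule.subset_span ⟨jk, rfl⟩
    have hsm : ∀ x, x ∈ Submodule.span L (Set.range nn) → (p : K) * x ∈ Submodule.span L (Set.range nn) := by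
      intro x hx
      have := Submodule.smul_mem _ (p : L) hx
      rwa [Algebra.smul_def, map_natCast] at this
    by_cases h1 : (jk.1 : ℕ) + jk.2 < p - 1
    · have := hmem jk; rwa [hn1 jk h1] at this
    · by_cases h2 : ((jk.1 : ℕ) = p - 1 ∧ (jk.2 : ℕ) = p - 1)
      · have hDm : (D : K) ∈ Submodule.span L (Set.range nn) := by
          rw [hD]
          push_cast
          refine Submodule.sum_mem _ fun n hn => ?_
          have hn' := Finset.mem_range.1 hn
          have h4 := hmem (⟨n, by omega⟩, ⟨p - 2 - n, by omega⟩)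
          rw [hn1 _ (by simp only; omega)] at h4
          have := Submodule.smul_mem _ (algebraMap S L (dn n)) h4
          rw [algebraMap_smul] at this
          exact this
        have h5 := hsm _ (hsm _ (hmem jk))
        rw [hn2 jk h2] at h5
        have := sub_mem h5 (hsm _ hDm)
        convert this using 1
        simp only [h2.1, h2.2, hE]
        push_cast
        field_simp
        ring
      · have := hsm _ (hmem jk)
        rw [hn3 jk h1 h2] at this
        convert this using 1
        field_simp
  have hliL : LinearIndependent L nn :=
    linearIndependent_of_top_le_span_of_card_eq_finrank hLtop (by rw [hdeg]; simp [pow_two])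
  have hliS : LinearIndependent S nn :=
    hliL.restrict_scalars (by
      intro a b hab
      simp only [Algebra.smul_def, mul_one] at hab
      exact IsFractionRing.injective S L hab)
  have hspan : Submodule.span S (Set.range nn) = M := by
    apply le_antisymm
    · rw [Submodule.span_le]
      rintro _ ⟨jk, rfl⟩
      rw [SetLike.mem_coe, hM]
      by_cases h1 : (jk.1 : ℕ) + jk.2 < p - 1
      · refine ⟨p ^ 2 * (X ^ (jk.1 : ℕ) * Y ^ (jk.2 : ℕ)), ?_, ?_, ?_, ?_⟩
        · rw [hn1 jk h1]; push_cast; ring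
        · exact ⟨p * (X ^ (jk.1 : ℕ) * Y ^ (jk.2 : ℕ)) * X, by ring⟩
        · exact ⟨p * (X ^ (jk.1 : ℕ) * Y ^ (jk.2 : ℕ)) * Y, by ring⟩
        · intro s t _; exact ⟨(X ^ (jk.1 : ℕ) * Y ^ (jk.2 : ℕ)) * v * (X ^ s * Y ^ t), by ring⟩
      · by_cases h2 : ((jk.1 : ℕ) = p - 1 ∧ (jk.2 : ℕ) = p - 1)
        · refine ⟨E, ?_, ?_, ?_, hCE⟩
          · rw [hn2 jk h2]; field_simp
          · have : X ^ (p-1) * X = X ^ p := by rw [← pow_succ]; congr 1; omega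
            exact ⟨x' * Y ^ (p-1) + D * X, by rw [hE]; linear_combination Y ^ (p-1) * (this + hXp)⟩
          · have : Y ^ (p-1) * Y = Y ^ p := by rw [← pow_succ]; congr 1; omega
            exact ⟨y' * X ^ (p-1) + D * Y, by rw [hE]; linear_combination X ^ (p-1) * (this + hYp)⟩
        · refine ⟨p * (X ^ (jk.1 : ℕ) * Y ^ (jk.2 : ℕ)), ?_, ?_, ?_, ?_⟩
          · rw [hn3 jk h1 h2]; push_cast; field_simp
          · exact ⟨(X ^ (jk.1 : ℕ) * Y ^ (jk.2 : ℕ)) * X, by ring⟩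
          · exact ⟨(X ^ (jk.1 : ℕ) * Y ^ (jk.2 : ℕ)) * Y, by ring⟩
          · intro s t hst
            have hs1 : (p : A) ∣ X ^ ((jk.1 : ℕ) + s + 1) * Y ^ ((jk.2 : ℕ) + t) := q_dvd_XY hXp hYp (by omega)
            have hs2 : (p : A) ∣ X ^ ((jk.1 : ℕ) + s) * Y ^ ((jk.2 : ℕ) + t + 1) := q_dvd_XY hXp hYp (by omega)
            obtain ⟨k1, hk1⟩ := hs1
            obtain ⟨k2, hk2⟩ := hs2
            refine ⟨k1 * (algebraMap S A l + r1 * X + r2 * Y) + k2 * (algebraMap S A l' + r3 * Y), ?_⟩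
            rw [hv, Algebra.smul_def, Algebra.smul_def]
            rw [pow_succ, pow_add] at hk1 hk2
            rw [pow_add] at hk1 hk2
            linear_combination p * (algebraMap S A l + r1 * X + r2 * Y) * hk1 + p * (algebraMap S A l' + r3 * Y) * hk2
    · intro x hx
      obtain ⟨y, hxy, hy1, hy2, hy3⟩ := (hM x).1 hx
      obtain ⟨e, z, hyz, hz1, hz2⟩ := GLem hbas hXd hYd hpS hpA hl hv hE hDl hCE hy1 hy2 hy3
      have hx' : x = e • ((E : K) / p ^ 2) + (z : K) / p := by
        have : (p : K) ^ 2 * x = e • (E : K) + p * z := by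
          rw [hxy, hyz]; push_cast; rfl
        rw [Algebra.smul_def] at this ⊢
        field_simp
        linear_combination this
      rw [hx']
      refine add_mem (Submodule.smul_mem _ _ (Submodule.subset_span lastm)) ?_
      have hzs : (z : K) = ∑ jk, bas.repr z jk • ((X : K) ^ (jk.1 : ℕ) * (Y : K) ^ (jk.2 : ℕ)) := by
        have := congrArg (Subtype.val) (bas.sum_repr z)
        rw [← this]
        push_cast
        refine Finset.sum_congr rfl fun jk _ => ?_
        rw [hbas]; push_cast; rfl
      rw [hzs, Finset.sum_div]
      refine Submodule.sum_mem _ fun jk _ => ?_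
      have hrep : bas.repr z jk = cc bas jk.1 jk.2 z := by
        rw [cc, dif_pos ⟨jk.1.2, jk.2.2⟩]; rfl
      have hmem : ∀ jk, nn jk ∈ Submodule.span S (Set.range nn) := fun jk => Submodule.subset_span ⟨jk, rfl⟩
      by_cases h1 : (jk.1 : ℕ) + jk.2 < p - 1
      · obtain ⟨c, hc⟩ := hz1 jk.1 jk.2 jk.1.2 jk.2.2 h1
        have := Submodule.smul_mem _ c (hmem jk)
        convert this using 1
        rw [hn1 jk h1, hrep, hc, Algebra.smul_def, Algebra.smul_def, map_mul, map_natCast]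
        field_simp
      · by_cases h2 : ((jk.1 : ℕ) = p - 1 ∧ (jk.2 : ℕ) = p - 1)
        · rw [hrep, h2.1, h2.2, hz2]; simp
        · have := Submodule.smul_mem _ (bas.repr z jk) (hmem jk)
          rw [hn3 jk h1 h2] at this
          convert this using 1
          rw [smul_div_assoc]
  rw [← hspan]
  refine ⟨Module.Free.of_basis (Module.Basis.span hliS), Module.Finite.of_basis (Module.Basis.span hliS), ?_⟩
  refine ⟨⟨⟨nn (⟨p-1, by omega⟩, ⟨p-1, by omega⟩), Submodule.subset_span ⟨_, rfl⟩⟩, 0, ?_⟩⟩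
  intro h
  exact hliS.ne_zero _ (congrArg Subtype.val h)

theorem span3_pow_le {A : Type*} [CommRing A] {q X Y : A} (n : ℕ) : ∀ (J : Ideal A), q ∈ J →
    (∀ s t, s + t = n → X ^ s * Y ^ t ∈ J) → Ideal.span {q, X, Y} ^ n ≤ J := by
  induction n with
  | zero =>
    intro J _ h
    have := h 0 0 rfl
    simp only [pow_zero, mul_one] at this
    rw [(Ideal.eq_top_iff_one J).2 this]; exact le_top
  | succ n ih =>
    intro J hq h
    let J' : Ideal A := Submodule.comap (LinearMap.mulLeft A X) J ⊓ Submodule.comap (LinearMap.mulLeft A Y) J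
    have hJ' : ∀ w, w ∈ J' ↔ X * w ∈ J ∧ Y * w ∈ J := fun w => Iff.rfl
    have h1 := ih J' ((hJ' _).2 ⟨J.mul_mem_left _ hq, J.mul_mem_left _ hq⟩) (by
      intro s t hst
      rw [hJ']
      refine ⟨?_, ?_⟩
      · have := h (s+1) t (by omega)
        rwa [pow_succ', mul_assoc] at this
      · have := h s (t+1) (by omega)
        rwa [pow_succ', mul_left_comm] at this)
    rw [pow_succ', Ideal.mul_le]
    intro r hr w hw
    obtain ⟨h2, h3⟩ := (hJ' _).1 (h1 hw)
    obtain ⟨a, z, hz, rfl⟩ := Ideal.mem_span_insert.1 hr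
    obtain ⟨b, c, rfl⟩ := Ideal.mem_span_pair.1 hz
    have : (a * q + (b * X + c * Y)) * w = (a * w) * q + (b * (X * w) + c * (Y * w)) := by ring
    rw [this]
    exact J.add_mem (J.mul_mem_left _ hq) (J.add_mem (J.mul_mem_left _ h2) (J.mul_mem_left _ h3))

theorem Mchar {S K : Type*} [CommRing S] [Field K] [Algebra S K] {p : ℕ} (hp3 : 3 ≤ p) (hpK : (p : K) ≠ 0)
    {A : Subalgebra S K} {X Y v c1 c2 : A} (hv : v = c1 * X + c2 * Y) (x : K) :
    x ∈ colonSubmodule S K A (Subtype.val '' (((Ideal.span {(p : A)} + Ideal.span {v} * Ideal.span {(p : A), X, Y} ^ (p - 2)) *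
      Ideal.span {(p : A), X, Y} : Ideal A) : Set A)) ↔ ∃ y : A, (p : K) ^ 2 * x = y ∧ (p : A) ∣ y * X ∧ (p : A) ∣ y * Y ∧
      ∀ s t, s + t = p - 1 → (p : A) ^ 2 ∣ y * v * (X ^ s * Y ^ t) := by
  set P : Ideal A := Ideal.span {(p : A), X, Y} with hP
  have hpP : (p : A) ∈ P := Ideal.subset_span (by simp)
  have hXP : X ∈ P := Ideal.subset_span (by simp)
  have hYP : Y ∈ P := Ideal.subset_span (by simp)
  have hIP : (Ideal.span {(p : A)} + Ideal.span {v} * P ^ (p - 2)) * P = Ideal.span {(p : A)} * P + Ideal.span {v} * P ^ (p-1) := by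
    rw [add_mul, mul_assoc, ← pow_succ]; congr 3; omega
  rw [hIP]
  constructor
  · intro hx
    have hx' : ∀ z ∈ Ideal.span {(p : A)} * P + Ideal.span {v} * P ^ (p-1), ∃ w : A, x * z = w := 
      fun z hz => ⟨⟨_, hx z ⟨z, hz, rfl⟩⟩, rfl⟩
    have hx1 : ∀ z ∈ P, ∃ w : A, x * (p * z) = w := fun z hz => by
      obtain ⟨w, hw⟩ := hx' (p * z) (Ideal.mem_sup_left (Ideal.mul_mem_mul (Ideal.mem_span_singleton_self _) hz))
      exact ⟨w, by rw [← hw]; push_cast; rfl⟩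
    obtain ⟨y, hy⟩ := hx1 _ hpP
    push_cast at hy
    refine ⟨y, by rw [← hy]; ring, ?_, ?_, ?_⟩
    · obtain ⟨w, hw⟩ := hx1 _ hXP
      refine ⟨w, Subtype.ext ?_⟩
      push_cast
      rw [← hw, ← hy]; ring
    · obtain ⟨w, hw⟩ := hx1 _ hYP
      refine ⟨w, Subtype.ext ?_⟩
      push_cast
      rw [← hw, ← hy]; ring
    · intro s t hst
      obtain ⟨w, hw⟩ := hx' (v * (X ^ s * Y ^ t)) (Ideal.mem_sup_right (Ideal.mul_mem_mul (Ideal.mem_span_singleton_self _) 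
        (by rw [← hst, pow_add]; exact Ideal.mul_mem_mul (Ideal.pow_mem_pow hXP _) (Ideal.pow_mem_pow hYP _))))
      refine ⟨w, Subtype.ext ?_⟩
      push_cast at hw ⊢
      rw [← hw, ← hy]; ring
  · rintro ⟨y, hy, hyX, hyY, hyv⟩
    let J : Ideal A := Submodule.comap (LinearMap.mulLeft A y) (Ideal.span {(p : A) ^ 2})
    have hJ : ∀ w, w ∈ J ↔ (p : A) ^ 2 ∣ y * w := fun w => by
      rw [← Ideal.mem_span_singleton]; rfl
    have key : Ideal.span {(p : A)} * P + Ideal.span {v} * P ^ (p-1) ≤ J := by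
      refine sup_le ?_ ?_
      · rw [hP, Ideal.span_mul_span', Ideal.span_le]
        obtain ⟨w1, hw1⟩ := hyX
        obtain ⟨w2, hw2⟩ := hyY
        rintro _ ⟨_, rfl, z, hz, rfl⟩
        rw [SetLike.mem_coe, hJ]
        rcases hz with rfl | rfl | rfl
        · exact ⟨y, by simp only; ring⟩
        · exact ⟨w1, by simp only; linear_combination (p : A) * hw1⟩
        · exact ⟨w2, by simp only; linear_combination (p : A) * hw2⟩
      · rw [Ideal.mul_le]
        intro r hr w hw
        obtain ⟨c, rfl⟩ := Ideal.mem_span_singleton'.1 hr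
        let J' : Ideal A := Submodule.comap (LinearMap.mulLeft A v) J
        have hJ' : ∀ w, w ∈ J' ↔ v * w ∈ J := fun w => Iff.rfl
        have := span3_pow_le (p-1) J' (by
          rw [hJ', hJ, hv]
          obtain ⟨w1, hw1⟩ := hyX
          obtain ⟨w2, hw2⟩ := hyY
          exact ⟨c1 * w1 + c2 * w2, by linear_combination (p : A) * c1 * hw1 + (p : A) * c2 * hw2⟩) (by
          intro s t hst
          rw [hJ', hJ, ← mul_assoc]
          exact hyv s t hst) hw
        rw [mul_assoc]
        exact J.mul_mem_left _ ((hJ' _).1 this)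
    rintro _ ⟨z, hz, rfl⟩
    obtain ⟨w, hw⟩ := (hJ _).1 (key hz)
    have : x * z = w := by
      have := congrArg Subtype.val hw
      push_cast at this
      rw [← hy] at this
      apply mul_left_cancel₀ (pow_ne_zero 2 hpK)
      rw [← this]; ring
    rw [this]
    exact w.2

theorem exists_pow_expand {A : Type*} [CommRing A] (Y h : A) (i : ℕ) (hi : 1 ≤ i) :
    ∃ r, (Y + h) ^ i = h ^ i + i * h ^ (i-1) * Y + Y ^ 2 * r := by
  obtain ⟨n, rfl⟩ : ∃ n, i = n + 1 := ⟨i - 1, by omega⟩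
  clear hi
  induction n with
  | zero => exact ⟨0, by simp; ring⟩
  | succ n ih =>
    obtain ⟨r, hr⟩ := ih
    refine ⟨(n + 1) * h ^ n + r * (Y + h), ?_⟩
    rw [pow_succ, hr]
    simp only [Nat.add_sub_cancel]
    push_cast
    ring

theorem exists_Xp {A : Type*} [CommRing A] {p : ℕ} (hp : p.Prime) {w h a : A} (hw : w ^ p = h ^ p + a * p) :
    ∃ α, (w - h) ^ p = p * (a + (w - h) * α) := by
  obtain ⟨r, hr⟩ := exists_add_pow_prime_eq hp (w - h) h
  refine ⟨- (h * r), ?_⟩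
  rw [sub_add_cancel, hw] at hr
  linear_combination -hr

theorem fermat_S {S : Type*} [CommRing S] {p : ℕ} (hp : p.Prime) {i : ℕ} (hi1 : 1 ≤ i) (hi2 : i ≤ p - 1) :
    ∃ m : S, (i : S) ^ (p-1) = 1 + p * m := by
  have hc : IsCoprime (i : ℤ) p := by
    rw [Nat.isCoprime_iff_coprime]
    exact (Nat.coprime_of_lt_prime (by omega) (by have := hp.pos; omega) hp).symm
  have := (Int.ModEq.pow_card_sub_one_eq_one hp hc).symm.dvd
  obtain ⟨m, hm⟩ := this
  refine ⟨(m : S), ?_⟩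
  have := congrArg (fun z : ℤ => (z : S)) hm
  push_cast at this
  linear_combination this

theorem part2
    {S : Type*} [CommRing S] [IsDomain S] [IsNoetherianRing S] [IsLocalRing S]
    {L : Type*} [Field L] [CharZero L] [Algebra S L] [IsFractionRing S L]
    {K : Type*} [Field K] [Algebra L K] [Algebra S K] [IsScalarTower S L K]
    {p : ℕ} (hp : p.Prime) (hp3 : 3 ≤ p) (hpS : Prime ((p : ℕ) : S))
    (hreg : ∃ s : Finset S, Ideal.span (s : Set S) = IsLocalRing.maximalIdeal S ∧
      (s.card : WithBot ℕ∞) = ringKrullDim S)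
    {f g h₁ h₂ a b : S} (hf : f = h₁ ^ p + a * (p : S)) (hg : g = h₂ ^ p + b * (p : S))
    {ω μ : K} (hω : ω ^ p = algebraMap S K f) (hμ : μ ^ p = algebraMap S K g)
    (hKgen : Algebra.adjoin L ({ω, μ} : Set K) = ⊤)
    (hdeg : Module.finrank L K = p ^ 2)
    (i : ℕ) (hi1 : 1 ≤ i) (hi2 : i ≤ p - 1)
    (hh2 : ¬ (p : S) ∣ h₂)
    (hab : ∃ d e1 e2, a = - (i : S) * d * h₁ ^ p + p * e1 ∧ b = d * h₂ ^ p + p * e2) :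
    (modDepth S (colonSubmodule S K (Algebra.adjoin S ({ω, μ} : Set K))
        (Subtype.val '' (((Ideal.span {(p : Algebra.adjoin S ({ω, μ} : Set K))} + Ideal.span {omegaA ω μ * muA ω μ ^ i - algebraMap S _ (h₁ * h₂ ^ i)} * Pid p ω μ h₁ h₂ ^ (p - 2)) * Pid p ω μ h₁ h₂ : Ideal (Algebra.adjoin S ({ω, μ} : Set K))) : Set (Algebra.adjoin S ({ω, μ} : Set K))))) :
      WithBot ℕ∞) = ringKrullDim S := by
  obtain ⟨d, e1, e2, ha, hb⟩ := hab
  set A := Algebra.adjoin S ({ω, μ} : Set K) with hA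
  have hpK : (p : K) ≠ 0 := by
    rw [← map_natCast (algebraMap L K)]
    exact (map_ne_zero _).2 (Nat.cast_ne_zero.2 hp.ne_zero)
  obtain ⟨⟨bas, hbas⟩, hspanL⟩ := exists_basis (h₁ := h₁) (h₂ := h₂) hp.pos hω hμ hKgen hdeg
  have hwA : (omegaA ω μ : A) ^ p = algebraMap S A h₁ ^ p + algebraMap S A a * p := by
    apply Subtype.ext
    have : ((omegaA ω μ : A) : K) = ω := rfl
    push_cast
    rw [this, hω, hf]; simp
  have hmA : (muA ω μ : A) ^ p = algebraMap S A h₂ ^ p + algebraMap S A b * p := by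
    apply Subtype.ext
    have : ((muA ω μ : A) : K) = μ := rfl
    push_cast
    rw [this, hμ, hg]; simp
  set X : A := omegaA ω μ - algebraMap S A h₁ with hX
  set Y : A := muA ω μ - algebraMap S A h₂ with hY
  have hXK : (X : K) = ω - algebraMap S K h₁ := rfl
  have hYK : (Y : K) = μ - algebraMap S K h₂ := rfl
  obtain ⟨α, hα⟩ := exists_Xp hp hwA
  obtain ⟨β, hβ⟩ := exists_Xp hp hmA
  rw [← hX] at hα
  rw [← hY] at hβ
  obtain ⟨r, hr⟩ := exists_pow_expand Y (algebraMap S A h₂) i hi1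
  set v : A := omegaA ω μ * muA ω μ ^ i - algebraMap S A (h₁ * h₂ ^ i) with hvdef
  have hv0 : v = (algebraMap S A h₂) ^ (i-1) * (algebraMap S A h₂ * X + i * algebraMap S A h₁ * Y) +
      (X ^ 2 * 0 + X * Y * (i * algebraMap S A h₂ ^ (i-1)) + Y ^ 2 * (r * (X + algebraMap S A h₁))) := by
    have e1 : muA ω μ = Y + algebraMap S A h₂ := by rw [hY]; ring
    have e2 : omegaA ω μ = X + algebraMap S A h₁ := by rw [hX]; ring
    have e3 : (algebraMap S A h₂) ^ i = (algebraMap S A h₂) ^ (i-1) * algebraMap S A h₂ := by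
      rw [← pow_succ]; congr 1; omega
    rw [hvdef, e1, hr, e2, map_mul, map_pow, e3]
    ring
  obtain ⟨m, hm⟩ := fermat_S (S := S) hp hi1 hi2
  have hodd : Even (p - 1) := by
    rcases hp.eq_two_or_odd' with h | h
    · omega
    · exact Nat.Odd.sub_odd h odd_one
  have hCE := C_E0 hp3 hodd (q := (p : A)) (d := algebraMap S A d) (ii := (i : A)) (m := algebraMap S A m)
    (e1 := algebraMap S A e1) (e2 := algebraMap S A e2) hα hβ (by rw [ha]; simp) (by rw [hb]; simp)
    (by have := congrArg (algebraMap S A) hm; simpa using this) hv0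
  simp only at hCE
  have hfree := Mfree (K := K) (L := L) (A := A) (bas := bas) (X := X) (Y := Y) (l := h₂ ^ i) (l' := i * h₁ * h₂ ^ (i-1))
    (v := v) (r1 := 0) (r2 := i * algebraMap S A h₂ ^ (i-1)) (r3 := r * (X + algebraMap S A h₁))
    hp3 hpS hdeg hpK
    (fun jk => Subtype.ext (by rw [hbas]; push_cast; rw [hXK, hYK])) hspanL hα hβ
    (fun h => hh2 (hpS.dvd_of_dvd_pow h)) (by
      rw [hv0, Algebra.smul_def, Algebra.smul_def]
      have e3 : (algebraMap S A h₂) ^ i = (algebraMap S A h₂) ^ (i-1) * algebraMap S A h₂ := by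
        rw [← pow_succ]; congr 1; omega
      simp only [map_mul, map_pow, map_natCast, e3]
      ring)
    (fun n => i * d * h₁ * h₂ * ((-h₂) ^ n * (i * h₁) ^ (p - 2 - n)))
    (by 
      refine Finset.sum_congr rfl fun n _ => ?_
      rw [Algebra.smul_def]
      simp only [map_mul, map_pow, map_natCast, map_neg]) hCE _
    (fun x => Mchar hp3 hpK (c1 := (algebraMap S A h₂) ^ (i-1) * algebraMap S A h₂) 
      (c2 := (algebraMap S A h₂) ^ (i-1) * (i * algebraMap S A h₁) + X * (i * algebraMap S A h₂ ^ (i-1)) + 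
        Y * (r * (X + algebraMap S A h₁))) (by rw [hv0]; ring) x)
  obtain ⟨h1, h2, h3⟩ := hfree
  have hP : Pid p ω μ h₁ h₂ = Ideal.span {(p : A), X, Y} := rfl
  rw [hP]
  exact depth_free hreg _

def Nid {B K : Type*} [CommRing B] [CommRing K] [Algebra B K] (C : Subalgebra B K) (u v : K) : Submodule B K where
  carrier := {x | ∃ a ∈ C, ∃ b ∈ C, x = u * a + v * b}
  add_mem' := by
    rintro _ _ ⟨a, ha, b, hb, rfl⟩ ⟨a', ha', b', hb', rfl⟩
    exact ⟨a + a', add_mem ha ha', b + b', add_mem hb hb', by ring⟩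
  zero_mem' := ⟨0, zero_mem _, 0, zero_mem _, by ring⟩
  smul_mem' := by
    rintro c _ ⟨a, ha, b, hb, rfl⟩
    exact ⟨c • a, C.smul_mem ha c, c • b, C.smul_mem hb c, by rw [smul_add, mul_smul_comm, mul_smul_comm]⟩

theorem Nid_mem {B K : Type*} [CommRing B] [CommRing K] [Algebra B K] {C : Subalgebra B K} {u v : K} {x : K} :
    x ∈ Nid C u v ↔ ∃ a ∈ C, ∃ b ∈ C, x = u * a + v * b := Iff.rfl

theorem Nid_mul {B K : Type*} [CommRing B] [CommRing K] [Algebra B K] {C : Subalgebra B K} {u v : K} {c x : K} 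
    (hc : c ∈ C) (hx : x ∈ Nid C u v) : c * x ∈ Nid C u v := by
  obtain ⟨a, ha, b, hb, rfl⟩ := hx
  exact ⟨c * a, mul_mem hc ha, c * b, mul_mem hc hb, by ring⟩

theorem PhiLem {B K : Type*} [CommRing B] [CommRing K] [Algebra B K] {π : B} (hπ : Prime π)
    {N : Submodule B K} {t z ρ : K} {c : B} (hz : ∀ x ∈ N, z * x ∈ N) (hzt : z * t - c • t ∈ N)
    (hN : ∀ c : B, c • t ∈ N → π ∣ c) (hρ : IsIntegral B ρ) (n : ℕ) (hn : z ^ n = π • ρ) : π ∣ c := by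
  have h1 : ∀ k : ℕ, z ^ k * t - c ^ k • t ∈ N := by
    intro k
    induction k with
    | zero => simp
    | succ k ih =>
      have e : z ^ (k+1) * t - c ^ (k+1) • t = z * (z ^ k * t - c ^ k • t) + c ^ k • (z * t - c • t) := by
        simp only [Algebra.smul_def, map_pow]; ring
      rw [e]
      exact add_mem (hz _ ih) (N.smul_mem _ hzt)
  obtain ⟨P, hP, hP0⟩ := hρ
  have h2 : Polynomial.aeval (z ^ n) (Polynomial.scaleRoots P π) = 0 := by
    rw [hn, Algebra.smul_def]
    exact Polynomial.scaleRoots_aeval_eq_zero hP0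
  set Q := Polynomial.scaleRoots P π with hQ
  have h3 : ∀ Q : Polynomial B, (Polynomial.aeval (z ^ n) Q) * t - (Q.eval (c ^ n)) • t ∈ N := by
    intro Q
    rw [Polynomial.aeval_eq_sum_range, Polynomial.eval_eq_sum_range, Finset.sum_mul, Finset.sum_smul, ← Finset.sum_sub_distrib]
    refine Submodule.sum_mem _ fun k _ => ?_
    have := N.smul_mem (Q.coeff k) (h1 (n * k))
    convert this using 1
    simp only [Algebra.smul_def, map_pow, map_mul]; ring
  have h4 := h3 Q
  rw [h2, zero_mul, zero_sub] at h4
  have h5 := hN _ ((Submodule.neg_mem_iff _).1 h4)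
  have h6 : Q.eval (c ^ n) = (∑ k ∈ Finset.range P.natDegree, Q.coeff k * (c ^ n) ^ k) + (c ^ n) ^ P.natDegree := by
    rw [Polynomial.eval_eq_sum_range, hQ, Polynomial.natDegree_scaleRoots, Finset.sum_range_succ]
    rw [Polynomial.coeff_scaleRoots_natDegree, hP.leadingCoeff, one_mul]
  rw [h6] at h5
  have h7 : π ∣ ∑ k ∈ Finset.range P.natDegree, Q.coeff k * (c ^ n) ^ k := by
    refine Finset.dvd_sum fun k hk => ?_
    rw [hQ, Polynomial.coeff_scaleRoots]
    have := Finset.mem_range.1 hk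
    exact Dvd.dvd.mul_right (Dvd.dvd.mul_left (dvd_pow_self _ (by omega)) _) _
  have h8 := (dvd_add_right h7).1 h5
  exact hπ.dvd_of_dvd_pow (hπ.dvd_of_dvd_pow h8)

theorem L1F2 {B K : Type*} [CommRing B] [Field K] [Algebra B K] {p : ℕ} {π : B} 
    {C : Subalgebra B K} {s : K} 
    (hF1 : ∀ x ∈ C, ∃ c : ℕ → B, x = ∑ j ∈ Finset.range p, c j • s ^ j)
    (hF2 : ∀ c : ℕ → B, ∑ j ∈ Finset.range p, c j • s ^ j = 0 → ∀ j < p, c j = 0)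
    (n k : ℕ) (hnk : n + k ≤ p) (c : ℕ → B) (x : K) (hx : x ∈ C) 
    (h : ∑ j ∈ Finset.range n, c j • s ^ (j + k) = algebraMap B K π * x) : ∀ j < n, π ∣ c j := by
  obtain ⟨d, hd⟩ := hF1 x hx
  have e1 : ∑ j ∈ Finset.range n, c j • s ^ (j + k) = 
      ∑ m ∈ Finset.range p, (if m ∈ Finset.Ico k (n + k) then c (m - k) else 0) • s ^ m := by
    have := Finset.sum_Ico_add' (fun m => c (m - k) • s ^ m) 0 n k
    simp only [Nat.add_sub_cancel, zero_add] at this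
    rw [Finset.range_eq_Ico, this]
    simp only [ite_smul, zero_smul]
    rw [Finset.sum_ite_mem, Finset.inter_eq_right.2]
    intro m hm
    simp only [Finset.mem_Ico, Finset.mem_range] at hm ⊢
    omega
  rw [e1, hd, Finset.mul_sum] at h
  have h2 := hF2 (fun m => (if m ∈ Finset.Ico k (n + k) then c (m - k) else 0) - π * d m) (by
    simp only [sub_smul, Finset.sum_sub_distrib]
    rw [sub_eq_zero, h]
    refine Finset.sum_congr rfl fun m _ => ?_
    simp only [Algebra.smul_def, map_mul]; ring)
  intro j hj
  have h3 := h2 (j + k) (by omega)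
  rw [if_pos (by simp; omega), Nat.add_sub_cancel] at h3
  exact ⟨_, sub_eq_zero.1 h3⟩

theorem L1 {B K : Type*} [CommRing B] [Field K] [Algebra B K] {p : ℕ} (hp3 : 3 ≤ p) {π τ : B} 
    (hπ : Prime π) (hτ : ¬ π ∣ τ) {C : Subalgebra B K} {s w w' : K} (hs : s ∈ C) (hw : w ∈ C) (hw' : w' ∈ C)
    (hF1 : ∀ x ∈ C, ∃ c : ℕ → B, x = ∑ j ∈ Finset.range p, c j • s ^ j)
    (hF2 : ∀ c : ℕ → B, ∑ j ∈ Finset.range p, c j • s ^ j = 0 → ∀ j < p, c j = 0)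
    (hR : s ^ p = algebraMap B K π * (algebraMap B K τ * s + algebraMap B K π * (s * w) + algebraMap B K π ^ 2 * w'))
    {r : K} (hr : IsIntegral B r) (hst : ∀ x ∈ Nid C (algebraMap B K π) s, (algebraMap B K π * r) * x ∈ Nid C (algebraMap B K π) s) :
    ∀ x ∈ Nid C (algebraMap B K π) s, r * x ∈ Nid C (algebraMap B K π) s := by
  have hinj : ∀ b : B, algebraMap B K b = 0 → b = 0 := by
    intro b hb
    have := hF2 (fun j => if j = 0 then b else 0) (by
      refine Finset.sum_eq_zero fun j _ => ?_
      split_ifs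
      · rw [Algebra.smul_def, hb, zero_mul]
      · simp) 0 (by omega)
    simpa using this
  set P := algebraMap B K π with hPdef
  have hP0 : P ≠ 0 := fun h => hπ.ne_zero (hinj _ h)
  have hPC : P ∈ C := C.algebraMap_mem π
  have hBC : ∀ b : B, algebraMap B K b ∈ C := C.algebraMap_mem
  have hsC : ∀ k, s ^ k ∈ C := fun k => pow_mem hs k
  obtain ⟨W, hWdef⟩ : ∃ W, W = algebraMap B K τ * s + P * (s * w) + P ^ 2 * w' := ⟨_, rfl⟩
  rw [← hWdef] at hR
  have hWC : W ∈ C := by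
    rw [hWdef]
    exact add_mem (add_mem (mul_mem (hBC _) hs) (mul_mem hPC (mul_mem hs hw))) (mul_mem (pow_mem hPC 2) hw')
  obtain ⟨e, he⟩ : ∃ e, P * e = s ^ (p-1) := ⟨s ^ (p-1) / P, by field_simp⟩
  have hes : e * s = W := by
    apply mul_left_cancel₀ hP0
    rw [← hR, ← mul_assoc, he, ← pow_succ]; congr 1; omega
  have hCint : ∀ x ∈ C, IsIntegral B x := by
    classical
    intro x hx
    refine IsIntegral.of_mem_of_fg C ?_ x hx
    refine ⟨(Finset.range p).image (fun j => s ^ j), le_antisymm ?_ ?_⟩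
    · rw [Submodule.span_le]
      intro y hy
      simp only [Finset.coe_image, Set.mem_image] at hy
      obtain ⟨j, _, rfl⟩ := hy
      exact hsC j
    · intro y hy
      obtain ⟨c, rfl⟩ := hF1 y hy
      refine Submodule.sum_mem _ fun j hj => Submodule.smul_mem _ _ (Submodule.subset_span ?_)
      exact Finset.mem_coe.2 (Finset.mem_image_of_mem _ hj)
  -- splitting of elements
  have hsplit : ∀ x ∈ C, ∃ (a : ℕ → B) (b : B), x = ∑ j ∈ Finset.range (p-1), a j • s ^ j + algebraMap B K b * s ^ (p-1) := by
    intro x hx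
    obtain ⟨c, hc⟩ := hF1 x hx
    refine ⟨c, c (p-1), ?_⟩
    rw [hc]
    obtain ⟨n, rfl⟩ : ∃ n, p = n + 1 := ⟨p - 1, by omega⟩
    rw [Finset.sum_range_succ, Algebra.smul_def]; rfl
  have hF2' := L1F2 (π := π) hF1 hF2
  have htop : ∀ (c : B) (x : K), x ∈ C → algebraMap B K c * s ^ (p-1) = P * x → π ∣ c := by
    intro c x hx h
    exact hF2' 1 (p-1) (by omega) (fun _ => c) x hx (by simpa [Algebra.smul_def] using h) 0 (by omega)
  have hs1 : s * s ^ (p-1) = P * W := by rw [← hR, ← pow_succ']; congr 1; omega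
  have hs2 : s ^ 2 * s ^ (p-2) = P * W := by rw [← hR, ← pow_add]; congr 1; omega
  -- N1
  have hN1 : ∀ c : B, c • P ∈ Nid C (P ^ 2) s → π ∣ c := by
    rintro c ⟨x, hx, y, hy, h⟩
    rw [Algebra.smul_def] at h
    obtain ⟨a, b, hab⟩ := hsplit y hy
    have h1 := hF2' (p-1) 1 (by omega) a (algebraMap B K c - P * x - algebraMap B K b * W) 
      (sub_mem (sub_mem (hBC _) (mul_mem hPC hx)) (mul_mem (hBC _) hWC)) (by
        have e1 : ∑ j ∈ Finset.range (p-1), a j • s ^ (j + 1) = s * ∑ j ∈ Finset.range (p-1), a j • s ^ j := by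
          rw [Finset.mul_sum]
          refine Finset.sum_congr rfl fun j _ => ?_
          simp only [Algebra.smul_def]; ring
        rw [e1]
        rw [hab] at h
        linear_combination -h - algebraMap B K b * hs1)
    choose! d hd using h1
    have e2 : ∑ j ∈ Finset.range (p-1), a j • s ^ j = P * ∑ j ∈ Finset.range (p-1), d j • s ^ j := by
      rw [Finset.mul_sum]
      refine Finset.sum_congr rfl fun j hj => ?_
      rw [hd j (Finset.mem_range.1 hj)]
      simp only [Algebra.smul_def, map_mul]; ring
    set y1 := ∑ j ∈ Finset.range (p-1), d j • s ^ j with hy1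
    have hy1C : y1 ∈ C := Subalgebra.sum_mem _ fun j _ => C.smul_mem (hsC j) _
    have h2 : algebraMap B K c = P * x + s * y1 + algebraMap B K b * W := by
      apply mul_left_cancel₀ hP0
      rw [hab, e2] at h
      linear_combination h + algebraMap B K b * hs1
    refine htop c (x * s ^ (p-1) + W * y1 + algebraMap B K b * (algebraMap B K τ * W + P * W * w + P * w' * s ^ (p-1))) ?_ ?_
    · exact add_mem (add_mem (mul_mem hx (hsC _)) (mul_mem hWC hy1C)) (mul_mem (hBC _) 
        (add_mem (add_mem (mul_mem (hBC _) hWC) (mul_mem (mul_mem hPC hWC) hw)) (mul_mem (mul_mem hPC hw') (hsC _))))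
    · rw [h2]
      have : W * s ^ (p-1) = P * (algebraMap B K τ * W + P * W * w + P * w' * s ^ (p-1)) := by
        nth_rewrite 1 [hWdef]
        linear_combination (algebraMap B K τ + P * w) * hs1
      linear_combination y1 * hs1 + algebraMap B K b * this
  have hN2 : ∀ c : B, c • s ∈ Nid C P (s ^ 2) → π ∣ c := by
    rintro c ⟨x, hx, y, hy, h⟩
    rw [Algebra.smul_def] at h
    refine htop c (x * s ^ (p-2) + W * y) (add_mem (mul_mem hx (hsC _)) (mul_mem hWC hy)) ?_
    have : s ^ (p-1) = s * s ^ (p-2) := by rw [← pow_succ']; congr 1; omega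
    rw [this]
    linear_combination s ^ (p-2) * h + y * hs2
  -- stability under e
  have hp1 : s ^ (p-1) = s ^ 2 * s ^ (p-3) := by rw [← pow_add]; congr 1; omega
  have hp1' : s ^ (p-1) = s * s ^ (p-2) := by rw [← pow_succ']; congr 1; omega
  have heJ : ∀ x ∈ Nid C P s, e * x ∈ Nid C P s := by
    rintro _ ⟨x, hx, y, hy, rfl⟩
    refine ⟨(s * w + P * w') * y, mul_mem (add_mem (mul_mem hs hw) (mul_mem hPC hw')) hy, 
      s ^ (p-2) * x + algebraMap B K τ * y, add_mem (mul_mem (hsC _) hx) (mul_mem (hBC _) hy), ?_⟩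
    linear_combination x * he + y * (hes + hWdef) + x * hp1'
  have heN1 : ∀ x ∈ Nid C (P ^ 2) s, e * x ∈ Nid C (P ^ 2) s := by
    rintro _ ⟨x, hx, y, hy, rfl⟩
    refine ⟨w' * y, mul_mem hw' hy, 
      P * s ^ (p-2) * x + (algebraMap B K τ + P * w) * y, add_mem (mul_mem (mul_mem hPC (hsC _)) hx) 
        (mul_mem (add_mem (hBC _) (mul_mem hPC hw)) hy), ?_⟩
    linear_combination P * x * he + y * (hes + hWdef) + P * x * hp1'
  have heN2 : ∀ x ∈ Nid C P (s ^ 2), e * x ∈ Nid C P (s ^ 2) := by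
    rintro _ ⟨x, hx, y, hy, rfl⟩
    refine ⟨P * w' * s * y, mul_mem (mul_mem (mul_mem hPC hw') hs) hy, 
      s ^ (p-3) * x + (algebraMap B K τ + P * w) * y, add_mem (mul_mem (hsC _) hx) 
        (mul_mem (add_mem (hBC _) (mul_mem hPC hw)) hy), ?_⟩
    linear_combination x * he + s * y * (hes + hWdef) + x * hp1
  -- y = P r
  obtain ⟨y, hydef⟩ : ∃ y, y = P * r := ⟨_, rfl⟩
  rw [← hydef] at hst
  have hyform : ∃ (a : ℕ → B) (b : B), y = ∑ j ∈ Finset.range (p-1), a j • s ^ j + algebraMap B K b * e := by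
    obtain ⟨x1, hx1, x2, hx2, h1⟩ := hst P ⟨1, one_mem _, 0, zero_mem _, by ring⟩
    obtain ⟨x3, hx3, x4, hx4, h2⟩ := hst s ⟨0, zero_mem _, 1, one_mem _, by ring⟩
    obtain ⟨c, hc⟩ := hF1 x2 hx2
    have e0 : x2 = ∑ j ∈ Finset.range (p-2), c j • s ^ j + algebraMap B K (c (p-2)) * s ^ (p-2) + algebraMap B K (c (p-1)) * s ^ (p-1) := by
      rw [hc]
      obtain ⟨n, rfl⟩ : ∃ n, p = n + 2 := ⟨p - 2, by omega⟩
      rw [Finset.sum_range_succ, Finset.sum_range_succ, Algebra.smul_def, Algebra.smul_def]; rfl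
    have h3 := hF2' (p-2) 2 (by omega) c (P * x3 + s * x4 - s * x1 - algebraMap B K (c (p-2)) * W - algebraMap B K (c (p-1)) * s * W)
      (sub_mem (sub_mem (sub_mem (add_mem (mul_mem hPC hx3) (mul_mem hs hx4)) (mul_mem hs hx1)) (mul_mem (hBC _) hWC)) 
        (mul_mem (mul_mem (hBC _) hs) hWC)) (by
        have e1 : ∑ j ∈ Finset.range (p-2), c j • s ^ (j + 2) = s ^ 2 * ∑ j ∈ Finset.range (p-2), c j • s ^ j := by
          rw [Finset.mul_sum]
          refine Finset.sum_congr rfl fun j _ => ?_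
          simp only [Algebra.smul_def]; ring
        rw [e1]
        rw [e0] at h1
        linear_combination -s * h1 + P * h2 - algebraMap B K (c (p-2)) * hs2 - algebraMap B K (c (p-1)) * s * hs1)
    choose! d hd using h3
    have e2 : ∑ j ∈ Finset.range (p-2), c j • s ^ j = P * ∑ j ∈ Finset.range (p-2), d j • s ^ j := by
      rw [Finset.mul_sum]
      refine Finset.sum_congr rfl fun j hj => ?_
      rw [hd j (Finset.mem_range.1 hj)]
      simp only [Algebra.smul_def, map_mul]; ring
    set y1 := ∑ j ∈ Finset.range (p-2), d j • s ^ j with hy1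
    have hy1C : y1 ∈ C := Subalgebra.sum_mem _ fun j _ => C.smul_mem (hsC j) _
    have h4 : y = (x1 + s * y1 + algebraMap B K (c (p-1)) * W) + algebraMap B K (c (p-2)) * e := by
      apply mul_left_cancel₀ hP0
      rw [e0, e2] at h1
      linear_combination h1 + algebraMap B K (c (p-1)) * hs1 - algebraMap B K (c (p-2)) * (he + hp1')
    obtain ⟨a, b, hab⟩ := hsplit (x1 + s * y1 + algebraMap B K (c (p-1)) * W) 
      (add_mem (add_mem hx1 (mul_mem hs hy1C)) (mul_mem (hBC _) hWC))
    refine ⟨a, b * π + c (p-2), ?_⟩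
    rw [h4, hab]
    simp only [map_mul, map_add]
    linear_combination - algebraMap B K b * he
  obtain ⟨a, b, hab⟩ := hyform
  have hsumC : ∀ (n : ℕ) (a : ℕ → B), ∑ j ∈ Finset.range n, a j • s ^ j ∈ C := fun n a =>
    Subalgebra.sum_mem _ fun j _ => C.smul_mem (hsC j) _
  have hsum0 : ∃ c ∈ C, ∑ j ∈ Finset.range (p-1), a j • s ^ j = algebraMap B K (a 0) + s * c := by
    obtain ⟨n, hn⟩ : ∃ n, p - 1 = n + 1 := ⟨p - 2, by omega⟩
    rw [hn, Finset.sum_range_succ']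
    refine ⟨∑ j ∈ Finset.range n, a (j+1) • s ^ j, hsumC n (fun j => a (j+1)), ?_⟩
    rw [Finset.mul_sum, add_comm]
    congr 1
    · simp [Algebra.smul_def]
    · refine Finset.sum_congr rfl fun j _ => ?_
      simp only [Algebra.smul_def]; ring
  obtain ⟨c0, hc0, hc0e⟩ := hsum0
  have hyN : ∀ u v : K, (∀ x ∈ Nid C u v, e * x ∈ Nid C u v) → ∀ x ∈ Nid C u v, y * x ∈ Nid C u v := by
    intro u v h x hx
    rw [hab, add_mul, mul_assoc]
    exact add_mem (Nid_mul (hsumC _ _) hx) (Nid_mul (hBC _) (h x hx))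
  have ha0 : π ∣ a 0 := by
    refine PhiLem (N := Nid C (P ^ 2) s) (t := P) (z := y) hπ (hyN _ _ heN1) ?_ hN1 hr 1 
      (by rw [pow_one, hydef, Algebra.smul_def])
    refine ⟨0, zero_mem _, c0 * P + algebraMap B K b * s ^ (p-2), 
      add_mem (mul_mem hc0 hPC) (mul_mem (hBC _) (hsC _)), ?_⟩
    rw [hab, hc0e, Algebra.smul_def]
    linear_combination algebraMap B K b * (he + hp1')
  have hb0 : π ∣ b := by
    have : π ∣ a 0 + τ * b := by
      refine PhiLem (N := Nid C P (s ^ 2)) (t := s) (z := y) hπ (hyN _ _ heN2) ?_ hN2 hr 1 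
        (by rw [pow_one, hydef, Algebra.smul_def])
      refine ⟨algebraMap B K b * (s * w + P * w'), mul_mem (hBC _) (add_mem (mul_mem hs hw) (mul_mem hPC hw')), c0, hc0, ?_⟩
      rw [hab, hc0e, Algebra.smul_def, map_add, map_mul]
      linear_combination algebraMap B K b * (hes + hWdef)
    exact (hπ.dvd_or_dvd ((dvd_add_right ha0).1 this)).resolve_left hτ
  obtain ⟨b', hb'⟩ := hb0
  have haj : ∀ j, j < p - 1 → π ∣ a j := by
    intro j
    induction j using Nat.strong_induction_on with
    | _ j ih =>
    intro hj
    rcases Nat.eq_zero_or_pos j with rfl | hj0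
    · exact ha0
    obtain ⟨z, hzdef⟩ : ∃ z, z = s ^ (p-1-j) * r := ⟨_, rfl⟩
    have hsp : ∀ k, j < k → s ^ (k + (p-1-j)) = P * (W * s ^ (k - j - 1)) := by
      intro k hk
      rw [← mul_assoc, ← hR, ← pow_add]; congr 1; omega
    let t : ℕ → K := fun k => algebraMap B K (a k) * s ^ (k + (p-1-j)) / P - if k = j then algebraMap B K (a j) * e else 0
    have ht : ∀ k ∈ Finset.range (p-1), t k ∈ Nid C s W := by
      intro k hk
      have hk' := Finset.mem_range.1 hk
      rcases lt_trichotomy k j with h | h | h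
      · obtain ⟨d, hd⟩ := ih k h hk'
        refine ⟨algebraMap B K d * s ^ (k + (p - 1 - j) - 1), mul_mem (hBC _) (hsC _), 0, zero_mem _, ?_⟩
        have : s ^ (k + (p-1-j)) = s * s ^ (k + (p - 1 - j) - 1) := by rw [← pow_succ']; congr 1; omega
        simp only [t]
        rw [if_neg h.ne, hd, map_mul, this, ← hPdef]
        field_simp
        ring
      · refine ⟨0, zero_mem _, 0, zero_mem _, ?_⟩
        simp only [t]
        rw [if_pos h, h, show j + (p-1-j) = p - 1 by omega, ← he]
        field_simp
        ring
      · refine ⟨0, zero_mem _, algebraMap B K (a k) * s ^ (k - j - 1), mul_mem (hBC _) (hsC _), ?_⟩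
        simp only [t]
        rw [if_neg h.ne', hsp k h]
        field_simp
        ring
    have hz1 : z - algebraMap B K (a j) * e = ∑ k ∈ Finset.range (p-1), t k + algebraMap B K b' * W * s ^ (p - 2 - j) := by
      simp only [t]
      rw [Finset.sum_sub_distrib, Finset.sum_ite_eq', if_pos (Finset.mem_range.2 hj), ← Finset.sum_div]
      have e3 : ∑ k ∈ Finset.range (p-1), algebraMap B K (a k) * s ^ (k + (p-1-j)) = s ^ (p-1-j) * ∑ k ∈ Finset.range (p-1), a k • s ^ k := by
        rw [Finset.mul_sum]
        refine Finset.sum_congr rfl fun k _ => ?_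
        rw [Algebra.smul_def, pow_add]; ring
      rw [e3]
      have e4 : ∑ k ∈ Finset.range (p-1), a k • s ^ k = P * r - P * algebraMap B K b' * e := by
        rw [← hydef, hab, hb', map_mul]; ring
      have e5 : s ^ (p-1-j) = s * s ^ (p-2-j) := by rw [← pow_succ']; congr 1; omega
      rw [e4, hzdef, ← hes, e5]
      field_simp
      ring
    have hz2 : z - algebraMap B K (a j) * e ∈ Nid C s W := by
      rw [hz1]
      exact add_mem (Submodule.sum_mem _ ht) ⟨0, zero_mem _, algebraMap B K b' * s ^ (p - 2 - j), mul_mem (hBC _) (hsC _), by ring⟩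
    obtain ⟨c1, hc1, c2, hc2, hz3⟩ := hz2
    have hz4 : z = algebraMap B K (a j) * e + (s * c1 + W * c2) := by linear_combination hz3
    have : π ∣ τ * a j := by
      refine PhiLem (N := Nid C P (s ^ 2)) (t := s) (z := z) (ρ := W * s ^ (p * (p - 2 - j)) * r ^ p) hπ ?_ ?_ hN2 ?_ p ?_
      · intro x hx
        rw [hz4, add_mul, mul_assoc]
        exact add_mem (Nid_mul (hBC _) (heN2 _ hx)) (Nid_mul (add_mem (mul_mem hs hc1) (mul_mem hWC hc2)) hx)
      · refine ⟨algebraMap B K (a j) * (s * w + P * w') + (s * w + P * w') * s * c2, ?_, c1 + algebraMap B K τ * c2, 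
          add_mem hc1 (mul_mem (hBC _) hc2), ?_⟩
        · have : s * w + P * w' ∈ C := add_mem (mul_mem hs hw) (mul_mem hPC hw')
          exact add_mem (mul_mem (hBC _) this) (mul_mem (mul_mem this hs) hc2)
        · rw [hz4, Algebra.smul_def, map_mul]
          linear_combination algebraMap B K (a j) * (hes + hWdef) + s * c2 * hWdef
      · exact IsIntegral.mul (hCint _ (mul_mem hWC (hsC _))) (hr.pow p)
      · rw [hzdef, mul_pow, ← pow_mul, Algebra.smul_def, ← hPdef]
        have : s ^ ((p-1-j) * p) = P * W * s ^ (p * (p-2-j)) := by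
          rw [← hR, ← pow_add]; congr 1
          obtain ⟨m, hm⟩ : ∃ m, p - 1 - j = m + 1 := ⟨p - 2 - j, by omega⟩
          rw [hm, show p - 2 - j = m by omega]; ring
        rw [this]; ring
    exact (hπ.dvd_or_dvd this).resolve_left hτ
  choose! d hd using haj
  have hfinal : r = ∑ j ∈ Finset.range (p-1), d j • s ^ j + algebraMap B K b' * e := by
    apply mul_left_cancel₀ hP0
    rw [← hydef, hab, mul_add, Finset.mul_sum, hb', map_mul]
    congr 1
    · refine Finset.sum_congr rfl fun j hj => ?_
      rw [hd j (Finset.mem_range.1 hj)]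
      simp only [Algebra.smul_def, map_mul]; ring
    · ring
  intro x hx
  rw [hfinal, add_mul, mul_assoc]
  exact add_mem (Nid_mul (hsumC _ _) hx) (Nid_mul (hBC _) (heJ x hx))

theorem ICl {S K : Type*} [CommRing S] [Field K] [Algebra S K] {T : Subalgebra S K} (hT : IsIntegrallyClosed T)
    {x n d : K} (hn : n ∈ T) (hd : d ∈ T) (hd0 : d ≠ 0) (hx : d * x = n) (hint : IsIntegral T x) : x ∈ T := by
  let φ : FractionRing T →ₐ[T] K := IsFractionRing.liftAlgHom (K := FractionRing T) (g := Algebra.ofId T K) (Subtype.val_injective)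
  have hφ : Function.Injective φ := φ.toRingHom.injective
  let x' : FractionRing T := algebraMap T _ ⟨n, hn⟩ / algebraMap T _ ⟨d, hd⟩
  have h1 : φ x' = x := by
    simp only [x', map_div₀, AlgHom.commutes]
    have e1 : algebraMap T K ⟨n, hn⟩ = n := rfl
    have e2 : algebraMap T K ⟨d, hd⟩ = d := rfl
    rw [e1, e2, ← hx]
    field_simp
  have h2 : IsIntegral T x' := by
    rw [← isIntegral_algHom_iff φ hφ, h1]; exact hint
  obtain ⟨y, hy⟩ := IsIntegrallyClosed.isIntegral_iff.1 h2
  have : (y : K) = x := by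
    rw [← h1, ← hy, AlgHom.commutes]; rfl
  rw [← this]; exact y.2

theorem exists_denom {S L K : Type*} [CommRing S] [IsDomain S] [Field L] [Algebra S L] [IsFractionRing S L]
    [Field K] [Algebra L K] [Algebra S K] [IsScalarTower S L K] {s : Set K} {x : K} (hx : x ∈ Algebra.adjoin L s) :
    ∃ d : S, d ≠ 0 ∧ d • x ∈ Algebra.adjoin S s := by
  induction hx using Algebra.adjoin_induction with
  | mem x hx => exact ⟨1, one_ne_zero, by rw [one_smul]; exact Algebra.subset_adjoin hx⟩
  | algebraMap l =>
    obtain ⟨n, d, hd, rfl⟩ := IsFractionRing.div_surjective (A := S) l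
    have hd0 := nonZeroDivisors.ne_zero hd
    refine ⟨d, hd0, ?_⟩
    have : d • algebraMap L K (algebraMap S L n / algebraMap S L d) = algebraMap S K n := by
      rw [Algebra.smul_def, IsScalarTower.algebraMap_apply S L K, ← map_mul, IsScalarTower.algebraMap_apply S L K]
      congr 1
      have : algebraMap S L d ≠ 0 := by simpa using hd0
      field_simp
    rw [this]
    exact Subalgebra.algebraMap_mem _ _
  | add x y _ _ hx hy =>
    obtain ⟨d, hd, h⟩ := hx
    obtain ⟨e, he, h'⟩ := hy
    refine ⟨d * e, mul_ne_zero hd he, ?_⟩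
    have : (d * e) • (x + y) = e • (d • x) + d • (e • y) := by
      simp only [Algebra.smul_def, map_mul]; ring
    rw [this]
    exact add_mem (Subalgebra.smul_mem _ h _) (Subalgebra.smul_mem _ h' _)
  | mul x y _ _ hx hy =>
    obtain ⟨d, hd, h⟩ := hx
    obtain ⟨e, he, h'⟩ := hy
    refine ⟨d * e, mul_ne_zero hd he, ?_⟩
    have : (d * e) • (x * y) = (d • x) * (e • y) := by
      simp only [Algebra.smul_def, map_mul]; ring
    rw [this]
    exact mul_mem h h'

theorem trace_pow {F K : Type*} [Field F] [Field K] [Algebra F K] {p : ℕ} (hp : 0 < p) (bas : Module.Basis (Fin p) F K)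
    {μ : K} {g : F} (hb : ∀ k, bas k = μ ^ (k : ℕ)) (hμ : μ ^ p = algebraMap F K g) (x : K) :
    Algebra.trace F K x = p * bas.repr x ⟨0, hp⟩ := by
  have key : (Algebra.trace F K : K →ₗ[F] F) = (p : F) • (bas.coord ⟨0, hp⟩) := by
    refine bas.ext fun k => ?_
    rw [Algebra.trace_eq_matrix_trace bas, Matrix.trace]
    simp only [Matrix.diag_apply, Algebra.leftMulMatrix_eq_repr_mul, LinearMap.smul_apply, Module.Basis.coord_apply, Module.Basis.repr_self, smul_eq_mul]
    by_cases hk : (k : ℕ) = 0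
    · have hk' : k = ⟨0, hp⟩ := Fin.ext hk
      have : ∀ j, bas.repr (bas k * bas j) j = 1 := by
        intro j
        rw [hb k, hk, pow_zero, one_mul]; simp
      rw [Finset.sum_congr rfl (fun j _ => this j)]; simp [hk']
    · have : ∀ j, bas.repr (bas k * bas j) j = 0 := by
        intro j
        rw [hb k, hb j, ← pow_add]
        by_cases h : (k : ℕ) + j < p
        · have := hb ⟨k + j, h⟩
          simp only at this
          rw [← this, bas.repr_self, Finsupp.single_apply, if_neg]
          intro h'
          have := congrArg Fin.val h'
          simp only at this
          omega
        · have e : μ ^ ((k : ℕ) + j) = g • bas ⟨k + j - p, by omega⟩ := by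
            rw [hb, Algebra.smul_def, ← hμ, ← pow_add]; congr 1; simp only; omega
          rw [e, map_smul, bas.repr_self, Finsupp.smul_apply, Finsupp.single_apply, if_neg, smul_zero]
          intro h'
          have := congrArg Fin.val h'
          simp only at this
          omega
      simp only [this, Finset.sum_const_zero]
      rw [Finsupp.single_apply, if_neg, mul_zero]
      intro h; exact hk (congrArg Fin.val h)
  rw [key]; rfl

theorem pgr {S L K : Type*} [CommRing S] [IsDomain S] [Field L] [Algebra S L] [IsFractionRing S L]
    [Field K] [Algebra L K] [Algebra S K] [IsScalarTower S L K] {p : ℕ} (hp : 0 < p)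
    {f g : S} {ω μ : K} (hω : ω ^ p = algebraMap S K f) (hμ : μ ^ p = algebraMap S K g)
    (hKgen : Algebra.adjoin L ({ω, μ} : Set K) = ⊤)
    (hdeg : Module.finrank L K = p ^ 2)
    (hicω : IsIntegrallyClosed (Algebra.adjoin S ({ω} : Set K))) {r : K} (hr : IsIntegral S r) :
    algebraMap S K (p * g) * r ∈ Algebra.adjoin S ({ω, μ} : Set K) := by
  obtain ⟨-, hspanL⟩ := exists_basis (h₁ := 0) (h₂ := 0) hp hω hμ hKgen hdeg
  simp only [map_zero, sub_zero] at hspanL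
  have hfin : FiniteDimensional L K := Module.finite_of_finrank_pos (by rw [hdeg]; positivity)
  let F : IntermediateField L K := IntermediateField.adjoin L {ω}
  haveI : IsScalarTower S F K := IsScalarTower.of_algebraMap_eq (fun _ => rfl)
  have hωF : ω ∈ F := IntermediateField.mem_adjoin_simple_self L ω
  have hωi : IsIntegral L ω := Algebra.IsIntegral.isIntegral ω
  have hLF : Module.finrank L F ≤ p := by
    rw [IntermediateField.adjoin.finrank hωi]
    have h1 : minpoly L ω ∣ Polynomial.X ^ p - Polynomial.C (algebraMap S L f) := by
      apply minpoly.dvd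
      simp [hω, ← IsScalarTower.algebraMap_apply]
    have := Polynomial.natDegree_le_of_dvd h1 (Polynomial.X_pow_sub_C_ne_zero hp _)
    rwa [Polynomial.natDegree_X_pow_sub_C] at this
  have htop : ⊤ ≤ Submodule.span F (Set.range fun k : Fin p => μ ^ (k : ℕ)) := by
    have : Submodule.span L (Set.range fun jk : Fin p × Fin p => ω ^ (jk.1 : ℕ) * μ ^ (jk.2 : ℕ)) ≤ 
        (Submodule.span F (Set.range fun k : Fin p => μ ^ (k : ℕ))).restrictScalars L := by
      rw [Submodule.span_le]
      rintro _ ⟨jk, rfl⟩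
      exact Submodule.smul_mem _ ((⟨ω, hωF⟩ : F) ^ (jk.1 : ℕ)) (Submodule.subset_span ⟨jk.2, rfl⟩)
    intro x _
    exact this (hspanL trivial)
  have hFK : Module.finrank F K ≤ p := by
    have := finrank_range_le_card (R := F) (fun k : Fin p => μ ^ (k : ℕ))
    rw [Set.finrank, top_le_iff.1 htop, finrank_top, Fintype.card_fin] at this
    exact this
  have hFK' : Module.finrank F K = p := by
    have := Module.finrank_mul_finrank L F K
    rw [hdeg] at this
    nlinarith
  let bas : Module.Basis (Fin p) F K := basisOfTopLeSpanOfCardEqFinrank _ htop (by rw [hFK', Fintype.card_fin])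
  have hbas : ∀ k, bas k = μ ^ (k : ℕ) := fun k => by simp [bas]
  have hμF : μ ^ p = algebraMap F K (algebraMap S F g) := by rw [hμ]; rfl
  have hint : ∀ x : F, IsIntegral S (x : K) → (x : K) ∈ Algebra.adjoin S ({ω} : Set K) := by
    intro x hx
    have h1 : (x : K) ∈ Algebra.adjoin L ({ω} : Set K) := by
      rw [← IntermediateField.adjoin_simple_toSubalgebra_of_isAlgebraic hωi.isAlgebraic]
      exact x.2
    obtain ⟨d, hd0, hd⟩ := exists_denom (S := S) h1
    refine ICl hicω hd (Subalgebra.algebraMap_mem _ d) ?_ (by rw [Algebra.smul_def]) (hx.tower_top)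
    rw [IsScalarTower.algebraMap_apply S L K]
    exact (map_ne_zero _).2 ((map_ne_zero_iff _ (IsFractionRing.injective S L)).2 hd0)
  have hμi : IsIntegral S μ := IsIntegral.of_pow hp (by rw [hμ]; exact isIntegral_algebraMap)
  have htr : ∀ x : K, IsIntegral S x → ((p * bas.repr x ⟨0, hp⟩ : F) : K) ∈ Algebra.adjoin S ({ω} : Set K) := by
    intro x hx
    apply hint
    rw [← trace_pow hp bas hbas hμF]
    have : IsIntegral S (Algebra.trace F K x) := Algebra.isIntegral_trace hx
    exact this.map (IsScalarTower.toAlgHom S F K)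
  have hle : Algebra.adjoin S ({ω} : Set K) ≤ Algebra.adjoin S ({ω, μ} : Set K) := Algebra.adjoin_mono (by simp)
  have hμA : μ ∈ Algebra.adjoin S ({ω, μ} : Set K) := Algebra.subset_adjoin (by simp)
  have hcoef : ∀ k : Fin p, algebraMap S K (p * g) * (bas.repr r k : K) ∈ Algebra.adjoin S ({ω} : Set K) := by
    intro k
    by_cases hk : (k : ℕ) = 0
    · have hk' : k = ⟨0, hp⟩ := Fin.ext hk
      have := htr r hr
      rw [← hk'] at this
      have := mul_mem (Subalgebra.algebraMap_mem (Algebra.adjoin S ({ω} : Set K)) g) this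
      convert this using 1
      push_cast
      ring
    · have := htr (r * μ ^ (p - k)) (hr.mul (hμi.pow _))
      have e : bas.repr (r * μ ^ (p - k)) ⟨0, hp⟩ = algebraMap S F g * bas.repr r k := by
        have e1 : r = ∑ j, bas.repr r j • bas j := (bas.sum_repr r).symm
        have e2 : r * μ ^ (p - k) = ∑ j, bas.repr r j • (bas j * μ ^ (p - k)) := by
          conv_lhs => rw [e1]
          rw [Finset.sum_mul]
          exact Finset.sum_congr rfl fun j _ => smul_mul_assoc _ _ _
        rw [e2, map_sum, Finsupp.finsetSum_apply, Finset.sum_eq_single k]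
        · have e3 : bas k * μ ^ (p - k) = algebraMap S F g • bas ⟨0, hp⟩ := by
            rw [hbas, hbas, ← pow_add, Algebra.smul_def, ← hμF]
            simp only [pow_zero, mul_one]
            congr 1; omega
          rw [e3, map_smul, map_smul, bas.repr_self]
          simp [mul_comm, Algebra.smul_def]
        · intro j _ hj
          have hjk : (j : ℕ) ≠ k := fun h => hj (Fin.ext h)
          rw [map_smul, Finsupp.smul_apply]
          by_cases h : (j : ℕ) + (p - k) < p
          · have e3 : bas j * μ ^ (p - k) = bas ⟨j + (p - k), h⟩ := by rw [hbas, hbas, ← pow_add]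
            rw [e3, bas.repr_self, Finsupp.single_apply, if_neg, smul_zero]
            intro h'
            have := congrArg Fin.val h'
            simp only at this
            omega
          · have e3 : bas j * μ ^ (p - k) = algebraMap S F g • bas ⟨j + (p - k) - p, by omega⟩ := by
              rw [hbas, hbas, ← pow_add, Algebra.smul_def, ← hμF, ← pow_add]; congr 1; simp only; omega
            rw [e3, map_smul, bas.repr_self, Finsupp.smul_apply, Finsupp.single_apply, if_neg, smul_zero, smul_zero]
            intro h'
            have := congrArg Fin.val h'
            simp only at this
            omega
        · simp
      rw [e] at this
      convert this using 1
      push_cast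
      rw [mul_assoc]
      rfl
  have e1 : r = ∑ j, bas.repr r j • bas j := (bas.sum_repr r).symm
  rw [e1, Finset.mul_sum]
  refine Subalgebra.sum_mem _ fun k _ => ?_
  have : algebraMap S K (p * g) * (bas.repr r k • bas k) = (algebraMap S K (p * g) * (bas.repr r k : K)) * μ ^ (k : ℕ) := by
    rw [hbas, mul_assoc]; rfl
  rw [this]
  exact mul_mem (hle (hcoef k)) (pow_mem hμA _)

theorem pr_mem {S L K : Type*} [CommRing S] [IsDomain S] [Field L] [Algebra S L] [IsFractionRing S L]
    [Field K] [Algebra L K] [Algebra S K] [IsScalarTower S L K] {p : ℕ} (hp : 0 < p)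
    {f g : S} {ω μ : K} (hω : ω ^ p = algebraMap S K f) (hμ : μ ^ p = algebraMap S K g)
    (hKgen : Algebra.adjoin L ({ω, μ} : Set K) = ⊤)
    (hdeg : Module.finrank L K = p ^ 2)
    (hicω : IsIntegrallyClosed (Algebra.adjoin S ({ω} : Set K))) 
    (hicμ : IsIntegrallyClosed (Algebra.adjoin S ({μ} : Set K))) (hg0 : g ≠ 0)
    (hcop : ∀ s, g ∣ f * s → g ∣ s) {r : K} (hr : IsIntegral S r) :
    (p : K) * r ∈ Algebra.adjoin S ({ω, μ} : Set K) := by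
  have h1 := pgr hp hω hμ hKgen hdeg hicω hr
  have h2 := pgr hp hμ hω (by rw [Set.pair_comm]; exact hKgen) hdeg hicμ hr
  rw [Set.pair_comm] at h2
  obtain ⟨⟨bas, -⟩, -⟩ := exists_basis (h₁ := 0) (h₂ := 0) hp hω hμ hKgen hdeg
  set A := Algebra.adjoin S ({ω, μ} : Set K)
  have hinj : Function.Injective (algebraMap S K) := by
    rw [IsScalarTower.algebraMap_eq S L K]
    exact (algebraMap L K).injective.comp (IsFractionRing.injective S L)
  have h3 : f • (⟨_, h1⟩ : A) = g • (⟨_, h2⟩ : A) := by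
    apply Subtype.ext
    rw [Subalgebra.coe_smul, Subalgebra.coe_smul]
    simp only [Algebra.smul_def, map_mul]
    ring
  have h4 : ∀ jk, g ∣ bas.repr ⟨_, h1⟩ jk := by
    intro jk
    apply hcop
    have := congrArg (fun x => bas.repr x jk) h3
    simp only [map_smul, Finsupp.smul_apply, smul_eq_mul] at this
    exact ⟨_, this⟩
  choose d hd using h4
  have h5 : (⟨_, h1⟩ : A) = g • ∑ jk, d jk • bas jk := by
    rw [← bas.sum_repr ⟨_, h1⟩, Finset.smul_sum]
    refine Finset.sum_congr rfl fun jk _ => ?_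
    rw [hd, mul_smul]
  have h6 := congrArg Subtype.val h5
  have h7 : (p : K) * r = (∑ jk, d jk • bas jk : A) := by
    apply mul_left_cancel₀ ((map_ne_zero_iff _ hinj).2 hg0)
    simp only [map_mul, map_natCast] at h6
    rw [Subalgebra.coe_smul, Algebra.smul_def] at h6
    rw [← h6]; ring
  rw [h7]
  exact Subtype.property _

theorem b_not_dvd {S L K : Type*} [CommRing S] [IsDomain S] [Field L] [CharZero L] [Algebra S L] [IsFractionRing S L]
    [Field K] [Algebra L K] [Algebra S K] [IsScalarTower S L K] {p : ℕ} (hp : p.Prime) (hpS : Prime (p : S))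
    {f g h₂ b : S} {ω μ : K} (hω : ω ^ p = algebraMap S K f) (hμ : μ ^ p = algebraMap S K g)
    (hg : g = h₂ ^ p + b * (p : S))
    (hKgen : Algebra.adjoin L ({ω, μ} : Set K) = ⊤)
    (hdeg : Module.finrank L K = p ^ 2)
    (hicμ : IsIntegrallyClosed (Algebra.adjoin S ({μ} : Set K))) : ¬ (p : S) ∣ b := by
  rintro ⟨b', rfl⟩
  have hp2 := hp.two_le
  have hpK : (p : K) ≠ 0 := by
    rw [← map_natCast (algebraMap L K)]
    exact (map_ne_zero _).2 (Nat.cast_ne_zero.2 hp.ne_zero)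
  obtain ⟨⟨bas, hbas⟩, -⟩ := exists_basis (h₁ := 0) (h₂ := h₂) hp.pos hω hμ hKgen hdeg
  set T := Algebra.adjoin S ({μ} : Set K) with hT
  have hμT : μ ∈ T := Algebra.subset_adjoin (by simp)
  let m : T := ⟨μ, hμT⟩
  obtain ⟨β, hβ⟩ := exists_Xp (A := T) hp (w := m) (h := algebraMap S T h₂) (a := algebraMap S T (p * b')) (by
    apply Subtype.ext
    push_cast
    rw [show (m : K) = μ from rfl, hμ, hg]; simp)
  set Y : T := m - algebraMap S T h₂ with hY
  have hYK : (Y : K) = μ - algebraMap S K h₂ := rfl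
  obtain ⟨z, hz⟩ : ∃ z : K, (p : K) * z = (Y : K) ^ (p-1) := ⟨(Y : K) ^ (p-1) / p, by field_simp⟩
  have hβK : (Y : K) ^ p = p * (p * algebraMap S K b' + Y * β) := by
    have := congrArg Subtype.val hβ
    push_cast at this
    rw [this]
    try simp
  have hzz : z ^ 2 = β * z + (Y : K) ^ (p-2) * algebraMap S K b' := by
    apply mul_left_cancel₀ (pow_ne_zero 2 hpK)
    have e1 : (Y : K) ^ (p-1) = Y * (Y : K) ^ (p-2) := by rw [← pow_succ']; congr 1; omega
    have e2 : (Y : K) ^ p = Y ^ 2 * (Y : K) ^ (p-2) := by rw [← pow_add]; congr 1; omega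
    have e3 : (p : K) ^ 2 * z ^ 2 = (Y : K) ^ (p-2) * (Y : K) ^ p := by
      rw [← mul_pow, hz, e1, e2]; ring
    rw [e3, hβK]
    rw [e1] at hz
    linear_combination -p * β * hz
  have hint : IsIntegral T z := by
    refine ⟨Polynomial.X ^ 2 - (Polynomial.C β * Polynomial.X + Polynomial.C (Y ^ (p-2) * algebraMap S T b')), ?_, ?_⟩
    · exact Polynomial.monic_X_pow_sub (lt_of_le_of_lt Polynomial.degree_linear_le (by norm_num))
    · simp only [Polynomial.eval₂_sub, Polynomial.eval₂_add, Polynomial.eval₂_mul, Polynomial.eval₂_pow, Polynomial.eval₂_X, Polynomial.eval₂_C]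
      rw [hzz]
      simp only [map_mul, map_pow]
      rw [sub_eq_zero]; rfl
  have hzT : z ∈ T := ICl hicμ (n := (Y : K) ^ (p-1)) (d := (p : K)) (pow_mem Y.2 _) (by exact natCast_mem T p) hpK hz hint
  have hle : T ≤ Algebra.adjoin S ({ω, μ} : Set K) := Algebra.adjoin_mono (by simp)
  let jk : Fin p × Fin p := (⟨0, hp.pos⟩, ⟨p-1, by omega⟩)
  have h1 : bas jk = (p : S) • (⟨z, hle hzT⟩ : Algebra.adjoin S ({ω, μ} : Set K)) := by
    apply Subtype.ext
    rw [hbas, Subalgebra.coe_smul, Algebra.smul_def, map_natCast]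
    simp only [jk, pow_zero, one_mul]
    rw [hz, hYK]
  have h2 := congrArg (fun x => bas.repr x jk) h1
  simp only [bas.repr_self, map_smul, Finsupp.smul_apply, smul_eq_mul, Finsupp.single_eq_same] at h2
  exact hpS.not_isUnit (IsUnit.of_mul_eq_one _ h2.symm)

def locSub {S K : Type*} [CommRing S] [Field K] [Algebra S K] (T : Subalgebra S K) (σ : T) : Subalgebra S K where
  carrier := {x | ∃ n : ℕ, (σ : K) ^ n * x ∈ T}
  mul_mem' := by
    rintro x y ⟨n, hn⟩ ⟨m, hm⟩
    refine ⟨n + m, ?_⟩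
    have : (σ : K) ^ (n + m) * (x * y) = ((σ : K) ^ n * x) * ((σ : K) ^ m * y) := by ring
    rw [this]; exact mul_mem hn hm
  add_mem' := by
    rintro x y ⟨n, hn⟩ ⟨m, hm⟩
    refine ⟨n + m, ?_⟩
    have : (σ : K) ^ (n + m) * (x + y) = (σ : K) ^ m * ((σ : K) ^ n * x) + (σ : K) ^ n * ((σ : K) ^ m * y) := by ring
    rw [this]; exact add_mem (mul_mem (pow_mem σ.2 _) hn) (mul_mem (pow_mem σ.2 _) hm)
  algebraMap_mem' := fun c => ⟨0, by rw [pow_zero, one_mul]; exact T.algebraMap_mem c⟩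

theorem mem_locSub {S K : Type*} [CommRing S] [Field K] [Algebra S K] {T : Subalgebra S K} {σ : T} {x : K} :
    x ∈ locSub T σ ↔ ∃ n : ℕ, (σ : K) ^ n * x ∈ T := Iff.rfl

theorem le_locSub {S K : Type*} [CommRing S] [Field K] [Algebra S K] {T : Subalgebra S K} {σ : T} : T ≤ locSub T σ :=
  fun x hx => ⟨0, by rw [pow_zero, one_mul]; exact hx⟩

theorem inv_mem_locSub {S K : Type*} [CommRing S] [Field K] [Algebra S K] {T : Subalgebra S K} {σ : T} 
    (hσ : (σ : K) ≠ 0) : (σ : K)⁻¹ ∈ locSub T σ :=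
  ⟨1, by rw [pow_one, mul_inv_cancel₀ hσ]; exact one_mem _⟩

theorem pow_dec {R : Type*} [CommRing R] (x y z : R) (n : ℕ) : ∃ w, (x + y * z) ^ n = x ^ n + y * w := by
  have := sub_dvd_pow_sub_pow (x + y * z) x n
  rw [add_sub_cancel_left] at this
  obtain ⟨w, hw⟩ := this
  exact ⟨z * w, by linear_combination hw⟩

section PL
variable {S K : Type*} [CommRing S] [Field K] [Algebra S K] {T : Subalgebra S K} {σ Y t0 : T} {q σ0 : S}

theorem ndvd_loc (hq : Prime q)
    (hcq : ∀ c : S, Y ∣ algebraMap S T c → q ∣ c) (hσ0 : ¬ q ∣ σ0) (hσ : σ = algebraMap S T σ0 + Y * t0)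
    {c : S} {t : T} {z : K} (hz : z ∈ locSub T σ) (h : ((algebraMap S T c + Y * t : T) : K) = Y * z) : q ∣ c := by
  obtain ⟨k, hk⟩ := hz
  obtain ⟨w, hw⟩ := pow_dec (algebraMap S T σ0) Y t0 k
  rw [← hσ] at hw
  have h1 : σ ^ k * (algebraMap S T c + Y * t) = Y * ⟨_, hk⟩ := by
    apply Subtype.ext
    rw [Subalgebra.coe_mul, h]
    push_cast
    ring
  have h2 : Y ∣ algebraMap S T (σ0 ^ k * c) := by
    refine ⟨⟨_, hk⟩ - σ ^ k * t - w * algebraMap S T c, ?_⟩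
    rw [map_mul, map_pow]
    linear_combination h1 - algebraMap S T c * hw
  exact (hq.dvd_or_dvd (hcq _ h2)).resolve_left (fun h => hσ0 (hq.dvd_of_dvd_pow h))

theorem prime_loc (hq : Prime q) (hdec : ∀ t : T, ∃ (c : S) (t' : T), t = algebraMap S T c + Y * t')
    (hcq : ∀ c : S, Y ∣ algebraMap S T c → q ∣ c) (hσ0 : ¬ q ∣ σ0) (hσ : σ = algebraMap S T σ0 + Y * t0)
    (hqY : ∃ z ∈ locSub T σ, algebraMap S K q = Y * z) (hY0 : (Y : K) ≠ 0) (hσne : (σ : K) ≠ 0) :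
    Prime (⟨Y, le_locSub Y.2⟩ : locSub T σ) := by
  have key : ∀ x : locSub T σ, ∃ (n : ℕ) (c : S) (t : T), (σ : K) ^ n * x = (algebraMap S T c + Y * t : T) ∧
      (q ∣ c → (⟨Y, le_locSub Y.2⟩ : locSub T σ) ∣ x) := by
    rintro ⟨x, n, hn⟩
    obtain ⟨c, t, ht⟩ := hdec ⟨_, hn⟩
    refine ⟨n, c, t, congrArg Subtype.val ht, ?_⟩
    rintro ⟨c', rfl⟩
    obtain ⟨z, hz, hqz⟩ := hqY
    have hmem : (σ : K)⁻¹ ^ n * (z * algebraMap S K c' + t) ∈ locSub T σ :=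
      mul_mem (pow_mem (inv_mem_locSub hσne) _) (add_mem (mul_mem hz (Subalgebra.algebraMap_mem _ _)) (le_locSub t.2))
    refine ⟨⟨_, hmem⟩, Subtype.ext ?_⟩
    have h1 : (σ : K) ^ n * x = algebraMap S K (q * c') + Y * t := congrArg Subtype.val ht
    rw [map_mul, hqz] at h1
    change x = Y * ((σ : K)⁻¹ ^ n * (z * algebraMap S K c' + t))
    apply mul_left_cancel₀ (pow_ne_zero n hσne)
    rw [h1, inv_pow]
    field_simp
  refine ⟨fun h => hY0 (congrArg Subtype.val h), ?_, ?_⟩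
  · intro h
    obtain ⟨z, hz⟩ := h.exists_right_inv
    apply hq.not_isUnit
    apply isUnit_of_dvd_one
    refine ndvd_loc (t := 0) hq hcq hσ0 hσ z.2 ?_
    have := congrArg Subtype.val hz
    simp only [map_one, mul_zero, add_zero]
    exact this.symm
  · rintro x y ⟨z, hz⟩
    obtain ⟨n, c, t, hx, hx'⟩ := key x
    obtain ⟨m, c', t', hy, hy'⟩ := key y
    have hzK : (x : K) * y = Y * z := congrArg Subtype.val hz
    have : q ∣ c * c' := by
      refine ndvd_loc (t := algebraMap S T c * t' + t * algebraMap S T c' + Y * t * t') (z := (σ : K) ^ (n + m) * z) hq hcq hσ0 hσ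
        (mul_mem (pow_mem (le_locSub σ.2) _) z.2) ?_
      have e : (algebraMap S T (c * c') + Y * (algebraMap S T c * t' + t * algebraMap S T c' + Y * t * t') : T)
         = (algebraMap S T c + Y * t) * (algebraMap S T c' + Y * t') := by rw [map_mul]; ring
      rw [e, Subalgebra.coe_mul, ← hx, ← hy]
      linear_combination (σ : K) ^ (n + m) * hzK
    exact (hq.dvd_or_dvd this).imp hx' hy'
end PL

theorem vp_expand {S K : Type*} [CommRing S] [CommRing K] [Algebra S K] {p : ℕ} (hp : p.Prime) {F h y : S} {θ : K}
    (hθ : θ ^ p = algebraMap S K F) (hF : F = h ^ p + (p : S) ^ 2 * y) : 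
    ∃ d : ℕ → S, d 0 = p * y ∧ d 1 = - h ^ (p-1) ∧ 
      (θ - algebraMap S K h) ^ p = ∑ j ∈ Finset.range p, algebraMap S K (p * d j) * (θ - algebraMap S K h) ^ j := by
  have h1 := add_pow (θ - algebraMap S K h) (algebraMap S K h) p
  rw [sub_add_cancel, hθ, Finset.sum_range_succ] at h1
  obtain ⟨n, rfl⟩ : ∃ n, p = n + 1 := ⟨p - 1, by have := hp.pos; omega⟩
  have hn : 1 ≤ n := by have := hp.two_le; omega
  refine ⟨fun j => if j = 0 then ((n+1 : ℕ) : S) * y else - ((((n+1).choose j / (n+1) : ℕ) : S) * h ^ (n+1-j)), by simp, ?_, ?_⟩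
  · simp
  · simp only [Nat.sub_self, pow_zero, Nat.choose_self, Nat.cast_one, mul_one] at h1
    rw [Finset.sum_range_succ'] at h1 ⊢
    have e : ∀ j ∈ Finset.range n, algebraMap S K (((n+1:ℕ):S) * (if j + 1 = 0 then ((n+1 : ℕ) : S) * y else - ((((n+1).choose (j+1) / (n+1) : ℕ) : S) * h ^ (n+1-(j+1))))) * (θ - algebraMap S K h) ^ (j+1)
      = - ((θ - algebraMap S K h) ^ (j+1) * algebraMap S K h ^ (n + 1 - (j+1)) * ((n+1).choose (j+1) : ℕ)) := by
      intro j hj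
      have hj := Finset.mem_range.1 hj
      obtain ⟨k, hk⟩ := hp.dvd_choose_self (k := j+1) (by omega) (by omega)
      rw [hk, Nat.mul_div_cancel_left _ (by omega)]
      simp only [Nat.succ_ne_zero, if_false, map_mul, map_neg, map_pow, map_natCast]
      push_cast
      ring
    rw [Finset.sum_congr rfl e, Finset.sum_neg_distrib]
    rw [hF] at h1
    simp only [map_mul, map_pow, map_add, map_natCast, pow_zero, one_mul, Nat.choose_zero_right, Nat.cast_one, mul_one, if_true, Nat.sub_zero] at h1 ⊢
    linear_combination -h1

theorem desat {S K : Type*} [CommRing S] [IsDomain S] [Field K] [Algebra S K] {A : Subalgebra S K} {ι : Type*} [Fintype ι]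
    (bas : Module.Basis ι S A) {p : ℕ} (hp : p.Prime) (hpS : Prime (p : S)) (hpK : (p : K) ≠ 0) {σ Y t0 : A} {σ0 : S}
    (hσ0 : ¬ (p : S) ∣ σ0) (hσ : σ = algebraMap S A σ0 + Y * t0) (hY : (p : A) ∣ Y ^ p) {w : K}
    (h1 : w ∈ locSub A σ) (h2 : (p : K) * w ∈ A) : w ∈ A := by
  obtain ⟨n, hn⟩ := h1
  have e1 : (p : A) ∣ σ ^ p - algebraMap S A (σ0 ^ p) := by
    obtain ⟨r, hr⟩ := exists_add_pow_prime_eq hp (algebraMap S A σ0) (Y * t0)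
    rw [← hσ] at hr
    have : σ ^ p - algebraMap S A (σ0 ^ p) = Y ^ p * t0 ^ p + p * (algebraMap S A σ0 * (Y * t0) * r) := by
      rw [hr, map_pow]; ring
    rw [this]
    exact dvd_add (hY.mul_right _) (Dvd.intro _ rfl)
  have e2 : (p : A) ∣ (σ ^ p) ^ n - algebraMap S A (σ0 ^ p) ^ n := e1.trans (sub_dvd_pow_sub_pow _ _ _)
  have e3 : (p : A) ∣ (σ ^ p) ^ n * ⟨_, h2⟩ := by
    refine ⟨σ ^ (p * n - n) * ⟨_, hn⟩, Subtype.ext ?_⟩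
    have : p * n = (p * n - n) + n := by
      have := Nat.le_mul_of_pos_left n hp.pos
      omega
    push_cast
    rw [← pow_mul]
    nth_rewrite 1 [this]
    rw [pow_add]
    ring
  have e4 : (p : A) ∣ ((σ0 ^ p) ^ n) • (⟨_, h2⟩ : A) := by
    rw [Algebra.smul_def, map_pow]
    have := dvd_sub e3 (e2.mul_right ⟨_, h2⟩)
    convert this using 1
    ring
  obtain ⟨z, hz⟩ := e4
  have e5 : ∀ j, (p : S) ∣ bas.repr ⟨_, h2⟩ j := by
    intro j
    have hz' : ((σ0 ^ p) ^ n) • (⟨_, h2⟩ : A) = (p : S) • z := by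
      rw [hz, Algebra.smul_def, map_natCast]
    have := congrArg (fun x => bas.repr x j) hz'
    simp only [map_smul, Finsupp.smul_apply, smul_eq_mul] at this
    refine (hpS.dvd_or_dvd ⟨_, this⟩).resolve_left fun h => hσ0 ?_
    exact hpS.dvd_of_dvd_pow (hpS.dvd_of_dvd_pow h)
  choose d hd using e5
  have e6 : (⟨_, h2⟩ : A) = (p : S) • ∑ j, d j • bas j := by
    rw [← bas.sum_repr ⟨_, h2⟩, Finset.smul_sum]
    refine Finset.sum_congr rfl fun j _ => ?_
    rw [hd, mul_smul]
  have e7 := congrArg Subtype.val e6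
  rw [Subalgebra.coe_smul, Algebra.smul_def, map_natCast] at e7
  rw [mul_left_cancel₀ hpK e7]
  exact Subtype.property _

theorem T_span {S K : Type*} [CommRing S] [Field K] [Algebra S K] {p : ℕ} (hp : 0 < p) {g h : S} {μ : K} 
    (hμ : μ ^ p = algebraMap S K g) {t : K} (ht : t ∈ Algebra.adjoin S ({μ} : Set K)) :
    ∃ c : Fin p → S, t = ∑ k, c k • (μ - algebraMap S K h) ^ (k : ℕ) := by
  have h1 : t ∈ Algebra.adjoin S ({μ, 1} : Set K) := Algebra.adjoin_mono (by simp) ht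
  have h2 := hadj h 0 rfl rfl h1
  have h3 := adjoin_le_span hp (shift_pow hp hμ) (shift_pow (f := 1) hp (by simp)) t h2
  obtain ⟨c, hc⟩ := (Submodule.mem_span_range_iff_exists_fun S).1 h3
  refine ⟨fun k => ∑ k', c (k, k'), ?_⟩
  rw [← hc, Fintype.sum_prod_type]
  refine Finset.sum_congr rfl fun k _ => ?_
  rw [Finset.sum_smul]
  refine Finset.sum_congr rfl fun k' _ => ?_
  simp

theorem T_dec {S K : Type*} [CommRing S] [Field K] [Algebra S K] {h : S} {μ : K} 
    (Y : Algebra.adjoin S ({μ} : Set K)) (hY : (Y : K) = μ - algebraMap S K h) (t : Algebra.adjoin S ({μ} : Set K)) :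
    ∃ (c : S) (t' : Algebra.adjoin S ({μ} : Set K)), t = algebraMap S _ c + Y * t' := by
  obtain ⟨t, ht⟩ := t
  induction ht using Algebra.adjoin_induction with
  | mem x hx =>
    rw [Set.mem_singleton_iff] at hx
    subst hx
    refine ⟨h, 1, Subtype.ext ?_⟩
    push_cast
    rw [hY]; simp
  | algebraMap c => exact ⟨c, 0, by rw [mul_zero, add_zero]; rfl⟩
  | add x y hx hy ihx ihy =>
    obtain ⟨c, t, e⟩ := ihx
    obtain ⟨c', t', e'⟩ := ihy
    refine ⟨c + c', t + t', ?_⟩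
    have : (⟨x + y, add_mem hx hy⟩ : Algebra.adjoin S ({μ} : Set K)) = ⟨x, hx⟩ + ⟨y, hy⟩ := rfl
    rw [this, e, e', map_add]; ring
  | mul x y hx hy ihx ihy =>
    obtain ⟨c, t, e⟩ := ihx
    obtain ⟨c', t', e'⟩ := ihy
    refine ⟨c * c', algebraMap S _ c * t' + t * algebraMap S _ c' + Y * t * t', ?_⟩
    have : (⟨x * y, mul_mem hx hy⟩ : Algebra.adjoin S ({μ} : Set K)) = ⟨x, hx⟩ * ⟨y, hy⟩ := rfl
    rw [this, e, e', map_mul]; ring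

theorem indepT {S L K : Type*} [CommRing S] [IsDomain S] [Field L] [Algebra S L] [IsFractionRing S L]
    [Field K] [Algebra L K] [Algebra S K] [IsScalarTower S L K] {p : ℕ} (hp : 0 < p)
    {f g h₁ h₂ : S} {ω μ : K} (hω : ω ^ p = algebraMap S K f) (hμ : μ ^ p = algebraMap S K g)
    (hKgen : Algebra.adjoin L ({ω, μ} : Set K) = ⊤)
    (hdeg : Module.finrank L K = p ^ 2) (t : ℕ → K) (ht : ∀ j < p, t j ∈ Algebra.adjoin S ({μ} : Set K))
    (h0 : ∑ j ∈ Finset.range p, t j * (ω - algebraMap S K h₁) ^ j = 0) : ∀ j < p, t j = 0 := by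
  obtain ⟨⟨bas, hbas⟩, -⟩ := exists_basis (h₁ := h₁) (h₂ := h₂) hp hω hμ hKgen hdeg
  have hc : ∀ j : Fin p, ∃ c : Fin p → S, t j = ∑ k, c k • (μ - algebraMap S K h₂) ^ (k : ℕ) :=
    fun j => T_span hp hμ (ht j j.2)
  choose c hc using hc
  have h1 : ∑ jk : Fin p × Fin p, c jk.1 jk.2 • bas jk = 0 := by
    apply Subtype.ext
    rw [AddSubmonoidClass.coe_finset_sum]
    rw [← Fin.sum_univ_eq_sum_range (fun j => t j * (ω - algebraMap S K h₁) ^ j)] at h0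
    rw [Fintype.sum_prod_type]
    refine Eq.trans ?_ h0
    refine Finset.sum_congr rfl fun j _ => ?_
    rw [hc, Finset.sum_mul]
    refine Finset.sum_congr rfl fun k _ => ?_
    rw [Subalgebra.coe_smul, hbas, Algebra.smul_def, Algebra.smul_def]; ring
  have h2 := Fintype.linearIndependent_iff.1 bas.linearIndependent (fun jk => c jk.1 jk.2) h1
  intro j hj
  rw [hc ⟨j, hj⟩]
  refine Finset.sum_eq_zero fun k _ => ?_
  rw [h2 (⟨j, hj⟩, k), zero_smul]

theorem glue {S K : Type*} [CommRing S] [Field K] [Algebra S K] {p : ℕ} (hp3 : 3 ≤ p) {A B AB : Subalgebra S K}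
    (hB : B ≤ AB) (hA : A ≤ AB) {C : Subalgebra B K} (hAC : ∀ x ∈ A, x ∈ C) {X Y v u c1 c2 : A} 
    (hv : v = c1 * X + c2 * Y) (hYp : Y ^ p = p * u) {s X' η r : K} (hs : s ∈ C) (hX' : X' ∈ C) (hη : η ∈ B)
    (hYs : (Y : K) * s = v) (hYX : (Y : K) * X' = X) (hpη : (p : K) = (Y : K) ^ p * η)
    (hF1 : ∀ x ∈ C, ∃ c : ℕ → B, x = ∑ j ∈ Finset.range p, c j • s ^ j)
    (hrJ : ∀ x ∈ Nid C (Y : K) s, r * x ∈ Nid C (Y : K) s) (hpr : (p : K) * r ∈ A)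
    (hdes : ∀ w ∈ AB, (p : K) * w ∈ A → w ∈ A) (m : K) 
    (hm : m ∈ colonSubmodule S K A (Subtype.val '' (((Ideal.span {(p : A)} + Ideal.span {v} * Ideal.span {(p : A), X, Y} ^ (p - 2)) *
      Ideal.span {(p : A), X, Y} : Ideal A) : Set A))) : 
    r * m ∈ colonSubmodule S K A (Subtype.val '' (((Ideal.span {(p : A)} + Ideal.span {v} * Ideal.span {(p : A), X, Y} ^ (p - 2)) *
      Ideal.span {(p : A), X, Y} : Ideal A) : Set A)) := by
  set P : Ideal A := Ideal.span {(p : A), X, Y} with hP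
  have hpP : (p : A) ∈ P := Ideal.subset_span (by simp)
  have hXP : X ∈ P := Ideal.subset_span (by simp)
  have hYP : Y ∈ P := Ideal.subset_span (by simp)
  have hvP : v ∈ P := by rw [hv]; exact add_mem (P.mul_mem_left _ hXP) (P.mul_mem_left _ hYP)
  have hIP : (Ideal.span {(p : A)} + Ideal.span {v} * P ^ (p - 2)) * P = Ideal.span {(p : A)} * P + Ideal.span {v} * P ^ (p-1) := by
    rw [add_mul, mul_assoc, ← pow_succ]; congr 3; omega
  rw [hIP] at hm ⊢
  set IP : Ideal A := Ideal.span {(p : A)} * P + Ideal.span {v} * P ^ (p-1) with hIPdef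
  have hmz : ∀ z ∈ IP, m * (z : K) ∈ A := fun z hz => hm _ ⟨z, hz, rfl⟩
  have hηC : η ∈ C := C.algebraMap_mem ⟨η, hη⟩
  have hYC : (Y : K) ∈ C := hAC _ Y.2
  have hYJ : ∀ c ∈ C, (Y : K) * c ∈ Nid C (Y : K) s := fun c hc => ⟨c, hc, 0, zero_mem _, by ring⟩
  have hsJ : ∀ c ∈ C, s * c ∈ Nid C (Y : K) s := fun c hc => ⟨0, zero_mem _, c, hc, by ring⟩
  -- the ideal of elements in Y^p J
  let Q : Ideal A :=
    { carrier := {z | ∃ j ∈ Nid C (Y : K) s, (z : K) = (Y : K) ^ p * j}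
      add_mem' := by
        rintro a b ⟨j, hj, e⟩ ⟨j', hj', e'⟩
        exact ⟨j + j', add_mem hj hj', by rw [Subalgebra.coe_add, e, e']; ring⟩
      zero_mem' := ⟨0, zero_mem _, by simp⟩
      smul_mem' := by
        rintro c a ⟨j, hj, e⟩
        exact ⟨c * j, Nid_mul (hAC _ c.2) hj, by rw [smul_eq_mul, Subalgebra.coe_mul, e]; ring⟩ }
  have hQ : ∀ z, z ∈ Q ↔ ∃ j ∈ Nid C (Y : K) s, (z : K) = (Y : K) ^ p * j := fun z => Iff.rfl
  have hIPQ : IP ≤ Q := by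
    have hpcast : ((p : A) : K) = p := by push_cast; rfl
    apply sup_le
    · rw [Ideal.span_singleton_mul_le_iff]
      have : P ≤ Submodule.comap (LinearMap.mulLeft A (p : A)) Q := by
        rw [hP, Ideal.span_le]
        have key : ∀ (w : A) (c : K), c ∈ C → (w : K) = Y * c → w ∈ Submodule.comap (LinearMap.mulLeft A (p : A)) Q := by
          intro w c hc hw
          change (p : A) * w ∈ Q
          rw [hQ]
          refine ⟨Y * (η * c), hYJ _ (mul_mem hηC hc), ?_⟩
          rw [Subalgebra.coe_mul, hpcast, hw]; nth_rewrite 1 [hpη]; ring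
        rintro w (rfl | rfl | rfl)
        · refine key _ ((Y : K) ^ (p-1) * η) (mul_mem (pow_mem hYC _) hηC) ?_
          rw [hpcast]; nth_rewrite 1 [hpη]
          rw [← mul_assoc, ← pow_succ']; congr 2; omega
        · exact key _ X' hX' hYX.symm
        · exact key _ 1 (one_mem _) (by ring)
      exact fun z hz => this hz
    · rw [Ideal.span_singleton_mul_le_iff]
      have : P ^ (p-1) ≤ Submodule.comap (LinearMap.mulLeft A v) Q := by
        apply span3_pow_le
        · change v * (p : A) ∈ Q
          rw [hQ]
          refine ⟨s * (Y * η), hsJ _ (mul_mem hYC hηC), ?_⟩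
          rw [Subalgebra.coe_mul, hpcast, ← hYs]; nth_rewrite 1 [hpη]; ring
        · intro a b hab
          change v * (X ^ a * Y ^ b) ∈ Q
          rw [hQ]
          refine ⟨s * X' ^ a, hsJ _ (pow_mem hX' _), ?_⟩
          push_cast
          rw [← hYs, ← hYX, show p = 1 + a + b by omega]; ring
      exact fun z hz => this hz
  have h1 : ∀ j, (Y : K) ^ p * s ^ (j+1) * m ∈ A ∨ p ≤ j := by
    intro j
    by_cases hj : p ≤ j
    · exact Or.inr hj
    · left
      have : v * (v ^ j * Y ^ (p - 1 - j)) ∈ IP := by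
        apply Ideal.mem_sup_right
        apply Ideal.mul_mem_mul (Ideal.mem_span_singleton_self v)
        have := Ideal.mul_mem_mul (Ideal.pow_mem_pow hvP j) (Ideal.pow_mem_pow hYP (p-1-j))
        rwa [← pow_add, show j + (p-1-j) = p - 1 by omega] at this
      have := hmz _ this
      convert this using 1
      push_cast
      rw [← hYs]
      nth_rewrite 1 [show p = 1 + j + (p-1-j) by omega]
      ring
  have h1' : ∀ j < p, (Y : K) ^ p * s ^ (j+1) * m ∈ A := fun j hj => (h1 j).resolve_right (by omega)
  have h2 : ∀ j < p, (Y : K) ^ p * (Y * s ^ j) * m ∈ A := by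
    rintro (_ | j) hj
    · have : (p : A) * Y ∈ IP := by
        apply Ideal.mem_sup_left
        exact Ideal.mul_mem_mul (Ideal.mem_span_singleton_self _) hYP
      have := mul_mem u.2 (hmz _ this)
      convert this using 1
      have e := congrArg Subtype.val hYp
      push_cast at e ⊢
      rw [e]; ring
    · have := mul_mem Y.2 (h1' j (by omega))
      convert this using 1
      ring
  have h3 : ∀ j ∈ Nid C (Y : K) s, m * ((Y : K) ^ p * j) ∈ AB := by
    rintro _ ⟨a, ha, b, hb, rfl⟩
    obtain ⟨c, rfl⟩ := hF1 a ha
    obtain ⟨d, rfl⟩ := hF1 b hb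
    have : m * ((Y : K) ^ p * ((Y : K) * ∑ j ∈ Finset.range p, c j • s ^ j + s * ∑ j ∈ Finset.range p, d j • s ^ j))
      = ∑ j ∈ Finset.range p, ((c j : K) * ((Y : K) ^ p * (Y * s ^ j) * m) + (d j : K) * ((Y : K) ^ p * s ^ (j+1) * m)) := by
      rw [Finset.mul_sum, Finset.mul_sum, ← Finset.sum_add_distrib, Finset.mul_sum, Finset.mul_sum]
      refine Finset.sum_congr rfl fun j _ => ?_
      have e : ∀ (c : B) (x : K), c • x = (c : K) * x := fun c x => rfl
      rw [e, e]; ring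
    rw [this]
    refine sum_mem fun j hj => ?_
    have hj := Finset.mem_range.1 hj
    exact add_mem (mul_mem (hB (c j).2) (hA (h2 j hj))) (mul_mem (hB (d j).2) (hA (h1' j hj)))
  rintro _ ⟨z, hz, rfl⟩
  apply hdes
  · obtain ⟨j, hj, e⟩ := hIPQ hz
    have := h3 _ (hrJ j hj)
    convert this using 1
    rw [e]; ring
  · have := mul_mem hpr (hmz z hz)
    convert this using 1
    ring

theorem iterL1 {B K : Type*} [CommRing B] [Field K] [Algebra B K] {p : ℕ} (hp3 : 3 ≤ p) {π τ : B} 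
    (hπ : Prime π) (hτ : ¬ π ∣ τ) {C : Subalgebra B K} {s w w' : K} (hs : s ∈ C) (hw : w ∈ C) (hw' : w' ∈ C)
    (hF1 : ∀ x ∈ C, ∃ c : ℕ → B, x = ∑ j ∈ Finset.range p, c j • s ^ j)
    (hF2 : ∀ c : ℕ → B, ∑ j ∈ Finset.range p, c j • s ^ j = 0 → ∀ j < p, c j = 0)
    (hR : s ^ p = algebraMap B K π * (algebraMap B K τ * s + algebraMap B K π * (s * w) + algebraMap B K π ^ 2 * w'))
    {r : K} (hr : IsIntegral B r) (n : ℕ) (hn : algebraMap B K π ^ n * r ∈ C) :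
    ∀ x ∈ Nid C (algebraMap B K π) s, r * x ∈ Nid C (algebraMap B K π) s := by
  have h : ∀ k ≤ n, ∀ x ∈ Nid C (algebraMap B K π) s, algebraMap B K π ^ (n - k) * r * x ∈ Nid C (algebraMap B K π) s := by
    intro k
    induction k with
    | zero => intro _ x hx; exact Nid_mul hn hx
    | succ k ih =>
      intro hk
      refine L1 hp3 hπ hτ hs hw hw' hF1 hF2 hR (IsIntegral.mul (IsIntegral.pow isIntegral_algebraMap _) hr) ?_
      intro x hx
      have := ih (by omega) x hx
      rw [show n - k = (n - (k+1)) + 1 by omega, pow_succ'] at this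
      rw [← mul_assoc]; exact this
  intro x hx
  have := h n le_rfl x hx
  simpa using this

theorem part1
    {S : Type*} [CommRing S] [IsDomain S]
    {L : Type*} [Field L] [CharZero L] [Algebra S L] [IsFractionRing S L]
    {K : Type*} [Field K] [Algebra L K] [Algebra S K] [IsScalarTower S L K]
    {p : ℕ} (hp : p.Prime) (hp3 : 3 ≤ p) (hpS : Prime ((p : ℕ) : S))
    {f g h₁ h₂ b : S} (hg : g = h₂ ^ p + b * (p : S))
    {ω μ : K} (hω : ω ^ p = algebraMap S K f) (hμ : μ ^ p = algebraMap S K g)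
    (hKgen : Algebra.adjoin L ({ω, μ} : Set K) = ⊤)
    (hdeg : Module.finrank L K = p ^ 2)
    (hicω : IsIntegrallyClosed (Algebra.adjoin S ({ω} : Set K)))
    (hicμ : IsIntegrallyClosed (Algebra.adjoin S ({μ} : Set K)))
    (i : ℕ) (hh1 : ¬ (p : S) ∣ h₁) (hh2 : ¬ (p : S) ∣ h₂)
    (hy : ∃ y, f * g ^ i = (h₁ * h₂ ^ i) ^ p + (p : S) ^ 2 * y)
    (hcop : ∀ s, g ∣ f * s → g ∣ s) :
    (∀ r ∈ integralClosure S K,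
      ∀ m ∈ colonSubmodule S K (Algebra.adjoin S ({ω, μ} : Set K))
        (Subtype.val '' (((Ideal.span {(p : Algebra.adjoin S ({ω, μ} : Set K))} + Ideal.span {omegaA ω μ * muA ω μ ^ i - algebraMap S _ (h₁ * h₂ ^ i)} * Pid p ω μ h₁ h₂ ^ (p - 2)) * Pid p ω μ h₁ h₂ : Ideal (Algebra.adjoin S ({ω, μ} : Set K))) : Set (Algebra.adjoin S ({ω, μ} : Set K)))),
        r * m ∈ colonSubmodule S K (Algebra.adjoin S ({ω, μ} : Set K))
          (Subtype.val '' (((Ideal.span {(p : Algebra.adjoin S ({ω, μ} : Set K))} + Ideal.span {omegaA ω μ * muA ω μ ^ i - algebraMap S _ (h₁ * h₂ ^ i)} * Pid p ω μ h₁ h₂ ^ (p - 2)) * Pid p ω μ h₁ h₂ : Ideal (Algebra.adjoin S ({ω, μ} : Set K))) : Set (Algebra.adjoin S ({ω, μ} : Set K))))) := by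
  intro r hr m hm
  have hr : IsIntegral S r := hr
  have hinj : Function.Injective (algebraMap S K) := by
    rw [IsScalarTower.algebraMap_eq S L K]
    exact (algebraMap L K).injective.comp (IsFractionRing.injective S L)
  have hpK : (p : K) ≠ 0 := by
    rw [← map_natCast (algebraMap L K)]
    exact (map_ne_zero _).2 (Nat.cast_ne_zero.2 hp.ne_zero)
  have hg0 : g ≠ 0 := by
    rintro rfl
    apply hh2
    apply hpS.dvd_of_dvd_pow (n := p)
    exact ⟨-b, by linear_combination -hg⟩
  have hgK : algebraMap S K g ≠ 0 := (map_ne_zero_iff _ hinj).2 hg0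
  have hμ0 : μ ≠ 0 := by
    rintro rfl
    apply hgK; rw [← hμ, zero_pow hp.ne_zero]
  have hb : ¬ (p : S) ∣ b := b_not_dvd hp hpS hω hμ hg hKgen hdeg hicμ
  have hpr := pr_mem hp.pos hω hμ hKgen hdeg hicω hicμ hg0 hcop hr
  obtain ⟨⟨bas, hbas⟩, -⟩ := exists_basis (h₁ := h₁) (h₂ := h₂) hp.pos hω hμ hKgen hdeg
  obtain ⟨y, hy⟩ := hy
  -- T and its elements
  obtain ⟨T, hT⟩ : ∃ T, T = Algebra.adjoin S ({μ} : Set K) := ⟨_, rfl⟩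
  have hTA : T ≤ Algebra.adjoin S ({ω, μ} : Set K) := by rw [hT]; exact Algebra.adjoin_mono (by simp)
  have hμT : μ ∈ T := by rw [hT]; exact Algebra.subset_adjoin (by simp)
  let mT : T := ⟨μ, hμT⟩
  obtain ⟨β, hβ⟩ := exists_Xp (A := T) hp (w := mT) (h := algebraMap S T h₂) (a := algebraMap S T b) (by
    apply Subtype.ext
    push_cast
    rw [show (mT : K) = μ from rfl, hμ, hg]; simp)
  obtain ⟨YT, hYT⟩ : ∃ YT, YT = mT - algebraMap S T h₂ := ⟨_, rfl⟩
  rw [← hYT] at hβ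
  have hYK : (YT : K) = μ - algebraMap S K h₂ := by rw [hYT]; rfl
  have hμY : mT = algebraMap S T h₂ + YT := by rw [hYT]; ring
  obtain ⟨uT, huT⟩ : ∃ uT, uT = algebraMap S T b + YT * β := ⟨_, rfl⟩
  rw [← huT] at hβ
  obtain ⟨t0, σ, hσ, hσ'⟩ : ∃ t0 σ : T, σ = algebraMap S T (b * h₂) + YT * t0 ∧ σ = uT * mT :=
    ⟨algebraMap S T b + β * mT, uT * mT, by rw [huT, hμY, map_mul]; ring, rfl⟩
  have hσ0 : ¬ (p : S) ∣ b * h₂ := fun h => (hpS.dvd_or_dvd h).elim hb hh2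
  -- basis facts
  obtain ⟨ι, hι⟩ : ∃ ι : T →ₐ[S] Algebra.adjoin S ({ω, μ} : Set K), ∀ x, (ι x : K) = x :=
    ⟨Subalgebra.inclusion hTA, fun x => rfl⟩
  have hbas' : ∀ jk, bas jk = (omegaA ω μ - algebraMap S _ h₁) ^ (jk.1 : ℕ) * (ι YT) ^ (jk.2 : ℕ) := by
    intro jk
    apply Subtype.ext
    rw [hbas]
    push_cast
    rw [hι, hYK]; rfl
  have hYpA : ι YT ^ p = p * ι uT := by
    rw [← map_pow, hβ, map_mul, map_natCast]
  have hcq : ∀ c : S, YT ∣ algebraMap S T c → (p : S) ∣ c := by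
    rintro c ⟨t, ht⟩
    have h1 := shiftY0 hbas' ⟨_, hYpA⟩ 0 (ι t)
    have h2 : ι t * ι YT = c • (((omegaA ω μ - algebraMap S _ h₁) ^ 0 * (ι YT) ^ 0)) := by
      rw [← map_mul, mul_comm, ← ht, AlgHom.commutes, Algebra.algebraMap_eq_smul_one]; simp
    rw [h2, map_smul, cc_mon hbas' hp.pos hp.pos] at h1
    simpa using h1
  have hu0 : (uT : K) ≠ 0 := by
    intro h
    apply hb
    apply hcq
    refine ⟨-β, ?_⟩
    have : uT = 0 := Subtype.ext h
    linear_combination this - huT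
  have hY0 : (YT : K) ≠ 0 := by
    intro h
    have e := congrArg Subtype.val hβ
    push_cast at e
    rw [h, zero_pow hp.ne_zero] at e
    exact mul_ne_zero hpK hu0 e.symm
  have hσne : (σ : K) ≠ 0 := by
    rw [hσ']; exact mul_ne_zero hu0 hμ0
  obtain ⟨B, hBdef⟩ : ∃ B, B = locSub T σ := ⟨_, rfl⟩
  have hTB : T ≤ B := by rw [hBdef]; exact le_locSub
  have hσinv : (σ : K)⁻¹ ∈ B := by rw [hBdef]; exact inv_mem_locSub hσne
  have hμinv : μ⁻¹ ∈ B := by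
    have : μ⁻¹ = uT * (σ : K)⁻¹ := by
      rw [hσ']; push_cast; change μ⁻¹ = uT * (uT * μ : K)⁻¹; field_simp
    rw [this]; exact mul_mem (hTB uT.2) hσinv
  obtain ⟨η, hηB, hηu⟩ : ∃ η ∈ B, (uT : K) * η = 1 := by
    refine ⟨μ * (σ : K)⁻¹, mul_mem (hTB hμT) hσinv, ?_⟩
    rw [hσ']; push_cast; change (uT : K) * (μ * (uT * μ : K)⁻¹) = 1; field_simp
  have hYpK : (YT : K) ^ p = p * uT := by
    have e := congrArg Subtype.val hβ
    push_cast at e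
    exact e
  have hpη : (p : K) = (YT : K) ^ p * η := by rw [hYpK, mul_assoc, hηu, mul_one]
  have hYB : (YT : K) ∈ B := hTB YT.2
  have hπ : Prime (⟨YT, hYB⟩ : B) := by
    subst hBdef
    refine prime_loc hpS (fun t => ?_) hcq hσ0 hσ ⟨(YT : K) ^ (p-1) * η, mul_mem (pow_mem hYB _) hηB, ?_⟩ hY0 hσne
    · subst hT; exact T_dec YT hYK t
    · rw [map_natCast, hpη, ← mul_assoc, ← pow_succ']; congr 2; have := hp.pos; omega
  -- θ
  obtain ⟨θ, hθdef⟩ : ∃ θ, θ = ω * μ ^ i := ⟨_, rfl⟩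
  obtain ⟨h, hhdef⟩ : ∃ h, h = h₁ * h₂ ^ i := ⟨_, rfl⟩
  rw [← hhdef] at hy
  have hh : ¬ (p : S) ∣ h := by
    rw [hhdef]; intro h'
    exact (hpS.dvd_or_dvd h').elim hh1 (fun h'' => hh2 (hpS.dvd_of_dvd_pow h''))
  have hθ : θ ^ p = algebraMap S K (f * g ^ i) := by
    rw [hθdef, mul_pow, hω, ← pow_mul, mul_comm i p, pow_mul, hμ, map_mul, map_pow]
  have hKgen' : Algebra.adjoin L ({θ, μ} : Set K) = ⊤ := by
    rw [eq_top_iff, ← hKgen, Algebra.adjoin_le_iff]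
    have hμm : μ ∈ Algebra.adjoin L ({θ, μ} : Set K) := Algebra.subset_adjoin (by simp)
    have hθm : θ ∈ Algebra.adjoin L ({θ, μ} : Set K) := Algebra.subset_adjoin (by simp)
    have hμi : μ⁻¹ ∈ Algebra.adjoin L ({θ, μ} : Set K) := by
      have : μ⁻¹ = algebraMap L K (algebraMap S L g)⁻¹ * μ ^ (p-1) := by
        rw [map_inv₀, ← IsScalarTower.algebraMap_apply S L K, ← hμ]
        have e : μ ^ p = μ ^ (p-1) * μ := by rw [← pow_succ]; congr 1; have := hp.pos; omega
        rw [e]; field_simp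
      rw [this]; exact mul_mem (Subalgebra.algebraMap_mem _ _) (pow_mem hμm _)
    rintro z (rfl | rfl)
    · have : z = θ * μ⁻¹ ^ i := by rw [hθdef, inv_pow]; field_simp
      rw [this]; exact mul_mem hθm (pow_mem hμi _)
    · exact hμm
  obtain ⟨d, hd0, hd1, hd⟩ := vp_expand hp hθ hy
  obtain ⟨v, hvdef⟩ : ∃ v, v = θ - algebraMap S K h := ⟨_, rfl⟩
  rw [← hvdef] at hd
  obtain ⟨s, hYs⟩ : ∃ s, (YT : K) * s = v := ⟨v / YT, by field_simp⟩
  have hsmulB : ∀ (c : B) (x : K), c • x = (c : K) * x := fun c x => rfl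
  have hcB : ∀ j, η * (YT : K) ^ j * algebraMap S K (d j) ∈ B := fun j =>
    mul_mem (mul_mem hηB (pow_mem hYB _)) (Subalgebra.algebraMap_mem _ _)
  have hsp : s ^ p = ∑ j ∈ Finset.range p, (⟨_, hcB j⟩ : B) • s ^ j := by
    apply mul_left_cancel₀ (pow_ne_zero p hY0)
    rw [← mul_pow, hYs, hd, Finset.mul_sum]
    refine Finset.sum_congr rfl fun j _ => ?_
    rw [hsmulB, map_mul, map_natCast, ← hYs]
    nth_rewrite 1 [hpη]
    ring
  obtain ⟨C, hC⟩ : ∃ C, C = Algebra.adjoin B ({s, 1} : Set K) := ⟨_, rfl⟩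
  have hsC : s ∈ C := by rw [hC]; exact Algebra.subset_adjoin (by simp)
  have hBC : ∀ x ∈ B, x ∈ C := fun x hx => C.algebraMap_mem ⟨x, hx⟩
  have hF1 : ∀ x ∈ C, ∃ c : ℕ → B, x = ∑ j ∈ Finset.range p, c j • s ^ j := by
    intro x hx
    rw [hC] at hx
    have h3 := adjoin_le_span hp.pos ⟨_, hsp⟩ ⟨fun j => if j = 0 then 1 else 0, by
      simp only [one_pow, ite_smul, zero_smul, one_smul]
      rw [Finset.sum_ite_eq' (Finset.range p) 0, if_pos (Finset.mem_range.2 hp.pos)]⟩ x hx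
    obtain ⟨c, hc⟩ := (Submodule.mem_span_range_iff_exists_fun B).1 h3
    refine ⟨fun j => if hj : j < p then ∑ k', c (⟨j, hj⟩, k') else 0, ?_⟩
    rw [← hc, Fintype.sum_prod_type, ← Fin.sum_univ_eq_sum_range (fun j => (if hj : j < p then ∑ k', c (⟨j, hj⟩, k') else 0) • s ^ j)]
    refine Finset.sum_congr rfl fun k _ => ?_
    rw [dif_pos k.2, Finset.sum_smul]
    refine Finset.sum_congr rfl fun k' _ => ?_
    simp
  have hF2 : ∀ c : ℕ → B, ∑ j ∈ Finset.range p, c j • s ^ j = 0 → ∀ j < p, c j = 0 := by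
    intro c hc
    have hn : ∀ j, ∃ n : ℕ, (σ : K) ^ n * c j ∈ T := by
      intro j
      have h1 : ∀ x ∈ B, x ∈ locSub T σ := by rw [hBdef]; exact fun x hx => hx
      exact h1 _ (c j).2
    choose n hn using hn
    obtain ⟨N, hN⟩ : ∃ N, ∀ j < p, n j ≤ N := 
      ⟨∑ j ∈ Finset.range p, n j, fun j hj => Finset.single_le_sum (f := n) (fun _ _ => Nat.zero_le _) (Finset.mem_range.2 hj)⟩
    have := indepT (h₁ := h) (h₂ := h₂) hp.pos hθ hμ hKgen' hdeg (fun j => (σ : K) ^ N * c j * (YT : K) ^ (p - 1 - j)) (by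
      intro j hj
      rw [← hT]
      refine mul_mem ?_ (pow_mem YT.2 _)
      have e : (σ : K) ^ N = (σ : K) ^ (N - n j) * (σ : K) ^ (n j) := by
        rw [← pow_add]; congr 1; have := hN j hj; omega
      rw [e, mul_assoc]
      exact mul_mem (pow_mem σ.2 _) (hn j)) (by
      rw [← hvdef]
      have e : ∀ j ∈ Finset.range p, (σ : K) ^ N * c j * (YT : K) ^ (p - 1 - j) * v ^ j = (σ : K) ^ N * (YT : K) ^ (p-1) * (c j • s ^ j) := by
        intro j hj
        have hj := Finset.mem_range.1 hj
        rw [← hYs, hsmulB]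
        nth_rewrite 2 [show p - 1 = (p - 1 - j) + j by omega]
        ring
      rw [Finset.sum_congr rfl e, ← Finset.mul_sum, hc, mul_zero])
    intro j hj
    have := this j hj
    apply Subtype.ext
    have h1 : (σ : K) ^ N ≠ 0 := pow_ne_zero _ hσne
    have h2 : (YT : K) ^ (p - 1 - j) ≠ 0 := pow_ne_zero _ hY0
    simpa [h1, h2] using this
  -- τ
  have hτB : -η * algebraMap S K (h ^ (p-1)) ∈ B := mul_mem (neg_mem hηB) (Subalgebra.algebraMap_mem _ _)
  have hτ : ¬ (⟨YT, hYB⟩ : B) ∣ ⟨_, hτB⟩ := by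
    rintro ⟨z, hz⟩
    have hz' : -η * algebraMap S K (h ^ (p-1)) = YT * z := congrArg Subtype.val hz
    apply hh
    apply hpS.dvd_of_dvd_pow (n := p - 1)
    have hzB := z.2
    refine ndvd_loc (t := 0) (z := - (uT : K) * z) hpS hcq hσ0 hσ ?_ ?_
    · rw [← hBdef]; exact mul_mem (neg_mem (hTB uT.2)) hzB
    · rw [mul_zero, add_zero]
      change algebraMap S K (h ^ (p-1)) = _
      linear_combination (-(uT : K)) * hz' - algebraMap S K (h ^ (p-1)) * hηu
  -- A ⊆ C
  have hvd : ∃ e ∈ T, μ ^ i - algebraMap S K h₂ ^ i = YT * e := by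
    obtain ⟨e, he⟩ := sub_dvd_pow_sub_pow mT (algebraMap S T h₂) i
    rw [← hYT] at he
    exact ⟨e, e.2, congrArg Subtype.val he⟩
  obtain ⟨e, heT, he⟩ := hvd
  have hvX : v = (ω - algebraMap S K h₁) * μ ^ i + algebraMap S K h₁ * (YT * e) := by
    rw [← he, hvdef, hθdef, hhdef, map_mul, map_pow]; ring
  obtain ⟨X', hX'C, hYX⟩ : ∃ X' ∈ C, (YT : K) * X' = ω - algebraMap S K h₁ := by
    refine ⟨μ⁻¹ ^ i * (s - algebraMap S K h₁ * e), ?_, ?_⟩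
    · exact mul_mem (pow_mem (hBC _ hμinv) _) (sub_mem hsC (hBC _ (mul_mem (Subalgebra.algebraMap_mem _ _) (hTB heT))))
    · have : (YT : K) * (s - algebraMap S K h₁ * e) = (ω - algebraMap S K h₁) * μ ^ i := by
        rw [mul_sub, hYs, hvX]; ring
      rw [mul_left_comm, this, inv_pow]
      field_simp
  have hAC : ∀ x ∈ Algebra.adjoin S ({ω, μ} : Set K), x ∈ C := by
    intro x hx
    induction hx using Algebra.adjoin_induction with
    | mem x hx =>
      rcases hx with rfl | rfl
      · have : x = YT * X' + algebraMap S K h₁ := by rw [hYX]; ring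
        rw [this]
        exact add_mem (mul_mem (hBC _ hYB) hX'C) (hBC _ (Subalgebra.algebraMap_mem _ _))
      · exact hBC _ (hTB hμT)
    | algebraMap c => exact hBC _ (Subalgebra.algebraMap_mem _ _)
    | add x y hx hy ihx ihy => exact add_mem ihx ihy
    | mul x y hx hy ihx ihy => exact mul_mem ihx ihy
  have hrB : IsIntegral B r := IsIntegral.tower_top hr
  have hR : s ^ p = algebraMap B K ⟨YT, hYB⟩ * (algebraMap B K ⟨_, hτB⟩ * s + algebraMap B K ⟨YT, hYB⟩ * (s * 
      (∑ j ∈ Finset.range (p-2), η * (YT : K) ^ j * algebraMap S K (d (j+2)) * s ^ (j+1))) + 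
      algebraMap B K ⟨YT, hYB⟩ ^ 2 * (η * η * (YT : K) ^ (p-3) * algebraMap S K y)) := by
    rw [hsp]
    have e0 : ∀ (x : K) (hx : x ∈ B), algebraMap B K ⟨x, hx⟩ = x := fun x hx => rfl
    rw [e0, e0]
    obtain ⟨q, hq⟩ : ∃ q, p = q + 1 + 1 := ⟨p - 2, by omega⟩
    have e1 : p - 2 = q := by omega
    rw [e1]
    have e2 : Finset.range p = Finset.range (q + 1 + 1) := by rw [hq]
    rw [e2, Finset.sum_range_succ', Finset.sum_range_succ']
    simp only [hsmulB, hd0, hd1, zero_add]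
    have e3 : ∑ k ∈ Finset.range q, η * (YT : K) ^ (k + 1 + 1) * algebraMap S K (d (k + 1 + 1)) * s ^ (k + 1 + 1) = 
       YT * (YT * (s * ∑ j ∈ Finset.range q, η * (YT : K) ^ j * algebraMap S K (d (j+2)) * s ^ (j+1))) := by
      rw [Finset.mul_sum, Finset.mul_sum, Finset.mul_sum]
      refine Finset.sum_congr rfl fun j _ => ?_
      ring
    rw [e3]
    have e4 : (p : K) = YT * (YT ^ 2 * (YT ^ (p-3))) * η := by
      rw [← pow_add, ← pow_succ', show 2 + (p - 3) + 1 = p by omega]; exact hpη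
    simp only [map_mul, map_neg, map_natCast]
    linear_combination η * algebraMap S K y * e4
  have hrJ := iterL1 hp3 hπ hτ (C := C) hsC (sum_mem fun j _ => mul_mem (mul_mem (mul_mem (hBC _ hηB) (pow_mem (hBC _ hYB) _)) (hBC _ (Subalgebra.algebraMap_mem _ _))) (pow_mem hsC _))
    (mul_mem (mul_mem (mul_mem (hBC _ hηB) (hBC _ hηB)) (pow_mem (hBC _ hYB) _)) (hBC _ (Subalgebra.algebraMap_mem _ _)))
    hF1 hF2 hR hrB p (by
      change (YT : K) ^ p * r ∈ C
      rw [hYpK, mul_comm (p : K), mul_assoc]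
      exact mul_mem (hBC _ (hTB uT.2)) (hAC _ hpr))
  have hσι : (ι σ : K) = σ := hι σ
  refine glue hp3 (B := B) (AB := locSub _ (ι σ)) ?_ le_locSub (C := C) hAC (X := omegaA ω μ - algebraMap S _ h₁) (Y := muA ω μ - algebraMap S _ h₂) 
    (u := ι uT) (c1 := muA ω μ ^ i) (c2 := algebraMap S _ h₁ * ι ⟨e, heT⟩) ?_ ?_ hsC hX'C hηB ?_ ?_ ?_ hF1 ?_ hpr ?_ m hm
  · rw [hBdef]
    rintro x ⟨n, hn⟩
    exact ⟨n, by rw [hσι]; exact hTA hn⟩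
  · apply Subtype.ext
    have e1 : ((omegaA ω μ * muA ω μ ^ i - algebraMap S _ (h₁ * h₂ ^ i) : Algebra.adjoin S ({ω, μ} : Set K)) : K) = v := by
      rw [hvdef, hθdef, hhdef]; rfl
    rw [e1, hvX, hYK]
    push_cast
    rw [hι]
    change _ = μ ^ i * (ω - algebraMap S K h₁) + algebraMap S K h₁ * e * (μ - algebraMap S K h₂)
    ring
  · rw [← hYpA]; congr 1
    apply Subtype.ext; rw [hι, hYK]; rfl
  · change (μ - algebraMap S K h₂) * s = ω * μ ^ i - algebraMap S K (h₁ * h₂ ^ i)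
    rw [← hYK, hYs, hvdef, hθdef, hhdef]
  · change (μ - algebraMap S K h₂) * X' = ω - algebraMap S K h₁
    rw [← hYK, hYX]
  · change (p : K) = (μ - algebraMap S K h₂) ^ p * η
    rw [← hYK]; exact hpη
  · have : ((muA ω μ - algebraMap S _ h₂ : Algebra.adjoin S ({ω, μ} : Set K)) : K) = algebraMap B K ⟨YT, hYB⟩ := by
      change μ - algebraMap S K h₂ = YT
      rw [hYK]
    rw [this]; exact hrJ
  · intro w hw1 hw2
    refine desat bas hp hpS hpK (σ := ι σ) (Y := ι YT) (t0 := ι t0) hσ0 ?_ ⟨_, hYpA⟩ hw1 hw2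
    rw [hσ, map_add, AlgHom.commutes, map_mul ι]

theorem stmt17
    {S : Type*} [CommRing S] [IsDomain S] [IsNoetherianRing S] [IsLocalRing S]
    [IsIntegrallyClosed S]
    {L : Type*} [Field L] [CharZero L] [Algebra S L] [IsFractionRing S L]
    {K : Type*} [Field K] [Algebra L K] [Algebra S K] [IsScalarTower S L K]
    {p : ℕ} (hp : p.Prime) (hp3 : 3 ≤ p) (hpS : Prime ((p : ℕ) : S))
    (hSmodp : IsIntegrallyClosed (S ⧸ Ideal.span {((p : ℕ) : S)}))
    (hreg : ∃ s : Finset S, Ideal.span (s : Set S) = IsLocalRing.maximalIdeal S ∧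
      (s.card : WithBot ℕ∞) = ringKrullDim S)
    (hmix : ((p : ℕ) : S) ∈ IsLocalRing.maximalIdeal S ∧
      ((p : ℕ) : S) ∉ IsLocalRing.maximalIdeal S ^ 2)
    {f g h₁ h₂ a b : S} (hf : f = h₁ ^ p + a * (p : S)) (hg : g = h₂ ^ p + b * (p : S))
    (hfg : (¬IsUnit f ∧ ¬IsUnit g ∧ PaperSquarefree f ∧ PaperSquarefree g ∧ SatisfiesA1 f g) ∨
      (IsUnit f ∧ IsUnit g ∧ (∀ x : S, x ^ p ≠ f) ∧ (∀ x : S, x ^ p ≠ g)))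
    {ω μ : K} (hω : ω ^ p = algebraMap S K f) (hμ : μ ^ p = algebraMap S K g)
    (hKgen : Algebra.adjoin L ({ω, μ} : Set K) = ⊤)
    (hdeg : Module.finrank L K = p ^ 2)
    (hicω : IsIntegrallyClosed (Algebra.adjoin S ({ω} : Set K)))
    (hicμ : IsIntegrallyClosed (Algebra.adjoin S ({μ} : Set K)))
    (hh₁ : h₁ ≠ 0) (hh₂ : h₂ ≠ 0)
    (i : ℕ) (hi1 : 1 ≤ i) (hi2 : i ≤ p - 1)
    (hfgi : ∃ x y : S, f * g ^ i = x ^ p + y * (p : S) ^ 2)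
    (hgrade : ContainsRegSeq3 S (Ideal.span {((p : ℕ) : S), f, g})) :
    (∀ r ∈ integralClosure S K,
      ∀ m ∈ colonSubmodule S K (Algebra.adjoin S ({ω, μ} : Set K))
        (Subtype.val '' (((Ideal.span {(p : Algebra.adjoin S ({ω, μ} : Set K))} + Ideal.span {omegaA ω μ * muA ω μ ^ i - algebraMap S _ (h₁ * h₂ ^ i)} * Pid p ω μ h₁ h₂ ^ (p - 2)) * Pid p ω μ h₁ h₂ : Ideal (Algebra.adjoin S ({ω, μ} : Set K))) : Set (Algebra.adjoin S ({ω, μ} : Set K)))),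
        r * m ∈ colonSubmodule S K (Algebra.adjoin S ({ω, μ} : Set K))
          (Subtype.val '' (((Ideal.span {(p : Algebra.adjoin S ({ω, μ} : Set K))} + Ideal.span {omegaA ω μ * muA ω μ ^ i - algebraMap S _ (h₁ * h₂ ^ i)} * Pid p ω μ h₁ h₂ ^ (p - 2)) * Pid p ω μ h₁ h₂ : Ideal (Algebra.adjoin S ({ω, μ} : Set K))) : Set (Algebra.adjoin S ({ω, μ} : Set K))))) ∧
    (modDepth S (colonSubmodule S K (Algebra.adjoin S ({ω, μ} : Set K))
        (Subtype.val '' (((Ideal.span {(p : Algebra.adjoin S ({ω, μ} : Set K))} + Ideal.span {omegaA ω μ * muA ω μ ^ i - algebraMap S _ (h₁ * h₂ ^ i)} * Pid p ω μ h₁ h₂ ^ (p - 2)) * Pid p ω μ h₁ h₂ : Ideal (Algebra.adjoin S ({ω, μ} : Set K))) : Set (Algebra.adjoin S ({ω, μ} : Set K))))) :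
      WithBot ℕ∞) = ringKrullDim S := by
  obtain ⟨k1, k2, k3, k4, k5⟩ := arith hp hpS hf hg
    (hfg.imp (fun h => ⟨h.1, h.2.1⟩) (fun h => ⟨h.1, h.2.1⟩)) i hi1 hi2 hfgi hgrade
  exact ⟨part1 hp hp3 hpS hg hω hμ hKgen hdeg hicω hicμ i k1 k2 k3 k5,
    part2 hp hp3 hpS hreg hf hg hω hμ hKgen hdeg i hi1 hi2 k2 k4⟩
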